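/- Let f be a homeomorphism of the open annulus 𝔸 isotopic to the identity and satisfying the intersection property, and let F be a lift of f to ℝ². Suppose that there exist two positively recurrent points z₁ and z₂ of f such that −∞ ≤ ρ^−(F;z₁) < ρ^+(F;z₂) ≤ +∞. Then for any rational number p/q ∈ ]ρ^−(F;z₁), ρ^+(F;z₂)[ written in irreducible form with q ≥ 1, there exists a periodic point z of f of period q whose rotation number is p/q, i.e. a point z with f^q(z) = z and F^q(z̃) = T^p(z̃) for z̃ ∈ π^{−1}(z). -/

import Mathlib

open Filter Topology Set

noncomputable section

/-- The plane ℝ². -/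
abbrev Plane := ℝ × ℝ

/-- The open annulus 𝔸 = ℝ/ℤ × ℝ. -/
abbrev Ann := AddCircle (1 : ℝ) × ℝ

/-- The covering map π : ℝ² → 𝔸, (x,y) ↦ (x + ℤ, y). -/
def prj : Plane → Ann := fun p => ((p.1 : AddCircle (1 : ℝ)), p.2)

/-- The deck transformation T^k : ℝ² → ℝ², (x,y) ↦ (x + k, y). -/
def Tr (k : ℤ) : Plane → Plane := fun p => (p.1 + (k : ℝ), p.2)

/-- `F` is a lift of `f` to the universal cover ℝ² of the annulus. -/
def IsLift (f : Ann ≃ₜ Ann) (F : Plane ≃ₜ Plane) : Prop :=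
  ∀ p : Plane, prj (F p) = f (prj p)

/-- `f` is isotopic to the identity: there is a continuous family of homeomorphisms
joining the identity to `f`. -/
def IsotopicToId (f : Ann ≃ₜ Ann) : Prop :=
  ∃ H : ℝ → Ann → Ann,
    Continuous (fun q : ℝ × Ann => H q.1 q.2) ∧
    (∀ t : ℝ, ∃ h : Ann ≃ₜ Ann, ∀ z, H t z = h z) ∧
    (∀ z, H 0 z = z) ∧ (∀ z, H 1 z = f z)

/-- An essential circle in 𝔸: a simple closed curve which is not null-homotopic. -/
def IsEssentialCircle (c : Set Ann) : Prop :=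
  ∃ φ : C(AddCircle (1 : ℝ), Ann), Function.Injective φ ∧ Set.range φ = c ∧
    ¬ ∃ pt : Ann, φ.Homotopic (ContinuousMap.const _ pt)

/-- `f` has the intersection property: every essential circle meets its image. -/
def IntersectionProperty (f : Ann → Ann) : Prop :=
  ∀ c : Set Ann, IsEssentialCircle c → (c ∩ f '' c).Nonempty

/-- `z` is a positively recurrent point of `g`: some subsequence of the forward orbit
of `z` converges to `z`. -/
def PosRec {X : Type*} [TopologicalSpace X] (g : X → X) (z : X) : Prop :=
  ∃ φ : ℕ → ℕ, StrictMono φ ∧ Tendsto (fun k => g^[φ k] z) atTop (𝓝 z)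

/-- The positively recurrent point `z` has rotation number `ρ` for the lift `F` of `f`. -/
def HasRotNum (f : Ann → Ann) (F : Plane → Plane) (z : Ann) (ρ : ℝ) : Prop :=
  PosRec f z ∧
    ∀ zt : Plane, prj zt = z →
      ∀ φ : ℕ → ℕ, StrictMono φ →
        Tendsto (fun k => f^[φ k] z) atTop (𝓝 z) →
        Tendsto (fun k => ((F^[φ k] zt).1 - zt.1) / (φ k : ℝ)) atTop (𝓝 ρ)

/-- The rotation set Rot(F): the set of rotation numbers of positively recurrent
points of `f`. -/
def Rot (f : Ann → Ann) (F : Plane → Plane) : Set ℝ := {ρ | ∃ z, HasRotNum f F z ρ}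

/-- The region `L(Γ)` of the plane on the left (west) of a line `Γ` (as a subset of ℝ²):
points lying in the connected component of the complement of `Γ` containing all far-west
points of the horizontal axis. -/
def Lset (Γ : Set Plane) : Set Plane :=
  {p | ∃ s : ℝ, ∀ x ≤ s, p ∈ connectedComponentIn Γᶜ ((x, 0) : Plane)}

/-- The region `R(Γ)` of the plane on the right (east) of a line `Γ`. -/
def Rset (Γ : Set Plane) : Set Plane :=
  {p | ∃ s : ℝ, ∀ x ≥ s, p ∈ connectedComponentIn Γᶜ ((x, 0) : Plane)}

/-- The relation `Γ₁ < Γ₂` on (essential, oriented from south to north) lines: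
`Cl(L(Γ₁)) ⊆ L(Γ₂)`. -/
def lineLT (Γ₁ Γ₂ : Set Plane) : Prop := closure (Lset Γ₁) ⊆ Lset Γ₂

/-- An essential line in ℝ², oriented from south to north: a properly embedded copy of ℝ
whose second coordinate tends to ±∞ at ±∞. -/
def IsEssLinePlane (Γ : ℝ → Plane) : Prop :=
  Continuous Γ ∧ Function.Injective Γ ∧ IsProperMap Γ ∧
    Tendsto (fun t => (Γ t).2) atTop atTop ∧ Tendsto (fun t => (Γ t).2) atBot atBot

/-- An essential line in the annulus 𝔸: a properly embedded simple path joining one end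
to the other. -/
def IsEssLineAnn (γ : ℝ → Ann) : Prop :=
  Continuous γ ∧ Function.Injective γ ∧ IsProperMap γ ∧
    ((Tendsto (fun t => (γ t).2) atTop atTop ∧ Tendsto (fun t => (γ t).2) atBot atBot) ∨
     (Tendsto (fun t => (γ t).2) atTop atBot ∧ Tendsto (fun t => (γ t).2) atBot atTop))

/-- An oriented essential line in 𝔸 joining the lower end S to the upper end N. -/
def IsEssLineAnnSN (γ : ℝ → Ann) : Prop :=
  Continuous γ ∧ Function.Injective γ ∧ IsProperMap γ ∧
    Tendsto (fun t => (γ t).2) atTop atTop ∧ Tendsto (fun t => (γ t).2) atBot atBot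

/-- The set ℰ(z) ⊆ [-∞,+∞] of asymptotic rotation speeds along subsequences of positive
integers for which the orbit of `z` returns to `z`. -/
def ESet (f : Ann → Ann) (F : Plane → Plane) (z : Ann) (zt : Plane) : Set EReal :=
  {ρ | ∃ φ : ℕ → ℕ, StrictMono φ ∧ (∀ k, 0 < φ k) ∧
      Tendsto (fun k => f^[φ k] z) atTop (𝓝 z) ∧
      Tendsto (fun k => ((((F^[φ k] zt).1 - zt.1) / (φ k : ℝ) : ℝ) : EReal)) atTop (𝓝 ρ)}

lemma int_valued_const {X : Type*} [TopologicalSpace X] [PreconnectedSpace X] (φ : X → ℝ)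
    (hc : Continuous φ) (hn : ∀ x, ∃ n : ℤ, φ x = n) (x y : X) : φ x = φ y := by
  choose n hn using hn
  have hφ : φ = (fun k : ℤ => (k : ℝ)) ∘ n := by
    funext x; exact hn x
  have hcn : Continuous n := by
    rw [Int.isClosedEmbedding_coe_real.isInducing.continuous_iff]
    rw [← hφ]; exact hc
  have := PreconnectedSpace.constant inferInstance hcn (x := x) (y := y)
  rw [hn, hn, this]

lemma exists_log {E : Type*} [TopologicalSpace E] [SimplyConnectedSpace E]
    [LocallyPathConnectedSpace E] (g : E → ℂ) (hg : Continuous g) (h0 : ∀ x, g x ≠ 0) :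
    ∃ θ : E → ℂ, Continuous θ ∧ ∀ x, Complex.exp (θ x) = g x := by
  obtain ⟨a⟩ : Nonempty E := inferInstance
  rcases Complex.isCoveringMapOn_exp.existsUnique_continuousMap_lifts ⟨g, hg⟩
    (a₀ := a) (e₀ := Complex.log (g a)) (Complex.exp_log (h0 a)) (fun x => h0 x) with ⟨f, ⟨-, hf⟩, -⟩
  exact ⟨f, f.continuous, fun x => congrFun hf x⟩

lemma exp_const {X : Type*} [TopologicalSpace X] [PreconnectedSpace X] (u : X → ℂ)
    (hc : Continuous u) (k : ℂ) (hk : ∀ x, Complex.exp (u x) = k) (x y : X) : u x = u y := by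
  have key : ∀ z, ∃ n : ℤ, u z = u y + n * (2 * Real.pi * Complex.I) := by
    intro z
    exact Complex.exp_eq_exp_iff_exists_int.mp ((hk z).trans (hk y).symm)
  have h1 := int_valued_const (fun z => ((u z - u y) / (2 * Real.pi * Complex.I)).re)
    (by fun_prop) (by
      intro z
      obtain ⟨n, hn⟩ := key z
      refine ⟨n, ?_⟩
      have : (u z - u y) / (2 * Real.pi * Complex.I) = ((n : ℝ) : ℂ) := by
        rw [hn, add_sub_cancel_left, mul_div_assoc, div_self Complex.two_pi_I_ne_zero]; simp
      simp only [this, Complex.ofReal_re]) x y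
  obtain ⟨n, hn⟩ := key x
  have : (u x - u y) / (2 * Real.pi * Complex.I) = ((n : ℝ) : ℂ) := by
    rw [hn, add_sub_cancel_left, mul_div_assoc, div_self Complex.two_pi_I_ne_zero]; simp
  simp only [this, sub_self, zero_div, Complex.ofReal_re, Complex.zero_re] at h1
  rw [hn]
  have : n = 0 := by exact_mod_cast h1
  simp [this]

/-- plane to complex -/
def toC (p : Plane) : ℂ := ⟨p.1, p.2⟩

lemma toC_cont : Continuous toC := by
  have : toC = fun p : Plane => (p.1 : ℂ) + p.2 * Complex.I := by
    funext p; apply Complex.ext <;> simp [toC]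
  rw [this]; fun_prop

lemma toC_sub (p q : Plane) : toC (p - q) = toC p - toC q := by
  apply Complex.ext <;> simp [toC]

lemma toC_eq_zero {p : Plane} : toC p = 0 ↔ p = 0 := by
  constructor
  · intro h
    have h1 := congrArg Complex.re h
    have h2 := congrArg Complex.im h
    exact Prod.ext h1 h2
  · rintro rfl; rfl

/-- isotopy (through injective maps) from the identity -/
def Iso (G : Plane → Plane) : Prop :=
  ∃ Φ : ℝ → Plane → Plane, Continuous (fun q : ℝ × Plane => Φ q.1 q.2) ∧
    (∀ t, Function.Injective (Φ t)) ∧ (∀ x, Φ 0 x = x) ∧ ∀ x, Φ 1 x = G x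

lemma Iso.comp {G H : Plane → Plane} (hG : Iso G) (hH : Iso H) : Iso (fun x => G (H x)) := by
  obtain ⟨Φ, a, b, c, d⟩ := hG
  obtain ⟨Ψ, a', b', c', d'⟩ := hH
  refine ⟨fun t x => Φ t (Ψ t x), ?_, fun t => (b t).comp (b' t), fun x => by simp [c, c'],
    fun x => by simp [d, d']⟩
  exact a.comp (continuous_fst.prodMk a')

lemma Iso.id : Iso (fun x => x) :=
  ⟨fun _ x => x, continuous_snd, fun _ => Function.injective_id, fun _ => rfl, fun _ => rfl⟩

lemma Iso.symm {G : Plane ≃ₜ Plane} (hG : Iso G) : Iso G.symm := by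
  obtain ⟨Φ, a, b, c, d⟩ := hG
  refine ⟨fun t x => Φ (1 - t) (G.symm x), ?_, fun t => (b _).comp G.symm.injective,
    fun x => by simp [d], fun x => by simp [c]⟩
  exact a.comp (((continuous_const.sub continuous_fst)).prodMk (G.symm.continuous.comp continuous_snd))

lemma Iso.iterate {G : Plane → Plane} (hG : Iso G) (n : ℕ) : Iso (G^[n]) := by
  induction n with
  | zero => exact Iso.id
  | succ n ih => 
    have := ih.comp hG
    exact this

lemma brouwer_two (G : Plane → Plane) (hI : Iso G) (hf : ∀ x, G x ≠ x) (x : Plane) :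
    G (G x) ≠ x := by
  intro hx
  obtain ⟨Φ, hΦ, hinj, h0, h1⟩ := hI
  have hGc : Continuous G := by
    have : G = fun x => Φ 1 x := by funext x; rw [h1]
    rw [this]; exact hΦ.comp (continuous_const.prodMk continuous_id)
  have hD0 : ∀ q : ℝ × Plane, toC (Φ q.1 (G q.2) - Φ q.1 q.2) ≠ 0 := by
    intro q h
    rw [toC_eq_zero, sub_eq_zero] at h
    exact hf _ (hinj _ h)
  obtain ⟨θ, hθ, he⟩ := exists_log (fun q : ℝ × Plane => toC (Φ q.1 (G q.2) - Φ q.1 q.2))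
    (toC_cont.comp ((hΦ.comp (continuous_fst.prodMk (hGc.comp continuous_snd))).sub hΦ)) hD0
  have e1 : ∀ y z, θ (1, y) - θ (0, G y) = θ (1, z) - θ (0, G z) := by
    refine exp_const (fun y => θ (1, y) - θ (0, G y)) (by fun_prop) 1 ?_
    intro y
    rw [Complex.exp_sub, he, he, div_eq_one_iff_eq (hD0 _)]
    simp [h0, h1]
  have e2 : ∀ s t : ℝ, θ (s, G x) - θ (s, x) = θ (t, G x) - θ (t, x) := by
    refine exp_const (fun s => θ (s, G x) - θ (s, x)) (by fun_prop) (-1) ?_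
    intro s
    rw [Complex.exp_sub, he, he, div_eq_iff (hD0 _)]
    simp only [hx, toC_sub]; ring
  have a := e1 x (G x)
  rw [hx] at a
  have b := e2 0 1
  have c : θ (0, G x) - θ (0, x) = 0 := by
    have : θ (0, G x) - θ (0, x) = -(θ (0, G x) - θ (0, x)) := by
      linear_combination b - a
    have h2 : (2:ℂ) * (θ (0, G x) - θ (0, x)) = 0 := by linear_combination this
    simpa using h2
  have d : Complex.exp (θ (0, G x)) = Complex.exp (θ (0, x)) := by
    rw [sub_eq_zero.mp c]
  rw [he, he] at d
  simp only [hx, toC_sub, h0] at d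
  apply hD0 (0, x)
  simp only [toC_sub, h0]
  have h2 : (2:ℂ) * (toC (G x) - toC x) = 0 := by linear_combination -d
  simpa using h2

/-- bump displacement -/
def bump (a : Plane) (r : ℝ) (x : Plane) : ℝ := max 0 (1 - ‖x - a‖ / r)

lemma bump_lip (a : Plane) {r : ℝ} (hr : 0 < r) (x y : Plane) :
    |bump a r x - bump a r y| ≤ ‖x - y‖ / r := by
  unfold bump
  refine (abs_max_sub_max_le_max _ _ _ _).trans ?_
  simp only [sub_self, abs_zero]
  apply max_le (by positivity)
  have : (1 - ‖x - a‖ / r) - (1 - ‖y - a‖ / r) = (‖y - a‖ - ‖x - a‖) / r := by ring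
  rw [this, abs_div, abs_of_pos hr]
  gcongr
  have := abs_norm_sub_norm_le (y - a) (x - a)
  simp only [sub_sub_sub_cancel_right] at this
  rwa [norm_sub_rev x y]

lemma shift_lip (a u : Plane) {r : ℝ} (hr : 0 < r) (t : ℝ) (x y : Plane) :
    ‖((projIcc (0:ℝ) 1 zero_le_one t : ℝ) * bump a r x) • u
      - ((projIcc (0:ℝ) 1 zero_le_one t : ℝ) * bump a r y) • u‖ ≤ ‖u‖ / r * ‖x - y‖ := by
  rw [← sub_smul, ← mul_sub, norm_smul, norm_mul]
  have h1 : ‖(projIcc (0:ℝ) 1 zero_le_one t : ℝ)‖ ≤ 1 := by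
    have := (projIcc (0:ℝ) 1 zero_le_one t).2
    rw [Real.norm_eq_abs, abs_le]; constructor <;> linarith [this.1, this.2]
  have h2 := bump_lip a hr x y
  rw [← Real.norm_eq_abs] at h2
  calc _ ≤ 1 * (‖x - y‖ / r) * ‖u‖ := by gcongr
    _ = _ := by ring

lemma bump_cont (a : Plane) (r : ℝ) : Continuous (bump a r) := by
  unfold bump; fun_prop

lemma local_pert (a u : Plane) {r : ℝ} (hr : 0 < r) (hu : ‖u‖ < r) :
    ∃ h : Plane ≃ₜ Plane, Iso h ∧ (∀ x ∉ Metric.ball a r, h x = x) ∧ h a = a + u := by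
  have hk : ‖u‖ / r < 1 := by rw [div_lt_one hr]; exact hu
  have hb1 : bump a r a = 1 := by simp [bump]
  have happ : ApproximatesLinearOn (fun x => x + bump a r x • u)
      ((ContinuousLinearEquiv.refl ℝ Plane : Plane ≃L[ℝ] Plane) : Plane →L[ℝ] Plane) univ
      ⟨‖u‖ / r, by positivity⟩ := by
    intro x _ y _
    have := shift_lip a u hr 1 x y
    simp only [projIcc_right, one_mul] at this
    refine le_trans (le_of_eq ?_) this
    congr 1
    simp only [ContinuousLinearEquiv.coe_refl, ContinuousLinearMap.coe_id', id_eq]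
    abel
  let h := happ.toHomeomorph _ (Or.inr (by
    have : ‖(((ContinuousLinearEquiv.refl ℝ Plane).symm : Plane ≃L[ℝ] Plane) : Plane →L[ℝ] Plane)‖₊ = 1 := by
      simp
    rw [this, inv_one]
    exact hk))
  have hh : ∀ x, h x = x + bump a r x • u := fun x => rfl
  refine ⟨h, ?_, ?_, ?_⟩
  · refine ⟨fun t x => x + ((projIcc (0:ℝ) 1 zero_le_one t : ℝ) * bump a r x) • u, ?_, ?_, ?_, ?_⟩
    · have := bump_cont a r
      have h3 : Continuous (fun t : ℝ => (projIcc (0:ℝ) 1 zero_le_one t : ℝ)) :=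
        continuous_subtype_val.comp continuous_projIcc
      fun_prop
    · intro t x y hxy
      have h1 := shift_lip a u hr t x y
      have h2 : x - y = -(((projIcc (0:ℝ) 1 zero_le_one t : ℝ) * bump a r x) • u
      - ((projIcc (0:ℝ) 1 zero_le_one t : ℝ) * bump a r y) • u) := by
        simp only at hxy
        rw [neg_sub, sub_eq_sub_iff_add_eq_add, hxy]; abel
      by_contra hne
      have h3 : 0 < ‖x - y‖ := norm_pos_iff.mpr (sub_ne_zero.mpr hne)
      have h4 : ‖x - y‖ ≤ ‖u‖ / r * ‖x - y‖ := by
        conv_lhs => rw [h2, norm_neg]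
        exact h1
      nlinarith
    · intro x; simp
    · intro x; simp [hh]
  · intro x hx
    rw [hh]
    have : bump a r x = 0 := by
      unfold bump
      rw [Metric.mem_ball, dist_eq_norm, not_lt] at hx
      apply max_eq_left
      rw [sub_nonpos, one_le_div hr]; exact hx
    simp [this]
  · rw [hh, hb1, one_smul]

/-- there is a perturbation supported in `C` sending `p` to `q` -/
def Pert (C : Set Plane) (p q : Plane) : Prop :=
  ∃ h : Plane ≃ₜ Plane, Iso h ∧ (∀ x ∉ C, h x = x) ∧ h p = q

lemma pert_of_connected {C : Set Plane} (ho : IsOpen C) (hc : IsPreconnected C) {p q : Plane}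
    (hp : p ∈ C) (hq : q ∈ C) : Pert C p q := by
  have hsymm : ∀ x y, Pert C x y → Pert C y x := by
    rintro x y ⟨h, h1, h2, h3⟩
    refine ⟨h.symm, h1.symm, fun z hz => ?_, ?_⟩
    · rw [Homeomorph.symm_apply_eq, h2 z hz]
    · rw [Homeomorph.symm_apply_eq, h3]
  refine hc.induction₂ (Pert C) ?_ ?_ ?_ hp hq
  · intro x hx
    obtain ⟨r, hr, hb⟩ := Metric.isOpen_iff.mp ho x hx
    filter_upwards [mem_nhdsWithin_of_mem_nhds (Metric.ball_mem_nhds x hr)] with y hy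
    obtain ⟨h, h1, h2, h3⟩ := local_pert x (y - x) hr (by
      rwa [← dist_eq_norm])
    exact ⟨h, h1, fun z hz => h2 z (fun hz' => hz (hb hz')), by rw [h3]; abel⟩
  · rintro x y z _ _ _ ⟨h, h1, h2, h3⟩ ⟨h', h1', h2', h3'⟩
    refine ⟨h.trans h', h1'.comp h1, fun z hz => ?_, ?_⟩
    · simp [h2 z hz, h2' z hz]
    · simp [h3, h3']
  · intro x y _ _ hxy; exact hsymm x y hxy

lemma pert_mem {C : Set Plane} {h : Plane ≃ₜ Plane} (h2 : ∀ x ∉ C, h x = x) {x : Plane}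
    (hx : x ∈ C) : h x ∈ C := by
  by_contra hn
  have := h2 _ hn
  exact hn (by rw [h.injective this]; exact hx)

/-- free sets -/
def Free (G : Plane → Plane) (C : Set Plane) : Prop := ∀ x ∈ C, G x ∉ C

lemma fpf_comp {G : Plane → Plane} (hf : ∀ x, G x ≠ x) {h : Plane → Plane}
    (hh : ∀ x, h x = x ∨ ∃ C, Free G C ∧ x ∈ C ∧ h x ∈ C) (x : Plane) : G (h x) ≠ x := by
  intro hx
  rcases hh x with h1 | ⟨C, hC, hxC, hhx⟩
  · rw [h1] at hx; exact hf x hx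
  · exact hC _ hhx (by rw [hx]; exact hxC)


lemma thick_free {H : Plane → Plane} (hH : Continuous H) {K L : Set Plane} (hK : IsCompact K)
    (hL : IsCompact L) (h : ∀ x ∈ K, H x ∉ L) :
    ∃ δ > 0, ∀ x ∈ Metric.thickening δ K, H x ∉ Metric.thickening δ L := by
  have hd : Disjoint (H '' K) L := by
    rw [Set.disjoint_left]; rintro _ ⟨x, hx, rfl⟩; exact h x hx
  obtain ⟨δ, hδ, h1⟩ := hd.exists_thickenings (hK.image hH) hL.isClosed
  obtain ⟨δ', hδ', h2⟩ := hK.exists_thickening_subset_open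
    (Metric.isOpen_thickening.preimage hH : IsOpen (H ⁻¹' Metric.thickening δ (H '' K)))
    (fun x hx => Metric.self_subset_thickening hδ _ (mem_image_of_mem H hx))
  refine ⟨min δ δ', lt_min hδ hδ', fun x hx hx' => ?_⟩
  exact Set.disjoint_left.mp h1 (h2 (Metric.thickening_mono (min_le_right _ _) _ hx))
    (Metric.thickening_mono (min_le_left _ _) _ hx')

lemma closedBall_sphere (H : Plane ≃ₜ Plane) {z : Plane} {r : ℝ} (hr : 0 < r)
    (hf : Free H (Metric.ball z r)) {x : Plane} (hx : x ∈ Metric.closedBall z r)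
    (hx' : H x ∈ Metric.closedBall z r) : x ∈ Metric.sphere z r ∧ H x ∈ Metric.sphere z r := by
  rw [← closure_ball z hr.ne'] at hx hx'
  have a : x ∉ Metric.ball z r := by
    intro h
    have ho : IsOpen (H '' Metric.ball z r) := H.isOpenMap _ Metric.isOpen_ball
    obtain ⟨y, ⟨w, hw, rfl⟩, hy⟩ := mem_closure_iff.mp hx' _ ho (mem_image_of_mem H h)
    exact hf w hw hy
  have b : H x ∉ Metric.ball z r := by
    intro h
    obtain ⟨y, hy, hy'⟩ := mem_closure_iff.mp hx _ (Metric.isOpen_ball.preimage H.continuous) h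
    exact hf y hy' hy
  rw [closure_ball z hr.ne'] at hx hx'
  simp only [Metric.mem_ball, not_lt, Metric.mem_closedBall, Metric.mem_sphere] at *
  exact ⟨le_antisymm hx a, le_antisymm hx' b⟩

lemma critical_ball (G : Plane ≃ₜ Plane) (z : Plane) (hz : G z ≠ z) :
    ∃ r > 0, Free G (Metric.ball z r) ∧ ∃ v ∈ Metric.sphere z r, G v ∈ Metric.sphere z r := by
  let S : Set ℝ := {r | 0 < r ∧ Free G (Metric.ball z r)}
  have hne : S.Nonempty := by
    obtain ⟨δ, hδ, h⟩ := thick_free (K := {z}) (L := {z}) G.continuous isCompact_singleton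
      isCompact_singleton (by rintro x rfl h; exact hz h)
    rw [Metric.thickening_singleton] at h
    exact ⟨δ, hδ, h⟩
  have hbd : BddAbove S := by
    refine ⟨dist (G z) z, fun r hr => ?_⟩
    by_contra hlt
    rw [not_le] at hlt
    exact hr.2 z (Metric.mem_ball_self hr.1) hlt
  set r := sSup S with hr
  have hrpos : 0 < r := by
    obtain ⟨s, hs⟩ := hne
    exact hs.1.trans_le (le_csSup hbd hs)
  have hfree : Free G (Metric.ball z r) := by
    intro x hx hx'
    rw [Metric.mem_ball] at hx hx'
    obtain ⟨s, hs, hs'⟩ := exists_lt_of_lt_csSup hne (max_lt hx hx')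
    exact hs.2 x ((le_max_left _ _).trans_lt hs') ((le_max_right _ _).trans_lt hs')
  refine ⟨r, hrpos, hfree, ?_⟩
  by_contra hcon
  push Not at hcon
  have hcl : ∀ x ∈ Metric.closedBall z r, G x ∉ Metric.closedBall z r := by
    intro x hx hx'
    have := closedBall_sphere G hrpos hfree hx hx'
    exact hcon x this.1 this.2
  obtain ⟨δ, hδ, h⟩ := thick_free G.continuous (isCompact_closedBall z r)
    (isCompact_closedBall z r) hcl
  rw [thickening_closedBall hδ hrpos.le] at h
  have : δ + r ≤ r := le_csSup hbd (a := δ + r) ⟨by positivity, h⟩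
  linarith

/-- no periodic points of period `j` -/
def NoPer (j : ℕ) : Prop := ∀ G : Plane ≃ₜ Plane, Iso G → (∀ x, G x ≠ x) → ∀ x, G^[j] x ≠ x

lemma free_disc (n : ℕ) (hn : ∀ j, 1 ≤ j → j < n → NoPer j) (G : Plane ≃ₜ Plane) (hI : Iso G)
    (hf : ∀ x, G x ≠ x) {C : Set Plane} (ho : IsOpen C) (hc : IsPreconnected C) (hC : Free G C) :
    ∀ j, 1 ≤ j → j < n → Free (G^[j]) C := by
  intro j
  induction j using Nat.strong_induction_on with
  | _ j ih =>
    intro h1 hjn y hy hy'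
    obtain ⟨h, hi, hoff, hh⟩ := pert_of_connected ho hc hy' hy
    have hfp : ∀ x, (G.trans h) x ≠ x := by
      intro x hx
      simp only [Homeomorph.trans_apply] at hx
      by_cases hG : G x ∈ C
      · have := pert_mem hoff hG
        rw [hx] at this
        exact hC x this hG
      · rw [hoff _ hG] at hx; exact hf x hx
    have hit : ∀ i, i < j → (G.trans h)^[i] y = G^[i] y := by
      intro i
      induction i with
      | zero => intro _; rfl
      | succ i ihi =>
        intro hi
        rw [Function.iterate_succ_apply', ihi (by omega), Function.iterate_succ_apply',
          Homeomorph.trans_apply]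
        apply hoff
        have := ih (i+1) hi (by omega) (by omega) y hy
        rwa [Function.iterate_succ_apply'] at this
    refine hn j h1 hjn (G.trans h) (hi.comp hI) hfp y ?_
    obtain ⟨i, rfl⟩ : ∃ i, j = i + 1 := ⟨j - 1, by omega⟩
    rw [Function.iterate_succ_apply', hit i (by omega), Homeomorph.trans_apply,
      ← Function.iterate_succ_apply' (⇑G), hh]

lemma segment_in_ball {z w : Plane} {r : ℝ} (hr : 0 < r) (hw : w ∈ Metric.sphere z r) {x : Plane}
    (hx : x ∈ segment ℝ z w) : x ∈ Metric.closedBall z r ∧ (x ∈ Metric.sphere z r → x = w) := by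
  rw [segment_eq_image'] at hx
  obtain ⟨t, ht, rfl⟩ := hx
  have hw' : ‖w - z‖ = r := by rw [← dist_eq_norm]; exact hw
  have : dist (z + t • (w - z)) z = t * r := by
    rw [dist_eq_norm, add_sub_cancel_left, norm_smul, hw', Real.norm_of_nonneg ht.1]
  constructor
  · rw [Metric.mem_closedBall, this]; nlinarith [ht.2]
  · intro h
    rw [Metric.mem_sphere, this] at h
    have : t = 1 := by
      have : (t - 1) * r = 0 := by linarith
      rcases mul_eq_zero.mp this with h | h <;> linarith
    simp [this]

lemma isCompact_seg (a b : Plane) : IsCompact (segment ℝ a b) := by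
  rw [segment_eq_image']
  exact isCompact_Icc.image (by fun_prop)

/-- the homeomorphism G^j -/
def itH (G : Plane ≃ₜ Plane) : ℕ → (Plane ≃ₜ Plane)
  | 0 => Homeomorph.refl _
  | n+1 => (itH G n).trans G

lemma itH_apply (G : Plane ≃ₜ Plane) (n : ℕ) (x : Plane) : itH G n x = G^[n] x := by
  induction n with
  | zero => rfl
  | succ n ih => rw [Function.iterate_succ_apply', ← ih]; rfl

lemma brouwer_step (n : ℕ) (h3 : 3 ≤ n) (hn : ∀ j, 1 ≤ j → j < n → NoPer j) : NoPer n := by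
  intro G hI hf x0 hx0
  obtain ⟨r, hr, hfree, v, hv, hw⟩ := critical_ball G x0 (hf x0)
  set w := G v with hwdef
  have hball2 : Free (itH G 2) (Metric.ball x0 r) := by
    intro x hx hx'
    rw [itH_apply] at hx'
    exact free_disc n hn G hI hf Metric.isOpen_ball (convex_ball x0 r).isPreconnected hfree 2
      (by omega) (by omega) x hx hx'
  have f1 : Free G (segment ℝ x0 w) := by
    intro x hx hx'
    have a := segment_in_ball hr hw hx
    have b := segment_in_ball hr hw hx'
    have c := closedBall_sphere G hr hfree a.1 b.1
    exact hf x ((b.2 c.2).trans (a.2 c.1).symm)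
  have f2 : Free G (segment ℝ x0 v) := by
    intro x hx hx'
    have a := segment_in_ball hr hv hx
    have b := segment_in_ball hr hv hx'
    have c := closedBall_sphere G hr hfree a.1 b.1
    exact hf x ((b.2 c.2).trans (a.2 c.1).symm)
  have f3 : ∀ x ∈ segment ℝ x0 v, itH G 2 x ∉ segment ℝ x0 w := by
    intro x hx hx'
    have a := segment_in_ball hr hv hx
    have b := segment_in_ball hr hw hx'
    have c := closedBall_sphere (itH G 2) hr hball2 a.1 b.1
    have d := b.2 c.2
    rw [a.2 c.1] at d
    have d' : G (G v) = G v := d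
    exact hf _ d'
  obtain ⟨δ1, hδ1, g1⟩ := thick_free G.continuous (isCompact_seg x0 w) (isCompact_seg x0 w) f1
  obtain ⟨δ2, hδ2, g2⟩ := thick_free G.continuous (isCompact_seg x0 v) (isCompact_seg x0 v) f2
  obtain ⟨δ3, hδ3, g3⟩ := thick_free (itH G 2).continuous (isCompact_seg x0 v) (isCompact_seg x0 w) f3
  set c1 := Metric.thickening (min δ1 δ3) (segment ℝ x0 w) with hc1
  set d2 := Metric.thickening (min δ2 δ3) (segment ℝ x0 v) with hd2
  have hp1 : 0 < min δ1 δ3 := lt_min hδ1 hδ3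
  have hp2 : 0 < min δ2 δ3 := lt_min hδ2 hδ3
  have free1 : Free G c1 := fun x hx hx' =>
    g1 x (Metric.thickening_mono (min_le_left _ _) _ hx)
      (Metric.thickening_mono (min_le_left _ _) _ hx')
  have freed2 : Free G d2 := fun x hx hx' =>
    g2 x (Metric.thickening_mono (min_le_left _ _) _ hx)
      (Metric.thickening_mono (min_le_left _ _) _ hx')
  set c2 := itH G 2 '' d2 with hc2
  have free2 : Free G c2 := by
    rintro _ ⟨x, hx, rfl⟩ ⟨y, hy, hxy⟩
    have hxy' : G (G y) = G (G (G x)) := hxy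
    have := G.injective (G.injective hxy')
    exact freed2 x hx (by rw [← this]; exact hy)
  have disj : ∀ x ∈ c2, x ∉ c1 := by
    rintro _ ⟨x, hx, rfl⟩ hx'
    exact g3 x (Metric.thickening_mono (min_le_right _ _) _ hx)
      (Metric.thickening_mono (min_le_right _ _) _ hx')
  have o1 : IsOpen c1 := Metric.isOpen_thickening
  have o2 : IsOpen c2 := (itH G 2).isOpenMap _ Metric.isOpen_thickening
  have k1 : IsPreconnected c1 := ((convex_segment x0 w).thickening _).isPreconnected
  have k2 : IsPreconnected c2 := (((convex_segment x0 v).thickening _).isPreconnected).image _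
    (itH G 2).continuous.continuousOn
  have x0c1 : x0 ∈ c1 := Metric.self_subset_thickening hp1 _ (left_mem_segment ℝ x0 w)
  have wc1 : w ∈ c1 := Metric.self_subset_thickening hp1 _ (right_mem_segment ℝ x0 w)
  have x2c2 : G (G x0) ∈ c2 := ⟨x0, Metric.self_subset_thickening hp2 _ (left_mem_segment ℝ x0 v), rfl⟩
  have wc2 : G w ∈ c2 := ⟨v, Metric.self_subset_thickening hp2 _ (right_mem_segment ℝ x0 v), rfl⟩
  obtain ⟨h1, i1, e1, m1⟩ := pert_of_connected o1 k1 x0c1 wc1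
  obtain ⟨h2, i2, e2, m2⟩ := pert_of_connected o2 k2 wc2 x2c2
  have fp : ∀ x, ((h2.trans h1).trans G) x ≠ x := by
    refine fpf_comp hf (h := fun x => h1 (h2 x)) ?_
    intro x
    by_cases a : x ∈ c2
    · right
      have := pert_mem e2 a
      exact ⟨c2, free2, a, by rw [e1 _ (disj _ this)]; exact this⟩
    · simp only [e2 x a]
      by_cases b : x ∈ c1
      · right; exact ⟨c1, free1, b, pert_mem e1 b⟩
      · left; exact e1 x b
  -- avoidance
  have av1 : ∀ i, 1 ≤ i → i < n → G^[i] x0 ∉ c1 := fun i hi hin =>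
    free_disc n hn G hI hf o1 k1 free1 i hi hin x0 x0c1
  have av2 : ∀ i, 3 ≤ i → i ≤ n → G^[i] x0 ∉ c2 := by
    intro i hi hin
    have := free_disc n hn G hI hf o2 k2 free2 (i - 2) (by omega) (by omega) _ x2c2
    have e : G (G x0) = G^[2] x0 := rfl
    rwa [e, ← Function.iterate_add_apply, show i - 2 + 2 = i by omega] at this
  set G' := (h2.trans h1).trans G with hG'
  have hG'a : ∀ x, G' x = G (h1 (h2 x)) := fun x => rfl
  have it : ∀ i, 3 ≤ i → i ≤ n → G'^[i-1] x0 = G^[i] x0 := by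
    intro i hi
    induction i, hi using Nat.le_induction with
    | base =>
      intro _
      change G' (G' x0) = G (G (G x0))
      have a2 : x0 ∉ c2 := by
        have := av2 n h3 le_rfl
        rwa [hx0] at this
      rw [hG'a x0, e2 x0 a2, m1, hG'a, m2, e1]
      exact av1 2 (by omega) (by omega)
    | succ i hi ih =>
      intro hin
      have hh : i + 1 - 1 = (i - 1) + 1 := by omega
      rw [hh, Function.iterate_succ_apply', ih (by omega), hG'a, e2 _ (av2 i hi (by omega)),
        e1 _ (av1 i (by omega) (by omega)), Function.iterate_succ_apply']
  refine hn (n-1) (by omega) (by omega) G' (hI.comp (i1.comp i2)) fp x0 ?_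
  rw [it n h3 le_rfl, hx0]

theorem brouwer (n : ℕ) (hn : 1 ≤ n) : NoPer n := by
  induction n using Nat.strong_induction_on with
  | _ n ih =>
    rcases Nat.lt_or_ge n 3 with h | h
    · have : n = 1 ∨ n = 2 := by omega
      rcases this with rfl | rfl
      · intro G _ hf x; exact hf x
      · intro G hI hf x; exact brouwer_two G hI hf x
    · exact brouwer_step n h (fun j h1 h2 => ih j h2 h1)


lemma simul_pert (C : ℕ → Set Plane) (p q : ℕ → Plane) (m : ℕ)
    (ho : ∀ k < m, IsOpen (C k)) (hc : ∀ k < m, IsPreconnected (C k))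
    (hd : ∀ k < m, ∀ l < m, k ≠ l → Disjoint (C k) (C l))
    (hp : ∀ k < m, p k ∈ C k) (hq : ∀ k < m, q k ∈ C k) :
    ∃ h : Plane ≃ₜ Plane, Iso h ∧ (∀ x, h x = x ∨ ∃ k < m, x ∈ C k ∧ h x ∈ C k) ∧
      ∀ k < m, h (p k) = q k := by
  induction m with
  | zero => exact ⟨Homeomorph.refl _, Iso.id, fun x => Or.inl rfl, fun k hk => absurd hk (by omega)⟩
  | succ m ih =>
    obtain ⟨h, i, a, b⟩ := ih (fun k hk => ho k (by omega)) (fun k hk => hc k (by omega))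
      (fun k hk l hl => hd k (by omega) l (by omega)) (fun k hk => hp k (by omega))
      (fun k hk => hq k (by omega))
    obtain ⟨g, i', a', b'⟩ := pert_of_connected (ho m (by omega)) (hc m (by omega))
      (hp m (by omega)) (hq m (by omega))
    have hdm : ∀ k < m, ∀ x ∈ C k, x ∉ C m := fun k hk x hx hx' =>
      Set.disjoint_left.mp (hd k (by omega) m (by omega) (by omega)) hx hx'
    refine ⟨h.trans g, i'.comp i, ?_, ?_⟩
    · intro x
      simp only [Homeomorph.trans_apply]
      rcases a x with h1 | ⟨k, hk, h1, h2⟩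
      · rw [h1]
        by_cases hx : x ∈ C m
        · exact Or.inr ⟨m, by omega, hx, pert_mem a' hx⟩
        · exact Or.inl (a' x hx)
      · right
        refine ⟨k, by omega, h1, ?_⟩
        rw [a' _ (hdm k hk _ h2)]; exact h2
    · intro k hk
      simp only [Homeomorph.trans_apply]
      rcases Nat.lt_succ_iff_lt_or_eq.mp hk with hk | rfl
      · rw [b k hk, a' _ (hdm k hk _ (hq k (by omega)))]
      · rcases a (p k) with h1 | ⟨l, hl, h1, h2⟩
        · rw [h1, b']
        · exact absurd (hp k (by omega)) (hdm l hl _ h1)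

lemma franks (G : Plane ≃ₜ Plane) (hI : Iso G) (hf : ∀ x, G x ≠ x)
    (C : ℕ → Set Plane) (p q : ℕ → Plane) (m : ℕ) (hm : 1 ≤ m)
    (ho : ∀ k < m, IsOpen (C k)) (hc : ∀ k < m, IsPreconnected (C k))
    (hd : ∀ k < m, ∀ l < m, k ≠ l → Disjoint (C k) (C l))
    (hp : ∀ k < m, p k ∈ C k) (hq : ∀ k < m, q k ∈ C k) (hF : ∀ k < m, Free G (C k))
    (hG : ∀ k < m, G (q k) = p (k + 1)) (hper : p m = p 0) : False := by
  obtain ⟨h, i, a, b⟩ := simul_pert C p q m ho hc hd hp hq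
  have it : ∀ k ≤ m, (h.trans G)^[k] (p 0) = p k := by
    intro k
    induction k with
    | zero => intro _; rfl
    | succ k ih =>
      intro hk
      rw [Function.iterate_succ_apply', ih (by omega), Homeomorph.trans_apply, b k (by omega),
        hG k (by omega)]
  refine brouwer m hm (h.trans G) (hI.comp i) ?_ (p 0) ((it m le_rfl).trans hper)
  refine fpf_comp hf ?_
  intro x
  rcases a x with h1 | ⟨k, hk, h1, h2⟩
  · exact Or.inl h1
  · exact Or.inr ⟨C k, hF k hk, h1, h2⟩

/-- periodic sequence for relation -/
def PerSeq {ι : Type*} (R : ι → ι → Prop) (n : ℕ) : Prop :=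
  1 ≤ n ∧ ∃ s : ℕ → ι, (∀ k, s (k + n) = s k) ∧ ∀ k, R (s k) (s (k+1))

lemma perseq_close {ι : Type*} {R : ι → ι → Prop} (s : ℕ → ι) (hs : ∀ k, R (s k) (s (k+1)))
    {a b : ℕ} (hba : b ≤ a) (h : R (s a) (s b)) : PerSeq R (a - b + 1) := by
  refine ⟨by omega, fun k => s (b + k % (a - b + 1)), fun k => by simp, fun k => ?_⟩
  beta_reduce
  have hlt := Nat.mod_lt k (show a - b + 1 > 0 by omega)
  by_cases hk : k % (a - b + 1) = a - b
  · have : (k + 1) % (a - b + 1) = 0 := by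
      rw [Nat.add_mod, hk]
      rcases Nat.eq_zero_or_pos (a - b) with h0 | h0
      · simp [h0]
      · rw [Nat.mod_eq_of_lt (show 1 < a - b + 1 by omega), Nat.mod_self]
    rw [this, hk, show b + (a - b) = a by omega, add_zero]; exact h
  · have : (k + 1) % (a - b + 1) = k % (a - b + 1) + 1 := by
      have h1 : 1 < a - b + 1 := by omega
      rw [Nat.add_mod, Nat.mod_eq_of_lt h1, Nat.mod_eq_of_lt (by omega)]
    rw [this]; exact hs _

lemma transGen_perseq {ι : Type*} {R : ι → ι → Prop} {i : ι} (h : Relation.TransGen R i i) :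
    ∃ n, PerSeq R n := by
  have key : ∀ j, Relation.TransGen R i j → ∃ n, ∃ s : ℕ → ι, s 0 = i ∧ s (n+1) = j ∧
      ∀ k ≤ n, R (s k) (s (k+1)) := by
    intro j hj
    induction hj with
    | single h => 
      rename_i b
      refine ⟨0, fun k => if k = 0 then i else b, rfl, rfl, fun k hk => ?_⟩
      obtain rfl : k = 0 := by omega
      simpa using h
    | tail _ h ih =>
      rename_i b0 c _
      obtain ⟨n, s, h0, h1, h2⟩ := ih
      refine ⟨n+1, fun k => if k ≤ n + 1 then s k else c, by simpa using h0, by simp, fun k hk => ?_⟩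
      rcases Nat.lt_or_ge k (n+1) with h' | h'
      · simp only [show k ≤ n + 1 by omega, show k + 1 ≤ n + 1 by omega, if_true]
        exact h2 k (by omega)
      · obtain rfl : k = n + 1 := by omega
        simp [h1, h]
  obtain ⟨n, s, h0, h1, h2⟩ := key i h
  refine ⟨n+1, by omega, fun k => s (k % (n+1)), fun k => by simp, fun k => ?_⟩
  beta_reduce
  have hlt := Nat.mod_lt k (show n + 1 > 0 by omega)
  by_cases hk : k % (n+1) = n
  · have : (k + 1) % (n + 1) = 0 := by
      rw [Nat.add_mod, hk]
      rcases Nat.eq_zero_or_pos n with h0 | h0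
      · simp [h0]
      · rw [Nat.mod_eq_of_lt (show 1 < n + 1 by omega), Nat.mod_self]
    rw [this, hk, h0, ← h1]; exact h2 n le_rfl
  · have : (k + 1) % (n + 1) = k % (n+1) + 1 := by
      have h1 : 1 < n + 1 := by omega
      rw [Nat.add_mod, Nat.mod_eq_of_lt h1, Nat.mod_eq_of_lt (by omega)]
    rw [this]; exact h2 _ (by omega)

theorem brick_franks (G : Plane ≃ₜ Plane) (hI : Iso G) (hf : ∀ x, G x ≠ x) {ι : Type*}
    (B O : ι → Set Plane) (hB : ∀ i, IsCompact (B i)) (hO : ∀ i, IsOpen (O i))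
    (hOc : ∀ i, IsPreconnected (O i)) (hOB : ∀ i, O i ⊆ B i) (hBO : ∀ i, B i ⊆ closure (O i))
    (hdis : ∀ i j, i ≠ j → Disjoint (O i) (B j)) (hfree : ∀ i, Free G (B i)) (i : ι) :
    ¬ Relation.TransGen (fun i j => ∃ x ∈ B i, G x ∈ B j) i i := by
  intro hcyc
  set R : ι → ι → Prop := fun i j => ∃ x ∈ B i, G x ∈ B j with hR
  classical
  have hex := transGen_perseq hcyc
  set n := Nat.find hex with hn
  obtain ⟨hn1, s, hper, hs⟩ := Nat.find_spec hex
  rw [← hn] at hn1 hper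
  have hmin : ∀ a b, b ≤ a → R (s a) (s b) → n ≤ a - b + 1 := fun a b hba h =>
    Nat.find_min' hex (perseq_close s hs hba h)
  -- injectivity
  have hRb : ∀ a < n, ∀ b < n, R (s a) (s b) → b = a + 1 ∨ (b = 0 ∧ a + 1 = n) := by
    intro a ha b hb h
    rcases Nat.lt_or_ge a b with hab | hab
    · left
      have := hmin (a + n) b (by omega) (by rw [hper]; exact h)
      omega
    · right
      have := hmin a b hab h
      omega
  have hinj : ∀ a < n, ∀ b < n, s a = s b → a = b := by
    have aux : ∀ a < n, ∀ b < n, a < b → s a ≠ s b := by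
      intro a ha b hb hab h
      have := hmin b (a+1) hab (by rw [← h]; exact hs a)
      omega
    intro a ha b hb h
    rcases lt_trichotomy a b with h' | h' | h'
    · exact absurd h (aux a ha b hb h')
    · exact h'
    · exact absurd h.symm (aux b hb a ha h')
  choose x hx hGx using hs
  -- q k = x k, p k = G (x (k + n - 1))
  set p : ℕ → Plane := fun k => if k = 0 then G (x (n-1)) else if k = n then G (x (n-1))
    else G (x (k-1)) with hpdef
  have hpk : ∀ k < n, p (k+1) = G (x k) := by
    intro k hk
    simp only [hpdef, Nat.succ_ne_zero, if_false, Nat.add_sub_cancel]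
    split_ifs with h
    · rw [show n - 1 = k by omega]
    · rfl
  have hpB : ∀ k < n, p k ∈ B (s k) := by
    intro k hk
    rcases Nat.eq_zero_or_pos k with rfl | h0
    · simp only [hpdef, if_true]
      have := hGx (n-1)
      rw [show n - 1 + 1 = 0 + n by omega, hper] at this
      exact this
    · have := hpk (k-1) (by omega)
      rw [show k - 1 + 1 = k by omega] at this
      rw [this]
      have h2 := hGx (k-1)
      rwa [show k - 1 + 1 = k by omega] at h2
  have hqB : ∀ k < n, ∀ l < n, k ≠ l → x k ∉ B (s l) := by
    intro k hk l hl hkl h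
    by_cases hkn : k + 1 = n
    · have h1 : R (s l) (s 0) := ⟨x k, h, by
        have := hGx k; rwa [hkn, show n = 0 + n by omega, hper] at this⟩
      have := hRb l hl 0 (by omega) h1
      omega
    · have h1 : R (s l) (s (k+1)) := ⟨x k, h, hGx k⟩
      have := hRb l hl (k+1) (by omega) h1
      omega
  have hpB' : ∀ k < n, ∀ l < n, k ≠ l → p k ∉ B (s l) := by
    intro k hk l hl hkl h
    rcases Nat.eq_zero_or_pos k with rfl | h0
    · simp only [hpdef, if_true] at h
      have := hRb (n-1) (by omega) l hl ⟨x (n-1), hx _, h⟩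
      omega
    · have h2 := hpk (k-1) (by omega)
      rw [show k - 1 + 1 = k by omega] at h2
      rw [h2] at h
      have := hRb (k-1) (by omega) l hl ⟨x (k-1), hx _, h⟩
      omega
  -- choose epsilon
  have hε1 : ∀ k < n, ∀ l < n, k ≠ l → ∀ᶠ ε in 𝓝[>] (0:ℝ),
      Disjoint (Metric.thickening ε {p k, x k}) (Metric.thickening ε (B (s l))) := by
    intro k hk l hl hkl
    have hd : Disjoint ({p k, x k} : Set Plane) (B (s l)) := by
      rw [Set.disjoint_left]
      rintro y (rfl | rfl)
      · exact hpB' k hk l hl hkl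
      · exact hqB k hk l hl hkl
    obtain ⟨δ, hδ, h1⟩ := hd.exists_thickenings ((Set.toFinite _).isCompact) (hB _).isClosed
    filter_upwards [Ioo_mem_nhdsGT hδ] with ε hε
    exact h1.mono (Metric.thickening_mono hε.2.le _) (Metric.thickening_mono hε.2.le _)
  have hε2 : ∀ k < n, ∀ᶠ ε in 𝓝[>] (0:ℝ), Free G (Metric.thickening ε (B (s k))) := by
    intro k hk
    obtain ⟨δ, hδ, h1⟩ := thick_free G.continuous (hB (s k)) (hB (s k)) (hfree (s k))
    filter_upwards [Ioo_mem_nhdsGT hδ] with ε hε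
    exact fun y hy hy' => h1 y (Metric.thickening_mono hε.2.le _ hy)
      (Metric.thickening_mono hε.2.le _ hy')
  have hε : ∀ᶠ ε in 𝓝[>] (0:ℝ), (∀ k < n, ∀ l < n, k ≠ l →
      Disjoint (Metric.thickening ε {p k, x k}) (Metric.thickening ε (B (s l)))) ∧
      (∀ k < n, Free G (Metric.thickening ε (B (s k)))) := by
    refine Eventually.and ?_ ?_
    · refine (Filter.eventually_all_finite (Set.finite_lt_nat n)).mpr fun k hk => ?_
      refine (Filter.eventually_all_finite (Set.finite_lt_nat n)).mpr fun l hl => ?_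
      by_cases hkl : k = l
      · exact Eventually.of_forall fun _ h => absurd hkl h
      · filter_upwards [hε1 k hk l hl hkl] with ε h _ using h
    · exact (Filter.eventually_all_finite (Set.finite_lt_nat n)).mpr fun k hk => hε2 k hk
  obtain ⟨ε, ⟨he1, he2⟩, hε0⟩ := (hε.and self_mem_nhdsWithin).exists
  have hε0 : 0 < ε := hε0
  set C : ℕ → Set Plane := fun k => O (s k) ∪ Metric.ball (p k) ε ∪ Metric.ball (x k) ε with hC
  have hCth : ∀ k, Metric.ball (p k) ε ∪ Metric.ball (x k) ε ⊆ Metric.thickening ε {p k, x k} := by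
    intro k y hy
    rw [Metric.mem_thickening_iff]
    rcases hy with hy | hy
    · exact ⟨p k, by simp, hy⟩
    · exact ⟨x k, by simp, hy⟩
  have hCB : ∀ k < n, C k ⊆ Metric.thickening ε (B (s k)) := by
    intro k hk y hy
    rcases hy with (hy | hy) | hy
    · exact Metric.self_subset_thickening hε0 _ (hOB _ hy)
    · exact Metric.mem_thickening_iff.mpr ⟨p k, hpB k hk, hy⟩
    · exact Metric.mem_thickening_iff.mpr ⟨x k, hx k, hy⟩
  refine franks G hI hf C p x n hn1 ?_ ?_ ?_ ?_ ?_ ?_ ?_ ?_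
  · intro k _
    exact ((hO _).union Metric.isOpen_ball).union Metric.isOpen_ball
  · intro k hk
    have meet : ∀ y ∈ B (s k), ∃ z, z ∈ O (s k) ∧ z ∈ Metric.ball y ε := by
      intro y hy
      obtain ⟨z, hz, hz'⟩ := mem_closure_iff.mp (hBO _ hy) _ Metric.isOpen_ball
        (Metric.mem_ball_self hε0)
      exact ⟨z, hz', hz⟩
    obtain ⟨z, hz, hz'⟩ := meet _ (hpB k hk)
    obtain ⟨w, hw, hw'⟩ := meet _ (hx k)
    refine IsPreconnected.union w (Or.inl hw) hw' ?_ (convex_ball _ _).isPreconnected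
    exact IsPreconnected.union z hz hz' (hOc _) (convex_ball _ _).isPreconnected
  · intro k hk l hl hkl
    rw [Set.disjoint_left]
    intro y hy hy'
    by_cases h1 : y ∈ Metric.ball (p k) ε ∪ Metric.ball (x k) ε
    · exact Set.disjoint_left.mp (he1 k hk l hl hkl) (hCth k h1) (hCB l hl hy')
    · by_cases h2 : y ∈ Metric.ball (p l) ε ∪ Metric.ball (x l) ε
      · exact Set.disjoint_left.mp (he1 l hl k hk (Ne.symm hkl)) (hCth l h2) (hCB k hk hy)
      · have a : y ∈ O (s k) := by
          rcases hy with (hy | hy) | hy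
          · exact hy
          · exact absurd (Or.inl hy) h1
          · exact absurd (Or.inr hy) h1
        have b : y ∈ O (s l) := by
          rcases hy' with (hy | hy) | hy
          · exact hy
          · exact absurd (Or.inl hy) h2
          · exact absurd (Or.inr hy) h2
        exact Set.disjoint_left.mp (hdis _ _ (fun h => hkl (hinj k hk l hl h))) a (hOB _ b)
  · intro k hk; exact Or.inl (Or.inr (Metric.mem_ball_self hε0))
  · intro k hk; exact Or.inr (Metric.mem_ball_self hε0)
  · intro k hk y hy hy'
    exact he2 k hk y (hCB k hk hy) (hCB k hk hy')
  · intro k hk; rw [hpk k hk]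
  · simp only [hpdef, if_true]
    split_ifs <;> rfl


lemma edge_log (φ θ : ℝ → ℂ) (hφ : Continuous φ) (hθ : Continuous θ)
    (he : ∀ t, Complex.exp (θ t) = φ t) (d : ℂ) (hd : ∀ t, 0 < (d * φ t).re) (a b : ℝ) :
    θ b - θ a = Complex.log (d * φ b) - Complex.log (d * φ a) := by
  have hd0 : ∀ t, d * φ t ≠ 0 := fun t h => by have := hd t; rw [h] at this; simp at this
  have h := exp_const (fun t => θ t - Complex.log (d * φ t))
    (hθ.sub (Continuous.clog (by fun_prop) (fun t => Or.inl (hd t)))) d⁻¹ (by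
      intro t
      beta_reduce
      rw [Complex.exp_sub, he, Complex.exp_log (hd0 t)]
      have h1 := hd0 t
      rw [mul_ne_zero_iff] at h1
      field_simp [h1.1, h1.2]) b a
  linear_combination h

lemma log_I_mul (z : ℂ) (hz : 0 < z.re) :
    Complex.log (Complex.I * z) = Complex.log z + Real.pi / 2 * Complex.I := by
  have hz0 : z ≠ 0 := fun h => by rw [h] at hz; simp at hz
  have := Complex.abs_arg_lt_pi_div_two_iff.mpr (Or.inl hz)
  rw [abs_lt] at this
  rw [Complex.log_mul Complex.I_ne_zero hz0, Complex.log_I, add_comm]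
  rw [Complex.arg_I]
  constructor <;> linarith [this.1, this.2, Real.pi_pos]

lemma log_neg_I_mul (z : ℂ) (hz : 0 < z.re) :
    Complex.log (-Complex.I * z) = Complex.log z - Real.pi / 2 * Complex.I := by
  have hz0 : z ≠ 0 := fun h => by rw [h] at hz; simp at hz
  have := Complex.abs_arg_lt_pi_div_two_iff.mpr (Or.inl hz)
  rw [abs_lt] at this
  rw [Complex.log_mul (neg_ne_zero.mpr Complex.I_ne_zero) hz0, Complex.log_neg_I]
  · ring
  rw [Complex.arg_neg_I]
  constructor <;> linarith [this.1, this.2, Real.pi_pos]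

lemma shift_iter (β : ℝ → Plane) (m : ℝ) (hβ : ∀ s, β (s + 1) = β s + (m, 0)) (k : ℕ) :
    β k = β 0 + (k * m, 0) ∧ β (-k) = β 0 - (k * m, 0) := by
  induction k with
  | zero => constructor <;> ext <;> simp
  | succ k ih =>
    constructor
    · push_cast
      rw [hβ, ih.1, add_assoc]
      congr 1
      ext <;> simp; ring
    · have := hβ (-(k+1 : ℕ))
      push_cast at this ⊢
      rw [show -((k:ℝ) + 1) + 1 = -k by ring, ih.2] at this
      rw [← sub_eq_iff_eq_add.mpr this, sub_sub]
      congr 1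
      ext <;> simp; ring

lemma crossing_pos (β : ℝ → Plane) (hβc : Continuous β) (m : ℝ) (hm : 0 < m)
    (hβ : ∀ s, β (s + 1) = β s + (m, 0)) (α : ℝ → Plane) (hα : Continuous α) (M : ℝ)
    (hM : ∀ u, |(α u).1| ≤ M) (h0 : ∀ s, (α 0).2 < (β s).2) (h1 : ∀ s, (β s).2 < (α 1).2) :
    ∃ u s, α u = β s := by
  by_contra hcon
  push Not at hcon
  have hg0 : ∀ q : ℝ × ℝ, toC (α q.1 - β q.2) ≠ 0 := by
    intro q h
    rw [toC_eq_zero, sub_eq_zero] at h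
    exact hcon _ _ h
  have hgc : Continuous (fun q : ℝ × ℝ => toC (α q.1 - β q.2)) := toC_cont.comp (by fun_prop)
  obtain ⟨θ, hθ, he⟩ := exists_log _ hgc hg0
  obtain ⟨k, hk⟩ := exists_nat_gt ((M + |(β 0).1|) / m)
  rw [div_lt_iff₀ hm] at hk
  obtain ⟨s1, s2⟩ := shift_iter β m hβ k
  have ab := abs_le.mp (le_refl |(β 0).1|)
  have left : ∀ u, 0 < (-1 * toC (α u - β k)).re := by
    intro u
    have := abs_le.mp (hM u)
    rw [s1]; simp [toC]; linarith [this.1, this.2]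
  have right : ∀ u, 0 < (1 * toC (α u - β (-k))).re := by
    intro u
    have := abs_le.mp (hM u)
    rw [s2]; simp [toC]; linarith [this.1, this.2]
  have low : ∀ s, 0 < (Complex.I * toC (α 0 - β s)).re := by
    intro s; simp [toC]; exact h0 s
  have up : ∀ s, 0 < (-Complex.I * toC (α 1 - β s)).re := by
    intro s; simp [toC]; exact h1 s
  have e1 := edge_log (fun s => toC (α 0 - β s)) (fun s => θ (0, s))
    (toC_cont.comp (by fun_prop)) (by fun_prop) (fun s => he (0, s)) _ low (-k) k
  have e2 := edge_log (fun u => toC (α u - β k)) (fun u => θ (u, k))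
    (toC_cont.comp (by fun_prop)) (by fun_prop) (fun u => he (u, k)) _ left 0 1
  have e3 := edge_log (fun s => toC (α 1 - β s)) (fun s => θ (1, s))
    (toC_cont.comp (by fun_prop)) (by fun_prop) (fun s => he (1, s)) _ up k (-k)
  have e4 := edge_log (fun u => toC (α u - β (-k))) (fun u => θ (u, -k))
    (toC_cont.comp (by fun_prop)) (by fun_prop) (fun u => he (u, -k)) _ right 1 0
  have l1 := log_neg_I_mul _ (left 0)
  have l2 := log_I_mul _ (left 1)
  have l3 := log_neg_I_mul _ (right 1)
  have l4 := log_I_mul _ (right 0)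
  simp only [neg_mul, one_mul, mul_neg, neg_neg] at *
  have : (2 * Real.pi * Complex.I : ℂ) = 0 := by
    linear_combination e1 + e2 + e3 + e4 + l1 - l2 + l3 - l4
  exact Complex.two_pi_I_ne_zero this

lemma crossing (β : ℝ → Plane) (hβc : Continuous β) (m : ℝ) (hm : m ≠ 0)
    (hβ : ∀ s, β (s + 1) = β s + (m, 0)) {S : Set Plane} {a b : Plane} (hj : JoinedIn S a b)
    (h0 : ∀ s, a.2 < (β s).2) (h1 : ∀ s, (β s).2 < b.2) :
    ∃ s, β s ∈ S := by
  obtain ⟨γ, hγ⟩ := hj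
  obtain ⟨M, hM⟩ : ∃ M : ℝ, ∀ u, |(γ.extend u).1| ≤ M := by
    have hcomp : IsCompact (range γ.extend) := by
      rw [Path.extend_range]; exact isCompact_range γ.continuous
    obtain ⟨M, hM⟩ := (hcomp.image (f := fun p : Plane => |p.1|) (by fun_prop)).bddAbove
    exact ⟨M, fun u => hM ⟨_, mem_range_self u, rfl⟩⟩
  have hr : ∀ u, γ.extend u ∈ S := by
    intro u
    have : γ.extend u ∈ range γ := by rw [← Path.extend_range]; exact mem_range_self u
    obtain ⟨t, ht⟩ := this
    rw [← ht]; exact hγ t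
  rcases lt_or_gt_of_ne hm with hm | hm
  · obtain ⟨u, s, h⟩ := crossing_pos (fun s => β (-s)) (by fun_prop) (-m) (by linarith) (fun s => by
      have := hβ (-(s+1))
      rw [show -(s+1) + 1 = -s by ring] at this
      rw [this, add_assoc]; simp) γ.extend γ.continuous_extend M hM
      (fun s => by simpa using h0 (-s)) (fun s => by simpa using h1 (-s))
    exact ⟨-s, h ▸ hr u⟩
  · obtain ⟨u, s, h⟩ := crossing_pos β hβc m hm hβ γ.extend γ.continuous_extend M hM
      (fun s => by simpa using h0 s) (fun s => by simpa using h1 s)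
    exact ⟨s, h ▸ hr u⟩


lemma coe_eq_iff (x y : ℝ) : ((x : AddCircle (1:ℝ)) = y) ↔ ∃ k : ℤ, x = y + k := by
  rw [← sub_eq_zero, ← AddCircle.coe_sub, AddCircle.coe_eq_zero_iff]
  constructor
  · rintro ⟨n, hn⟩; exact ⟨n, by simp at hn; linarith⟩
  · rintro ⟨n, hn⟩; exact ⟨n, by simp; linarith⟩

lemma prj_eq_iff (x y : Plane) : prj x = prj y ↔ ∃ k : ℤ, x = Tr k y := by
  unfold prj Tr
  rw [Prod.ext_iff]
  simp only
  rw [coe_eq_iff]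
  constructor
  · rintro ⟨⟨k, hk⟩, h⟩; exact ⟨k, Prod.ext hk h⟩
  · rintro ⟨k, h⟩
    rw [Prod.ext_iff] at h
    exact ⟨⟨k, h.1⟩, h.2⟩

lemma prj_cont : Continuous prj := by
  unfold prj
  exact ((AddCircle.continuous_mk' (1:ℝ)).comp continuous_fst).prodMk continuous_snd

lemma lift_circle {E : Type*} [TopologicalSpace E] [SimplyConnectedSpace E]
    [LocallyPathConnectedSpace E] (g : E → AddCircle (1:ℝ)) (hg : Continuous g) (a : E) (e : ℝ)
    (he : (e : AddCircle (1:ℝ)) = g a) :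
    ∃ L : E → ℝ, Continuous L ∧ L a = e ∧ ∀ x, (L x : AddCircle (1:ℝ)) = g x := by
  rcases (AddCircle.isCoveringMap_coe (1:ℝ)).existsUnique_continuousMap_lifts ⟨g, hg⟩ a e he
    with ⟨f, ⟨h1, h2⟩, -⟩
  exact ⟨f, f.continuous, h1, fun x => congrFun h2 x⟩

lemma essential_of_lift (γ : ℝ → Plane) (hγ : Continuous γ) (d : ℤ) (hd : d ≠ 0)
    (hper : ∀ s, γ (s + 1) = Tr d (γ s))
    (hinj : ∀ s t, prj (γ s) = prj (γ t) → ∃ k : ℤ, s = t + k) :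
    IsEssentialCircle (range (fun s => prj (γ s))) := by
  have hP : Function.Periodic (fun s => prj (γ s)) 1 := by
    intro s
    rw [prj_eq_iff]; exact ⟨d, hper s⟩
  have hcont : Continuous (hP.lift : AddCircle (1:ℝ) → Ann) :=
    continuous_quot_lift _ (prj_cont.comp hγ)
  have hlift : ∀ s : ℝ, hP.lift (s : AddCircle (1:ℝ)) = prj (γ s) := fun s => hP.lift_coe s
  refine ⟨⟨hP.lift, hcont⟩, ?_, ?_, ?_⟩
  · intro a b hab
    obtain ⟨s, rfl⟩ := QuotientAddGroup.mk_surjective a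
    obtain ⟨t, rfl⟩ := QuotientAddGroup.mk_surjective b
    have hab' : hP.lift (s : AddCircle (1:ℝ)) = hP.lift (t : AddCircle (1:ℝ)) := hab
    rw [hlift, hlift] at hab'
    exact (coe_eq_iff s t).mpr (hinj s t hab')
  · ext x
    constructor
    · rintro ⟨a, rfl⟩
      obtain ⟨s, rfl⟩ := QuotientAddGroup.mk_surjective a
      exact ⟨s, (hlift s).symm⟩
    · rintro ⟨s, rfl⟩
      exact ⟨(s : AddCircle (1:ℝ)), hlift s⟩
  · rintro ⟨pt, ⟨H⟩⟩
    let K : ℝ × ℝ → AddCircle (1:ℝ) := fun q =>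
      (H (projIcc (0:ℝ) 1 zero_le_one q.1, (q.2 : AddCircle (1:ℝ)))).1
    have hK : Continuous K := by
      refine continuous_fst.comp (H.continuous.comp ?_)
      exact (continuous_projIcc.comp continuous_fst).prodMk
        ((AddCircle.continuous_mk' (1:ℝ)).comp continuous_snd)
    obtain ⟨e, he⟩ := QuotientAddGroup.mk_surjective (K (0,0))
    obtain ⟨L, hL, -, hLK⟩ := lift_circle K hK (0,0) e he
    have c1 := int_valued_const (fun q : ℝ × ℝ => L (q.1, q.2 + 1) - L q) (by fun_prop) (by
      intro q
      have : (L (q.1, q.2 + 1) : AddCircle (1:ℝ)) = L q := by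
        rw [hLK, hLK]; simp [K]
      obtain ⟨k, hk⟩ := (coe_eq_iff _ _).mp this
      exact ⟨k, by rw [hk]; ring⟩) (0,0) (1,0)
    have c2 := int_valued_const (fun s : ℝ => L (1, s) - L (1, 0)) (by fun_prop) (by
      intro s
      have : (L (1, s) : AddCircle (1:ℝ)) = L (1, 0) := by
        rw [hLK, hLK]; simp [K]
      obtain ⟨k, hk⟩ := (coe_eq_iff _ _).mp this
      exact ⟨k, by rw [hk]; ring⟩) 1 0
    have c3 := int_valued_const (fun s : ℝ => L (0, s) - (γ s).1) (by fun_prop) (by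
      intro s
      have : (L (0, s) : AddCircle (1:ℝ)) = ((γ s).1 : AddCircle (1:ℝ)) := by
        rw [hLK]
        simp only [K, projIcc_left]
        have := H.apply_zero (s : AddCircle (1:ℝ))
        have h3 : H (⟨0, by simp⟩, (s : AddCircle (1:ℝ))) = prj (γ s) := this.trans (hlift s)
        rw [h3]; rfl
      obtain ⟨k, hk⟩ := (coe_eq_iff _ _).mp this
      exact ⟨k, by rw [hk]; ring⟩) 1 0
    have h4 := hper 0
    simp only [zero_add] at *
    rw [h4] at c3
    simp only [Tr] at c3
    have : (d : ℝ) = 0 := by linarith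
    exact hd (by exact_mod_cast this)

lemma glue_cont {X : Type*} [TopologicalSpace X] (σ : ℤ → ℝ → X) (hσ : ∀ k, Continuous (σ k))
    (hm : ∀ k, σ k 1 = σ (k+1) 0) : Continuous (fun s : ℝ => σ ⌊s⌋ (Int.fract s)) := by
  have lf : LocallyFinite (fun k : ℤ => Icc (k : ℝ) (k + 1)) := by
    intro x
    refine ⟨Ioo (x - 1) (x + 1), Ioo_mem_nhds (by linarith) (by linarith), ?_⟩
    refine (Set.finite_Icc (⌊x⌋ - 3) (⌊x⌋ + 3)).subset ?_
    rintro k ⟨y, ⟨h1, h2⟩, h3, h4⟩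
    have h5 := Int.floor_le x
    have h6 := Int.lt_floor_add_one x
    constructor
    · have : ((⌊x⌋ - 3 : ℤ) : ℝ) ≤ k := by push_cast; linarith
      exact_mod_cast this
    · have : (k : ℝ) ≤ ((⌊x⌋ + 3 : ℤ) : ℝ) := by push_cast; linarith
      exact_mod_cast this
  refine lf.continuous ?_ (fun k => isClosed_Icc) ?_
  · rw [iUnion_eq_univ_iff]
    intro x
    exact ⟨⌊x⌋, Int.floor_le x, (Int.lt_floor_add_one x).le⟩
  · intro k
    have : EqOn (fun s : ℝ => σ ⌊s⌋ (Int.fract s)) (fun s => σ k (s - k)) (Icc (k:ℝ) (k+1)) := by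
      intro s hs
      rcases eq_or_lt_of_le hs.2 with h | h
      · subst h
        have : ⌊(k:ℝ) + 1⌋ = k + 1 := by
          have : (k:ℝ) + 1 = ((k + 1 : ℤ) : ℝ) := by push_cast; ring
          rw [this, Int.floor_intCast]
        simp only [Int.fract, this]
        simp [hm]
      · have : ⌊s⌋ = k := Int.floor_eq_iff.mpr ⟨hs.1, h⟩
        simp only [Int.fract, this]
    refine ContinuousOn.congr ?_ this
    exact ((hσ k).comp (by fun_prop)).continuousOn


/-- boundary adjacency of lattice points -/
def BAdj (S : ℤ → ℤ → Prop) (u v : ℤ × ℤ) : Prop :=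
  (v = (u.1 + 1, u.2) ∧ ¬ (S u.1 (u.2 - 1) ↔ S u.1 u.2)) ∨
  (u = (v.1 + 1, v.2) ∧ ¬ (S v.1 (v.2 - 1) ↔ S v.1 v.2)) ∨
  (v = (u.1, u.2 + 1) ∧ ¬ (S (u.1 - 1) u.2 ↔ S u.1 u.2)) ∨
  (u = (v.1, v.2 + 1) ∧ ¬ (S (v.1 - 1) v.2 ↔ S v.1 v.2))

lemma BAdj.symm {S : ℤ → ℤ → Prop} {u v : ℤ × ℤ} (h : BAdj S u v) : BAdj S v u := by
  unfold BAdj at *; tauto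

/-- horizontal translation in the lattice -/
def vtr (a : ℤ) (u : ℤ × ℤ) : ℤ × ℤ := (u.1 + a, u.2)

lemma vtr_vtr (a b : ℤ) (u : ℤ × ℤ) : vtr a (vtr b u) = vtr (a + b) u := by
  unfold vtr; ext <;> simp; ring

lemma vtr_zero (u : ℤ × ℤ) : vtr 0 u = u := by unfold vtr; ext <;> simp

lemma per_mul {S : ℤ → ℤ → Prop} {n : ℤ} (hS : ∀ i j, S (i + n) j ↔ S i j) (k : ℤ) :
    ∀ i j, S (i + k * n) j ↔ S i j := by
  induction k using Int.induction_on with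
  | zero => intro i j; simp
  | succ k ih => 
    intro i j
    rw [show i + ((k:ℤ) + 1) * n = (i + k * n) + n by ring, hS, ih]
  | pred k ih =>
    intro i j
    rw [← hS, show i + (-(k:ℤ) - 1) * n + n = i + -k * n by ring, ih]

lemma BAdj.tr {S : ℤ → ℤ → Prop} {n : ℤ} (hS : ∀ i j, S (i + n) j ↔ S i j) (k : ℤ)
    {u v : ℤ × ℤ} (h : BAdj S u v) : BAdj S (vtr (k*n) u) (vtr (k*n) v) := by
  have h1 := per_mul hS k
  have h2 : ∀ i j, S (i + k * n - 1) j ↔ S (i - 1) j := by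
    intro i j; rw [show i + k * n - 1 = i - 1 + k * n by ring, h1]
  unfold BAdj vtr at *
  simp only [h1, h2]
  rcases h with ⟨rfl, h⟩ | ⟨rfl, h⟩ | ⟨rfl, h⟩ | ⟨rfl, h⟩
  · left; exact ⟨by ext <;> simp; ring, h⟩
  · right; left; exact ⟨by ext <;> simp; ring, h⟩
  · right; right; left; exact ⟨by ext <;> simp, h⟩
  · right; right; right; exact ⟨by ext <;> simp, h⟩

lemma sum_shift (n : ℕ) (h : ℤ → ℤ) (hh : h n = h 0) :
    ∑ x ∈ Finset.range n, h ((x:ℤ) + 1) = ∑ x ∈ Finset.range n, h x := by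
  have a := Finset.sum_range_succ (fun x : ℕ => h x) n
  have b := Finset.sum_range_succ' (fun x : ℕ => h x) n
  push_cast at a b
  rw [hh] at a
  linarith

lemma ess_walk (n : ℕ) (hn : 0 < n) (S : ℤ → ℤ → Prop) (hS : ∀ i j, S (i + n) j ↔ S i j)
    (J0 J1 : ℤ) (h0 : ∀ i j, j < J0 → S i j) (h1 : ∀ i j, J1 ≤ j → ¬ S i j) :
    ∃ u, ∃ d : ℤ, d ≠ 0 ∧ Relation.ReflTransGen (BAdj S) u (vtr (d * n) u) := by
  classical
  by_contra hcon
  push Not at hcon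
  set Conn := Relation.ReflTransGen (BAdj S) with hConn
  have csymm : ∀ u v, Conn u v → Conn v u := by
    intro u v h
    induction h with
    | refl => exact Relation.ReflTransGen.refl
    | tail _ h ih => exact Relation.ReflTransGen.head h.symm ih
  have ctr : ∀ (k : ℤ) u v, Conn u v → Conn (vtr (k*n) u) (vtr (k*n) v) := by
    intro k u v h
    induction h with
    | refl => exact Relation.ReflTransGen.refl
    | tail _ h ih => exact Relation.ReflTransGen.tail ih (h.tr hS k)
  have huniq : ∀ u r, ∀ k k' : ℤ, Conn u (vtr (k*n) r) → Conn u (vtr (k'*n) r) → k = k' := by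
    intro u r k k' h h'
    by_contra hne
    have := (csymm _ _ h).trans h'
    apply hcon (vtr (k*n) r) (k' - k) (fun h => hne (by linarith))
    rw [vtr_vtr, show (k' - k) * (n:ℤ) + k * n = k' * n by ring]
    exact this
  let st : Setoid (ℤ × ℤ) :=
    { r := fun u v => ∃ k : ℤ, Conn u (vtr (k*n) v)
      iseqv := by
        refine ⟨fun u => ⟨0, ?_⟩, ?_, ?_⟩
        · rw [zero_mul, vtr_zero]
        · rintro u v ⟨k, h⟩
          refine ⟨-k, ?_⟩
          have := ctr (-k) _ _ h
          rw [vtr_vtr, show -k * (n:ℤ) + k * n = 0 by ring, vtr_zero] at this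
          exact csymm _ _ this
        · rintro u v w ⟨k, h⟩ ⟨k', h'⟩
          refine ⟨k + k', h.trans ?_⟩
          have := ctr k _ _ h'
          rwa [vtr_vtr, ← add_mul] at this }
  have hrep : ∀ u, ∃ k : ℤ, Conn u (vtr (k*n) (Quotient.out (Quotient.mk st u))) := by
    intro u
    exact st.symm (Quotient.mk_out (s := st) u)
  choose g hg using hrep
  have gconst : ∀ u v, Conn u v → g u = g v := by
    intro u v h
    have e : Quotient.mk st u = Quotient.mk st v := Quotient.sound (s := st) ⟨0, by
      rw [zero_mul, vtr_zero]; exact h⟩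
    have a := hg u
    rw [e] at a
    exact huniq _ _ _ _ a (h.trans (hg v))
  have gtr : ∀ u, g (vtr n u) = g u + 1 := by
    intro u
    have e : Quotient.mk st (vtr n u) = Quotient.mk st u := Quotient.sound (s := st) ⟨1, by
      rw [one_mul]⟩
    have a := hg (vtr n u)
    rw [e] at a
    have b := ctr 1 _ _ (hg u)
    rw [vtr_vtr, one_mul, show (n:ℤ) + g u * n = (g u + 1) * n by ring] at b
    exact huniq _ _ _ _ a b
  let X : ℤ → ℤ → ℤ := fun x y => x - n * g (x, y)
  have Xper : ∀ x y, X (x + n) y = X x y := by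
    intro x y
    have := gtr (x, y)
    simp only [vtr] at this
    simp only [X, this]; ring
  let s : ℤ → ℤ → ℤ := fun x y => if S x y then 1 else 0
  have sper : ∀ x y, s (x + n) y = s x y := by
    intro x y; simp only [s, hS]
  have eX : ∀ x y, (s x (y-1) - s x y) * (X (x+1) y - X x y) = s x (y-1) - s x y := by
    intro x y
    by_cases h : (S x (y-1) ↔ S x y)
    · have : s x (y-1) = s x y := by simp only [s, h]
      rw [this]; simp
    · have : g (x, y) = g (x+1, y) := gconst _ _ (Relation.ReflTransGen.single (Or.inl ⟨rfl, h⟩))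
      simp only [X, this]; ring
  have nX : ∀ x y, (s (x-1) y - s x y) * (X x (y+1) - X x y) = 0 := by
    intro x y
    by_cases h : (S (x-1) y ↔ S x y)
    · have : s (x-1) y = s x y := by simp only [s, h]
      rw [this]; simp
    · have : g (x, y) = g (x, y+1) := gconst _ _
        (Relation.ReflTransGen.single (Or.inr (Or.inr (Or.inl ⟨rfl, h⟩))))
      simp only [X, this]; ring
  let Q : ℤ → ℤ := fun y => ∑ x ∈ Finset.range n, s x y * (X (x+1) y - X x y)
  let P : ℤ → ℤ := fun y => ∑ x ∈ Finset.range n, s x y * (X (x+1) (y+1) - X x (y+1))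
  let A : ℤ → ℤ := fun y => ∑ x ∈ Finset.range n, s x y
  have PQ : ∀ y, P y = Q y := by
    intro y
    have hsh := sum_shift n (fun x => s (x-1) y * (X x (y+1) - X x y)) (by
      have a := sper (0-1) y
      have b := Xper 0 (y+1)
      have c := Xper 0 y
      rw [zero_add] at b c
      rw [show (0:ℤ) - 1 + n = n - 1 by ring] at a
      simp only [a, b, c])
    have h2 : ∑ x ∈ Finset.range n, (s ((x:ℤ)-1) y * (X x (y+1) - X x y) - s x y * (X x (y+1) - X x y)) = 0 := by
      apply Finset.sum_eq_zero
      intro x _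
      rw [← sub_mul]; exact nX x y
    rw [Finset.sum_sub_distrib, ← hsh, ← Finset.sum_sub_distrib] at h2
    have : P y - Q y = 0 := by
      rw [← h2]
      simp only [P, Q]
      rw [← Finset.sum_sub_distrib]
      apply Finset.sum_congr rfl
      intro x _
      rw [show (x:ℤ) + 1 - 1 = x by ring]
      ring
    linarith
  have step : ∀ y, Q (y-1) - A (y-1) = Q y - A y := by
    intro y
    rw [← PQ (y-1)]
    have : P (y-1) - Q y = A (y-1) - A y := by
      simp only [P, Q, A]
      rw [← Finset.sum_sub_distrib, ← Finset.sum_sub_distrib]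
      apply Finset.sum_congr rfl
      intro x _
      rw [show y - 1 + 1 = y by ring, ← eX x y]; ring
    linarith
  have const : ∀ k : ℕ, Q (J0 - 1 + k) - A (J0 - 1 + k) = Q (J0 - 1) - A (J0 - 1) := by
    intro k
    induction k with
    | zero => simp
    | succ k ih =>
      rw [← ih]
      have := step (J0 - 1 + (k+1 : ℕ))
      rw [← this]
      push_cast
      rw [show J0 - 1 + ((k:ℤ) + 1) - 1 = J0 - 1 + k by ring]
  have hbotQ : Q (J0 - 1) = 0 := by
    have : ∀ x, s x (J0 - 1) = 1 := fun x => if_pos (h0 _ _ (by linarith))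
    simp only [Q, this, one_mul, Finset.sum_sub_distrib]
    rw [sum_shift n (fun x => X x (J0-1)) (by simpa using Xper 0 (J0-1)), sub_self]
  have hbotA : A (J0 - 1) = n := by
    have : ∀ x, s x (J0 - 1) = 1 := fun x => if_pos (h0 _ _ (by linarith))
    simp [A, this]
  have htop := const (J1 - J0 + 1).toNat
  have hge : J1 ≤ J0 - 1 + ((J1 - J0 + 1).toNat : ℤ) := by
    have := Int.self_le_toNat (J1 - J0 + 1); linarith
  have hz : ∀ x, s x (J0 - 1 + ((J1 - J0 + 1).toNat : ℤ)) = 0 := fun x => if_neg (h1 _ _ hge)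
  rw [hbotQ, hbotA] at htop
  simp only [Q, A, hz, zero_mul, Finset.sum_const_zero] at htop
  have : (n:ℤ) = 0 := by linarith
  omega


/-- extended essential boundary walk of length m -/
def EW (S : ℤ → ℤ → Prop) (n m : ℕ) : Prop :=
  1 ≤ m ∧ ∃ U : ℤ → ℤ × ℤ, ∃ d : ℤ, d ≠ 0 ∧ (∀ k, U (k + m) = vtr (d * n) (U k)) ∧
    ∀ k, BAdj S (U k) (U (k+1))

lemma ew_of_seg {S : ℤ → ℤ → Prop} {n : ℕ} (hS : ∀ i j, S (i + n) j ↔ S i j) {m : ℕ} (hm : 1 ≤ m)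
    (u : ℕ → ℤ × ℤ) (d : ℤ) (hd : d ≠ 0) (hu : ∀ k < m, BAdj S (u k) (u (k+1)))
    (hend : u m = vtr (d * n) (u 0)) : EW S n m := by
  refine ⟨hm, fun k => vtr ((k / m * d) * n) (u (k % m).toNat), d, hd, ?_, ?_⟩
  · intro k
    have hm0 : (m:ℤ) ≠ 0 := by omega
    simp only [Int.add_emod_right, vtr_vtr]
    rw [show (k + (m:ℤ)) / m = k / m + 1 by
      have := Int.add_mul_ediv_right k 1 hm0; rwa [one_mul] at this]
    congr 1; ring
  · intro k
    have hmpos : (0:ℤ) < m := by omega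
    have h1 := Int.emod_nonneg k hmpos.ne'
    have h2 := Int.emod_lt_of_pos k hmpos
    have h3 := Int.mul_ediv_add_emod k m
    obtain ⟨r, hr⟩ : ∃ r : ℕ, k % m = r := ⟨(k % m).toNat, by omega⟩
    have hrm : r < m := by omega
    have hk : k = m * (k / m) + r := by omega
    by_cases hlast : r + 1 = m
    · have e1 : (k+1) / m = k / m + 1 := by
        rw [show k + 1 = (k/m + 1) * m by rw [add_mul, one_mul]; push_cast [← hlast] at *; linarith]
        exact Int.mul_ediv_cancel _ hmpos.ne'
      have e2 : (k+1) % m = 0 := by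
        rw [show k + 1 = (k/m + 1) * m by rw [add_mul, one_mul]; push_cast [← hlast] at *; linarith]
        exact Int.mul_emod_left _ _
      simp only [hr, e1, e2, Int.toNat_natCast, Int.toNat_zero]
      have := (hu r hrm).tr hS (k / m * d)
      rw [hlast, hend, vtr_vtr] at this
      rw [show (k / (m:ℤ) + 1) * d * n = k / m * d * n + d * n by ring]
      exact this
    · have hh : k + 1 = (r + 1 : ℤ) + m * (k / m) := by linarith
      have e1 : (k+1) / m = k / m := by
        rw [hh, Int.add_mul_ediv_left _ _ hmpos.ne', Int.ediv_eq_zero_of_lt (by omega) (by omega), zero_add]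
      have e2 : (k+1) % m = r + 1 := by
        rw [hh, Int.add_mul_emod_self_left, Int.emod_eq_of_lt (by omega) (by omega)]
      simp only [hr, e1, e2, Int.toNat_natCast]
      rw [show ((r:ℤ) + 1).toNat = r + 1 by omega]
      exact (hu r hrm).tr hS (k / m * d)

lemma walk_of_rtg {S : ℤ → ℤ → Prop} {a b : ℤ × ℤ} (h : Relation.ReflTransGen (BAdj S) a b) :
    ∃ m : ℕ, ∃ u : ℕ → ℤ × ℤ, u 0 = a ∧ u m = b ∧ ∀ k < m, BAdj S (u k) (u (k+1)) := by
  induction h with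
  | refl => exact ⟨0, fun _ => a, rfl, rfl, fun k hk => absurd hk (by omega)⟩
  | tail _ h ih =>
    rename_i b0 c _
    obtain ⟨n, s, h0, h1, h2⟩ := ih
    refine ⟨n+1, fun k => if k ≤ n then s k else c, by simpa using h0, by simp, fun k hk => ?_⟩
    rcases Nat.lt_or_ge k n with h' | h'
    · simp only [show k ≤ n by omega, show k + 1 ≤ n by omega, if_true]
      exact h2 k (by omega)
    · obtain rfl : k = n := by omega
      simp [h1, h]

lemma BAdj.step {S : ℤ → ℤ → Prop} {u v : ℤ × ℤ} (h : BAdj S u v) :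
    (v.1 = u.1 + 1 ∧ v.2 = u.2) ∨ (v.1 = u.1 - 1 ∧ v.2 = u.2) ∨ (v.1 = u.1 ∧ v.2 = u.2 + 1) ∨
    (v.1 = u.1 ∧ v.2 = u.2 - 1) := by
  rcases h with ⟨rfl, h⟩ | ⟨rfl, h⟩ | ⟨rfl, h⟩ | ⟨rfl, h⟩ <;> simp

lemma min_walk (n : ℕ) (hn : 3 ≤ n) (S : ℤ → ℤ → Prop) (hS : ∀ i j, S (i + n) j ↔ S i j)
    (J0 J1 : ℤ) (h0 : ∀ i j, j < J0 → S i j) (h1 : ∀ i j, J1 ≤ j → ¬ S i j) :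
    ∃ m : ℕ, 3 ≤ m ∧ ∃ U : ℤ → ℤ × ℤ, ∃ d : ℤ, d ≠ 0 ∧ (∀ k, U (k + m) = vtr (d * n) (U k)) ∧
      (∀ k, BAdj S (U k) (U (k+1))) ∧
      ∀ a b k : ℤ, U a = vtr (k * n) (U b) → ∃ l : ℤ, a = b + l * m := by
  classical
  have hex : ∃ m, EW S n m := by
    obtain ⟨u0, d, hd, hw⟩ := ess_walk n (by omega) S hS J0 J1 h0 h1
    obtain ⟨m, u, e0, e1, e2⟩ := walk_of_rtg hw
    have hm : 1 ≤ m := by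
      by_contra hm
      obtain rfl : m = 0 := by omega
      rw [e0] at e1
      have := congrArg Prod.fst e1
      simp only [vtr] at this
      have h3 : d * (n:ℤ) = 0 := by linarith
      rcases mul_eq_zero.mp h3 with h | h
      · exact hd h
      · omega
    exact ⟨m, ew_of_seg hS hm u d hd e2 (by rw [e1, e0])⟩
  set m := Nat.find hex with hmdef
  obtain ⟨hm1, U, d, hd, hper, hadj⟩ := Nat.find_spec hex
  rw [← hmdef] at hm1 hper
  have hmin : ∀ e : ℕ, 1 ≤ e → ∀ a k : ℤ, k ≠ 0 → U (a + e) = vtr (k * n) (U a) → m ≤ e := by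
    intro e he a k hk h
    apply Nat.find_min' hex
    refine ew_of_seg hS he (fun i => U (a + i)) k hk (fun i _ => ?_) (by simpa using h)
    have := hadj (a + i)
    push_cast
    rwa [← add_assoc]
  have hperl : ∀ l k : ℤ, U (k + l * m) = vtr (l * d * n) (U k) := by
    intro l
    induction l using Int.induction_on with
    | zero => intro k; simp [vtr_zero]
    | succ l ih =>
      intro k
      rw [show k + ((l:ℤ) + 1) * m = (k + l * m) + m by ring, hper, ih, vtr_vtr]
      congr 1; ring
    | pred l ih =>
      intro k
      have := hper (k + (-(l:ℤ) - 1) * m)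
      rw [show k + (-(l:ℤ) - 1) * m + m = k + (-l) * m by ring, ih] at this
      have h2 := congrArg (vtr (-(d * n))) this
      rw [vtr_vtr, vtr_vtr, neg_add_cancel, vtr_zero] at h2
      rw [← h2]
      congr 1; ring
  have hmz : (m:ℤ) ≠ 0 := by omega
  refine ⟨m, ?_, U, d, hd, hper, hadj, ?_⟩
  · have hlip : ∀ k : ℕ, |(U k).1 - (U 0).1| ≤ k := by
      intro k
      induction k with
      | zero => simp
      | succ k ih =>
        have := (hadj k).step
        push_cast
        rw [abs_le] at *
        omega
    have h2 := hlip m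
    have h3 := hper 0
    rw [zero_add] at h3
    rw [h3] at h2
    simp only [vtr, add_sub_cancel_left] at h2
    rw [abs_mul] at h2
    have h4 : (1:ℤ) ≤ |d| := Int.one_le_abs hd
    have h5 : |(n:ℤ)| = n := abs_of_nonneg (by omega)
    rw [h5] at h2
    have : (3:ℤ) ≤ m := by nlinarith
    omega
  · intro a b k hab
    -- b' = b + l m with a < ... 
    set e := (b - a) % m with he
    have e0 := Int.emod_nonneg (b - a) hmz
    have e1 := Int.emod_lt_of_pos (b - a) (show (0:ℤ) < m by omega)
    have e2 := Int.mul_ediv_add_emod (b - a) m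
    set l := (b - a) / m with hl
    rw [← he] at e0 e1 e2
    by_cases hz : e = 0
    · exact ⟨-l, by rw [hz] at e2; linarith⟩
    · exfalso
      obtain ⟨e', he'⟩ : ∃ e' : ℕ, e = e' := ⟨e.toNat, by omega⟩
      have hb : U (a + e') = vtr ((-l * d - k) * n) (U a) := by
        rw [hab, vtr_vtr, show (a + (e':ℤ)) = b + (-l) * m by rw [← he']; linarith, hperl]
        congr 1; ring
      by_cases hk : -l * d - k = 0
      · rw [hk, zero_mul, vtr_zero] at hb
        have h6 := hper a
        rw [← hb] at h6
        have := hmin (m - e') (by omega) (a + e') d hd (by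
          rw [← h6]; congr 1
          have : ((m - e' : ℕ) : ℤ) = m - e' := by omega
          rw [this]; ring)
        omega
      · have := hmin e' (by omega) a _ hk hb
        omega

/-- closed grid cell -/
def cell (n : ℕ) (i j : ℤ) : Set Plane :=
  {x | (i:ℝ) ≤ n * x.1 ∧ n * x.1 ≤ i + 1 ∧ (j:ℝ) ≤ n * x.2 ∧ n * x.2 ≤ j + 1}

lemma int_zero_of_lt {k : ℤ} (h1 : (-1:ℝ) < k) (h2 : (k:ℝ) < 1) : k = 0 := by
  have a : (-1:ℤ) < k := by exact_mod_cast h1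
  have b : k < (1:ℤ) := by exact_mod_cast h2
  omega

lemma edge_inj (A A' B B' : ℤ × ℤ) (σ τ : ℝ) (hσ0 : 0 ≤ σ) (hσ1 : σ < 1) (hτ0 : 0 ≤ τ) (hτ1 : τ < 1)
    (hA : (A'.1 = A.1 + 1 ∧ A'.2 = A.2) ∨ (A'.1 = A.1 - 1 ∧ A'.2 = A.2) ∨
      (A'.1 = A.1 ∧ A'.2 = A.2 + 1) ∨ (A'.1 = A.1 ∧ A'.2 = A.2 - 1))
    (hB : (B'.1 = B.1 + 1 ∧ B'.2 = B.2) ∨ (B'.1 = B.1 - 1 ∧ B'.2 = B.2) ∨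
      (B'.1 = B.1 ∧ B'.2 = B.2 + 1) ∨ (B'.1 = B.1 ∧ B'.2 = B.2 - 1))
    (h1 : (A.1:ℝ) + σ * (A'.1 - A.1) = B.1 + τ * (B'.1 - B.1))
    (h2 : (A.2:ℝ) + σ * (A'.2 - A.2) = B.2 + τ * (B'.2 - B.2)) :
    (A = B ∧ σ = τ) ∨ (A = B' ∧ A' = B) := by
  obtain ⟨a1, a2⟩ := A
  obtain ⟨a1', a2'⟩ := A'
  obtain ⟨b1, b2⟩ := B
  obtain ⟨b1', b2'⟩ := B'
  simp only at *
  -- generic integer facts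
  have key : ∀ a b : ℤ, ∀ ε δ : ℝ, (a:ℝ) + ε = b + δ → -1 < δ - ε → δ - ε < 1 → a = b ∧ ε = δ := by
    intro a b ε δ h h3 h4
    have : a - b = 0 := int_zero_of_lt (by push_cast; linarith) (by push_cast; linarith)
    have hab : a = b := by linarith
    subst hab
    exact ⟨rfl, by linarith⟩
  have key2 : ∀ a b : ℤ, (a:ℝ) + σ = b - τ → (a = b ∧ σ = τ) ∨ a = b - 1 := by
    intro a b h
    have h3 : -1 ≤ a - b := by
      have : (-2:ℝ) < ((a - b : ℤ):ℝ) := by push_cast; linarith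
      have : (-2:ℤ) < a - b := by exact_mod_cast this
      omega
    have h4 : a - b ≤ 0 := by
      have : ((a - b : ℤ):ℝ) ≤ 0 := by push_cast; linarith
      exact_mod_cast this
    rcases (show a = b ∨ a = b - 1 by omega) with rfl | h5
    · left; exact ⟨rfl, by linarith⟩
    · right; exact h5
  have key3 : ∀ a b : ℤ, (a:ℝ) - σ = b + τ → (a = b ∧ σ = τ) ∨ a = b + 1 := by
    intro a b h
    have h3 : a - b ≤ 1 := by
      have : ((a - b : ℤ):ℝ) < (2:ℤ) := by push_cast; linarith
      have : a - b < (2:ℤ) := by exact_mod_cast this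
      omega
    have h4 : 0 ≤ a - b := by
      have : (0:ℝ) ≤ ((a - b : ℤ):ℝ) := by push_cast; linarith
      exact_mod_cast this
    rcases (show a = b ∨ a = b + 1 by omega) with rfl | h5
    · left; exact ⟨rfl, by linarith⟩
    · right; exact h5
  rcases hA with ⟨u1, u2⟩ | ⟨u1, u2⟩ | ⟨u1, u2⟩ | ⟨u1, u2⟩ <;>
  rcases hB with ⟨v1, v2⟩ | ⟨v1, v2⟩ | ⟨v1, v2⟩ | ⟨v1, v2⟩ <;>
  (rw [u1, v1] at h1
   rw [u2, v2] at h2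
   push_cast at h1 h2)
  · obtain ⟨e3, e4⟩ := key a2 b2 0 0 (by linarith) (by linarith) (by linarith)
    obtain ⟨e1, e2⟩ := key a1 b1 σ τ (by linarith) (by linarith) (by linarith)
    left; exact ⟨by rw [e1, e3], by linarith⟩
  · obtain ⟨e3, e4⟩ := key a2 b2 0 0 (by linarith) (by linarith) (by linarith)
    rcases key2 a1 b1 (by linarith) with ⟨e1, e2⟩ | e1
    · left; exact ⟨by rw [e1, e3], by linarith⟩
    · right; simp only [Prod.mk.injEq]; omega
  · obtain ⟨e1, e2⟩ := key a1 b1 σ 0 (by linarith) (by linarith) (by linarith)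
    obtain ⟨e3, e4⟩ := key a2 b2 0 τ (by linarith) (by linarith) (by linarith)
    left; exact ⟨by rw [e1, e3], by linarith⟩
  · obtain ⟨e1, e2⟩ := key a1 b1 σ 0 (by linarith) (by linarith) (by linarith)
    obtain ⟨e3, e4⟩ := key a2 b2 0 (-τ) (by linarith) (by linarith) (by linarith)
    left; exact ⟨by rw [e1, e3], by linarith⟩
  · obtain ⟨e3, e4⟩ := key a2 b2 0 0 (by linarith) (by linarith) (by linarith)
    rcases key3 a1 b1 (by linarith) with ⟨e1, e2⟩ | e1
    · left; exact ⟨by rw [e1, e3], by linarith⟩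
    · right; simp only [Prod.mk.injEq]; omega
  · obtain ⟨e3, e4⟩ := key a2 b2 0 0 (by linarith) (by linarith) (by linarith)
    obtain ⟨e1, e2⟩ := key a1 b1 (-σ) (-τ) (by linarith) (by linarith) (by linarith)
    left; exact ⟨by rw [e1, e3], by linarith⟩
  · obtain ⟨e1, e2⟩ := key a1 b1 (-σ) 0 (by linarith) (by linarith) (by linarith)
    obtain ⟨e3, e4⟩ := key a2 b2 0 τ (by linarith) (by linarith) (by linarith)
    left; exact ⟨by rw [e1, e3], by linarith⟩
  · obtain ⟨e1, e2⟩ := key a1 b1 (-σ) 0 (by linarith) (by linarith) (by linarith)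
    obtain ⟨e3, e4⟩ := key a2 b2 0 (-τ) (by linarith) (by linarith) (by linarith)
    left; exact ⟨by rw [e1, e3], by linarith⟩
  · obtain ⟨e1, e2⟩ := key a2 b2 σ 0 (by linarith) (by linarith) (by linarith)
    obtain ⟨e3, e4⟩ := key a1 b1 0 τ (by linarith) (by linarith) (by linarith)
    left; exact ⟨by rw [e1, e3], by linarith⟩
  · obtain ⟨e1, e2⟩ := key a2 b2 σ 0 (by linarith) (by linarith) (by linarith)
    obtain ⟨e3, e4⟩ := key a1 b1 0 (-τ) (by linarith) (by linarith) (by linarith)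
    left; exact ⟨by rw [e1, e3], by linarith⟩
  · obtain ⟨e3, e4⟩ := key a1 b1 0 0 (by linarith) (by linarith) (by linarith)
    obtain ⟨e1, e2⟩ := key a2 b2 σ τ (by linarith) (by linarith) (by linarith)
    left; exact ⟨by rw [e1, e3], by linarith⟩
  · obtain ⟨e3, e4⟩ := key a1 b1 0 0 (by linarith) (by linarith) (by linarith)
    rcases key2 a2 b2 (by linarith) with ⟨e1, e2⟩ | e1
    · left; exact ⟨by rw [e1, e3], by linarith⟩
    · right; simp only [Prod.mk.injEq]; omega
  · obtain ⟨e1, e2⟩ := key a2 b2 (-σ) 0 (by linarith) (by linarith) (by linarith)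
    obtain ⟨e3, e4⟩ := key a1 b1 0 τ (by linarith) (by linarith) (by linarith)
    left; exact ⟨by rw [e1, e3], by linarith⟩
  · obtain ⟨e1, e2⟩ := key a2 b2 (-σ) 0 (by linarith) (by linarith) (by linarith)
    obtain ⟨e3, e4⟩ := key a1 b1 0 (-τ) (by linarith) (by linarith) (by linarith)
    left; exact ⟨by rw [e1, e3], by linarith⟩
  · obtain ⟨e3, e4⟩ := key a1 b1 0 0 (by linarith) (by linarith) (by linarith)
    rcases key3 a2 b2 (by linarith) with ⟨e1, e2⟩ | e1
    · left; exact ⟨by rw [e1, e3], by linarith⟩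
    · right; simp only [Prod.mk.injEq]; omega
  · obtain ⟨e3, e4⟩ := key a1 b1 0 0 (by linarith) (by linarith) (by linarith)
    obtain ⟨e1, e2⟩ := key a2 b2 (-σ) (-τ) (by linarith) (by linarith) (by linarith)
    left; exact ⟨by rw [e1, e3], by linarith⟩


lemma badj_cells {n : ℕ} (hn : 3 ≤ n) {S : ℤ → ℤ → Prop} {u v : ℤ × ℤ} (h : BAdj S u v)
    (t : ℝ) (ht0 : 0 ≤ t) (ht1 : t ≤ 1) (x : Plane)
    (hx1 : x.1 = (u.1 + t * (v.1 - u.1)) / n) (hx2 : x.2 = (u.2 + t * (v.2 - u.2)) / n) :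
    (∃ i j, S i j ∧ x ∈ cell n i j) ∧ (∃ i j, ¬ S i j ∧ x ∈ cell n i j) := by
  have hn0 : (n:ℝ) ≠ 0 := by positivity
  have e1 : n * x.1 = u.1 + t * (v.1 - u.1) := by rw [hx1]; field_simp
  have e2 : n * x.2 = u.2 + t * (v.2 - u.2) := by rw [hx2]; field_simp
  suffices h : ∃ i j i' j', ¬ (S i j ↔ S i' j') ∧ x ∈ cell n i j ∧ x ∈ cell n i' j' by
    obtain ⟨i, j, i', j', h, c, c'⟩ := h
    by_cases hs : S i j
    · exact ⟨⟨i, j, hs, c⟩, ⟨i', j', by tauto, c'⟩⟩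
    · exact ⟨⟨i', j', by tauto, c'⟩, ⟨i, j, hs, c⟩⟩
  rcases h with ⟨rfl, h⟩ | ⟨rfl, h⟩ | ⟨rfl, h⟩ | ⟨rfl, h⟩ <;> refine ⟨_, _, _, _, h, ?_, ?_⟩ <;>
    simp only [cell, mem_ofPred_eq, e1, e2] <;> push_cast <;> refine ⟨?_, ?_, ?_, ?_⟩ <;> linarith

lemma discrete_circle (n : ℕ) (hn : 3 ≤ n) (S : ℤ → ℤ → Prop) (hS : ∀ i j, S (i + n) j ↔ S i j)
    (J0 J1 : ℤ) (h0 : ∀ i j, j < J0 → S i j) (h1 : ∀ i j, J1 ≤ j → ¬ S i j) :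
    ∃ γ : ℝ → Plane, IsEssentialCircle (range (fun s => prj (γ s))) ∧
      ∀ s, (∃ i j, S i j ∧ γ s ∈ cell n i j) ∧ (∃ i j, ¬ S i j ∧ γ s ∈ cell n i j) := by
  obtain ⟨m, hm, U, d, hd, hper, hadj, hinj⟩ := min_walk n hn S hS J0 J1 h0 h1
  have hn0 : (n:ℝ) ≠ 0 := by positivity
  have hm0 : (m:ℝ) ≠ 0 := by positivity
  set σ : ℤ → ℝ → Plane := fun k t => ((((U k).1:ℝ) + t * ((U (k+1)).1 - (U k).1)) / n,
    (((U k).2:ℝ) + t * ((U (k+1)).2 - (U k).2)) / n) with hσ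
  have hcont := glue_cont σ (fun k => by simp only [hσ]; fun_prop) (fun k => by simp [hσ])
  refine ⟨fun s => σ ⌊m * s⌋ (Int.fract (m * s)), ?_, ?_⟩
  · refine essential_of_lift _ (hcont.comp (continuous_const.mul continuous_id)) d hd ?_ ?_
    · intro s
      have e1 : (m:ℝ) * (s + 1) = m * s + (m:ℤ) := by push_cast; ring
      simp only [e1, Int.floor_add_intCast, Int.fract_add_intCast]
      have e2 := hper ⌊m * s⌋
      have e3 := hper (⌊m * s⌋ + 1)
      rw [show ⌊m * s⌋ + 1 + (m:ℤ) = ⌊m * s⌋ + m + 1 by ring] at e3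
      simp only [hσ, e2, e3, vtr, Tr]
      ext
      · push_cast; field_simp; ring
      · rfl
    · intro s t hst
      rw [prj_eq_iff] at hst
      obtain ⟨k, hk⟩ := hst
      simp only [hσ, Tr, Prod.mk.injEq] at hk
      obtain ⟨k1, k2⟩ := hk
      rw [div_eq_iff hn0, add_mul, div_mul_cancel₀ _ hn0] at k1
      rw [div_eq_iff hn0, div_mul_cancel₀ _ hn0] at k2
      rcases edge_inj (U ⌊m*s⌋) (U (⌊m*s⌋+1)) (vtr (k*n) (U ⌊m*t⌋)) (vtr (k*n) (U (⌊m*t⌋+1)))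
        (Int.fract (m*s)) (Int.fract (m*t)) (Int.fract_nonneg _) (Int.fract_lt_one _)
        (Int.fract_nonneg _) (Int.fract_lt_one _) (hadj _).step
        (by have := ((hadj ⌊m*t⌋).tr hS k).step; exact this)
        (by simp only [vtr]; push_cast; linarith)
        (by simp only [vtr]; linarith) with ⟨a1, a2⟩ | ⟨a1, a2⟩
      · obtain ⟨l, hl⟩ := hinj _ _ _ a1
        refine ⟨l, ?_⟩
        have b1 := Int.floor_add_fract ((m:ℝ) * s)
        have b2 := Int.floor_add_fract ((m:ℝ) * t)
        rw [a2, hl] at b1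
        push_cast at b1
        apply mul_left_cancel₀ hm0
        linarith
      · obtain ⟨l, hl⟩ := hinj _ _ _ a1
        obtain ⟨l', hl'⟩ := hinj _ _ _ a2
        exfalso
        have e : (l' - l) * (m:ℤ) = 2 := by linarith
        have : (m:ℤ) ∣ 2 := ⟨l' - l, by linarith⟩
        have := Int.le_of_dvd (by norm_num) this
        omega
  · intro s
    exact badj_cells hn (hadj ⌊m*s⌋) _ (Int.fract_nonneg (m*s)) (Int.fract_lt_one _).le _ rfl rfl


lemma Tr_Tr (a b : ℤ) (x : Plane) : Tr a (Tr b x) = Tr (a + b) x := by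
  unfold Tr; ext <;> simp; ring

lemma Tr_zero (x : Plane) : Tr 0 x = x := by unfold Tr; ext <;> simp

lemma Tr_cont (k : ℤ) : Continuous (Tr k) := by unfold Tr; fun_prop

/-- translation as a homeomorphism -/
def trH (k : ℤ) : Plane ≃ₜ Plane where
  toFun := Tr k
  invFun := Tr (-k)
  left_inv x := by rw [Tr_Tr, neg_add_cancel, Tr_zero]
  right_inv x := by rw [Tr_Tr, add_neg_cancel, Tr_zero]
  continuous_toFun := Tr_cont k
  continuous_invFun := Tr_cont (-k)

lemma trH_apply (k : ℤ) (x : Plane) : trH k x = Tr k x := rfl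

lemma dist_Tr (k : ℤ) (x y : Plane) : dist (Tr k x) (Tr k y) = dist x y := by
  unfold Tr; simp [Prod.dist_eq]

lemma snd_lt_of_dist {x y : Plane} {r : ℝ} (h : dist x y < r) : x.2 < y.2 + r ∧ y.2 < x.2 + r := by
  have h1 : dist x.2 y.2 < r := lt_of_le_of_lt (by rw [Prod.dist_eq]; exact le_max_right _ _) h
  rw [Real.dist_eq, abs_lt] at h1
  constructor <;> linarith

lemma uniform_nbhd (H : Plane → Plane) (hH : Continuous H) (hHT : ∀ k x, H (Tr k x) = Tr k (H x))
    (Z : Set Plane) (hZo : IsOpen Z) (hZT : ∀ k x, x ∈ Z → Tr k x ∈ Z) (c c' : ℝ)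
    (hc : ∀ x : Plane, x.2 < c → x ∈ Z) (hc' : ∀ x ∈ Z, x.2 ≤ c')
    (hZ : ∀ x ∈ closure Z, H x ∈ Z) :
    ∃ δ > 0, δ ≤ 1 ∧ ∀ x ∈ Metric.thickening δ Z, H x ∈ Z := by
  set K : Set Plane := (Icc (0:ℝ) 1 ×ˢ Icc c (c'+1)) ∩ H ⁻¹' Zᶜ with hK
  have hKc : IsCompact K :=
    (isCompact_Icc.prod isCompact_Icc).inter_right (hZo.isClosed_compl.preimage hH)
  have hKZ : K ⊆ (closure Z)ᶜ := fun x hx hxZ => hx.2 (hZ x hxZ)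
  obtain ⟨δ, hδ, hsub⟩ := hKc.exists_thickening_subset_open isClosed_closure.isOpen_compl hKZ
  refine ⟨min δ 1, lt_min hδ one_pos, min_le_right _ _, fun x hx => ?_⟩
  by_contra hcon
  obtain ⟨z, hz, hxz⟩ := Metric.mem_thickening_iff.mp hx
  have h1 := snd_lt_of_dist (hxz.trans_le (min_le_right _ _))
  have h2 : c ≤ x.2 := by
    by_contra h
    exact hcon (hZ x (subset_closure (hc x (not_le.mp h))))
  have h3 := hc' z hz
  have hx' : Tr (-⌊x.1⌋) x ∈ K := by
    refine ⟨⟨?_, ?_⟩, ?_⟩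
    · have := Int.floor_le x.1
      have := Int.lt_floor_add_one x.1
      simp only [Tr, mem_Icc]; push_cast; constructor <;> linarith
    · simp only [Tr, mem_Icc]; constructor <;> linarith
    · intro h
      rw [hHT] at h
      have := hZT ⌊x.1⌋ _ h
      rw [Tr_Tr, add_neg_cancel, Tr_zero] at this
      exact hcon this
  have : Tr (-⌊x.1⌋) z ∈ Metric.thickening δ K := by
    rw [Metric.mem_thickening_iff]
    refine ⟨_, hx', ?_⟩
    rw [dist_Tr, dist_comm]
    exact hxz.trans_le (min_le_left _ _)
  exact hsub this (subset_closure (hZT _ _ hz))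

lemma cell_dist {n : ℕ} (hn : 0 < n) {i j : ℤ} {x y : Plane} (hx : x ∈ cell n i j)
    (hy : y ∈ cell n i j) : dist x y ≤ 1 / n := by
  obtain ⟨a1, a2, a3, a4⟩ := hx
  obtain ⟨b1, b2, b3, b4⟩ := hy
  have hn' : (0:ℝ) < n := by exact_mod_cast hn
  rw [Prod.dist_eq, Real.dist_eq, Real.dist_eq]
  have k : ∀ u v : ℝ, n * u - n * v ≤ 1 → n * v - n * u ≤ 1 → |u - v| ≤ 1 / n := by
    intro u v h1 h2
    rw [abs_le, le_div_iff₀ hn', neg_le, le_div_iff₀ hn']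
    constructor <;> linarith
  exact max_le (k _ _ (by linarith) (by linarith)) (k _ _ (by linarith) (by linarith))

lemma attr_contra (f : Ann ≃ₜ Ann) (F : Plane ≃ₜ Plane) (hint : IntersectionProperty f)
    (hlift : IsLift f F) (hFT : ∀ k x, F (Tr k x) = Tr k (F x))
    (E : Set Plane) (hEo : IsOpen E) (hET : ∀ k x, x ∈ E → Tr k x ∈ E) (c c' : ℝ)
    (hc : ∀ x : Plane, x.2 < c → x ∈ E) (hc' : ∀ x ∈ E, x.2 ≤ c')
    (hE : ∀ x ∈ closure E, F x ∈ E) : False := by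
  obtain ⟨ε, hε, -, hF⟩ := uniform_nbhd F F.continuous hFT E hEo hET c c' hc hc' hE
  obtain ⟨n0, hn0⟩ := exists_nat_one_div_lt hε
  set n := n0 + 3 with hn
  have hnε : (1:ℝ) / n < ε := by
    refine lt_of_le_of_lt ?_ hn0
    apply one_div_le_one_div_of_le (by positivity)
    rw [hn]; push_cast; linarith
  have hnp : (0:ℝ) < n := by positivity
  set S : ℤ → ℤ → Prop := fun i j => ∃ x ∈ E, x ∈ cell n i j with hS
  have hStr : ∀ i j k, S i j → S (i + k * n) j := by
    rintro i j k ⟨x, hx, h1, h2, h3, h4⟩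
    refine ⟨Tr k x, hET _ _ hx, ?_⟩
    simp only [cell, Tr]
    refine ⟨?_, ?_, h3, h4⟩ <;> push_cast <;> nlinarith
  obtain ⟨γ, hγ, hcells⟩ := discrete_circle n (by omega) S
    (fun i j => ⟨fun h => by have := hStr _ _ (-1) h; simpa using this,
      fun h => by have := hStr _ _ 1 h; simpa using this⟩)
    (⌊n * c⌋) (⌈n * c'⌉ + 1)
    (fun i j hj => ⟨((i:ℝ)/n, (j:ℝ)/n), hc _ (by
        simp only
        rw [div_lt_iff₀ hnp]
        have h1 : (j:ℝ) + 1 ≤ ⌊n * c⌋ := by exact_mod_cast hj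
        have h2 := Int.floor_le ((n:ℝ) * c)
        linarith), by
        simp only [cell]
        have e1 : (n:ℝ) * (i / n) = i := by field_simp
        have e2 : (n:ℝ) * (j / n) = j := by field_simp
        refine ⟨?_, ?_, ?_, ?_⟩ <;> simp [e1, e2]⟩)
    (fun i j hj => by
      rintro ⟨x, hx, h1, h2, h3, h4⟩
      have h5 := hc' x hx
      have h6 : (⌈n * c'⌉:ℝ) + 1 ≤ j := by exact_mod_cast hj
      have h7 := Int.le_ceil ((n:ℝ) * c')
      have : (n:ℝ) * x.2 ≤ n * c' := by gcongr
      linarith)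
  obtain ⟨w, ⟨s, hs⟩, ⟨w', ⟨t, ht⟩, hw'⟩⟩ := hint _ hγ
  simp only at hs ht
  obtain ⟨i, j, ⟨e, he, hce⟩, hcs⟩ := (hcells t).1
  obtain ⟨i', j', hn', hcs'⟩ := (hcells s).2
  have h1 : F (γ t) ∈ E := by
    apply hF
    rw [Metric.mem_thickening_iff]
    exact ⟨e, he, lt_of_le_of_lt (cell_dist (by omega) hcs hce) hnε⟩
  have h2 : prj (γ s) = prj (F (γ t)) := by rw [hs, hlift, ht, hw']
  rw [prj_eq_iff] at h2
  obtain ⟨k, hk⟩ := h2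
  exact hn' ⟨γ s, by rw [hk]; exact hET _ _ h1, hcs'⟩

lemma iter_Tr {F : Plane → Plane} (hFT : ∀ k x, F (Tr k x) = Tr k (F x)) (n : ℕ) (k : ℤ) (x : Plane) :
    F^[n] (Tr k x) = Tr k (F^[n] x) := by
  induction n with
  | zero => rfl
  | succ n ih => rw [Function.iterate_succ_apply', ih, hFT, Function.iterate_succ_apply']

lemma attr_contra_q (f : Ann ≃ₜ Ann) (F : Plane ≃ₜ Plane) (hint : IntersectionProperty f)
    (hlift : IsLift f F) (hFT : ∀ k x, F (Tr k x) = Tr k (F x))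
    (hup : ∀ C : ℝ, ∃ C' : ℝ, ∀ x : Plane, x.2 < C → (F x).2 < C')
    (q : ℕ) (hq : 0 < q) (p : ℤ)
    (Z : Set Plane) (hZo : IsOpen Z) (hZT : ∀ k x, x ∈ Z → Tr k x ∈ Z) (c c' : ℝ)
    (hc : ∀ x : Plane, x.2 < c → x ∈ Z) (hc' : ∀ x ∈ Z, x.2 ≤ c')
    (hZ : ∀ x ∈ closure Z, Tr p (F^[q] x) ∈ Z) : False := by
  have hZ' : ∀ x ∈ closure Z, F^[q] x ∈ Z := by
    intro x hx
    have := hZT (-p) _ (hZ x hx)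
    rwa [Tr_Tr, neg_add_cancel, Tr_zero] at this
  obtain ⟨δ, hδ, hδ1, hF⟩ := uniform_nbhd (F^[q]) (F.continuous.iterate q) (iter_Tr hFT q)
    Z hZo hZT c c' hc hc' hZ'
  set r : ℕ → ℝ := fun i => (i + 1) * δ / (q + 1) with hr
  have hr0 : ∀ i, 0 < r i := fun i => by simp only [hr]; positivity
  have hrs : ∀ i, r i < r (i+1) := fun i => by
    simp only [hr]; push_cast; gcongr; linarith
  have hrq : ∀ i, i < q → r i < δ := fun i hi => by
    simp only [hr]
    rw [div_lt_iff₀ (by positivity)]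
    have : (i:ℝ) < q := by exact_mod_cast hi
    nlinarith
  set E : Set Plane := ⋃ i ∈ Finset.range q, (itH F i) '' (Metric.thickening (r i) Z) with hE
  have hZE : Z ⊆ E := by
    intro x hx
    rw [hE]
    simp only [Finset.mem_range, mem_iUnion]
    exact ⟨0, hq, x, Metric.self_subset_thickening (hr0 0) _ hx, rfl⟩
  have hbd : ∀ i, ∀ C : ℝ, ∃ C', ∀ x : Plane, x.2 < C → (F^[i] x).2 < C' := by
    intro i
    induction i with
    | zero => exact fun C => ⟨C, fun x hx => hx⟩
    | succ i ih =>
      intro C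
      obtain ⟨C1, h1⟩ := ih C
      obtain ⟨C2, h2⟩ := hup C1
      exact ⟨C2, fun x hx => by rw [Function.iterate_succ_apply']; exact h2 _ (h1 _ hx)⟩
  choose B hB using fun i => hbd i (c' + 2)
  refine attr_contra f F hint hlift hFT E ?_ ?_ c (∑ i ∈ Finset.range q, |B i|) (fun x hx => hZE (hc x hx)) ?_ ?_
  · refine isOpen_biUnion fun i _ => (itH F i).isOpenMap _ Metric.isOpen_thickening
  · intro k x hx
    simp only [hE, Finset.mem_range, mem_iUnion] at hx ⊢
    obtain ⟨i, hi, y, hy, rfl⟩ := hx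
    refine ⟨i, hi, Tr k y, ?_, ?_⟩
    · rw [Metric.mem_thickening_iff] at hy ⊢
      obtain ⟨z, hz, hd⟩ := hy
      exact ⟨Tr k z, hZT _ _ hz, by rwa [dist_Tr]⟩
    · rw [itH_apply, itH_apply, iter_Tr hFT]
  · intro x hx
    simp only [hE, Finset.mem_range, mem_iUnion] at hx
    obtain ⟨i, hi, y, hy, rfl⟩ := hx
    rw [Metric.mem_thickening_iff] at hy
    obtain ⟨z, hz, hd⟩ := hy
    have h1 := (snd_lt_of_dist hd).1
    have h2 := hc' z hz
    have h3 := hrq i hi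
    have h4 := hB i y (by linarith)
    rw [itH_apply]
    have h5 : |B i| ≤ ∑ i ∈ Finset.range q, |B i| :=
      Finset.single_le_sum (f := fun i => |B i|) (fun i _ => abs_nonneg _) (Finset.mem_range.mpr hi)
    have h6 := le_abs_self (B i)
    linarith
  · intro x hx
    rw [hE, Finset.closure_biUnion] at hx
    simp only [Finset.mem_range, mem_iUnion] at hx
    obtain ⟨i, hi, hx⟩ := hx
    rw [← (itH F i).image_closure] at hx
    obtain ⟨y, hy, rfl⟩ := hx
    have hy2 := Metric.closure_thickening_subset_cthickening _ _ hy
    rw [itH_apply, ← Function.iterate_succ_apply' (⇑F)]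
    by_cases hiq : i + 1 = q
    · rw [Nat.succ_eq_add_one, hiq]
      apply hZE
      apply hF
      exact Metric.cthickening_subset_thickening' hδ (hrq i hi) _ hy2
    · rw [hE]
      simp only [Finset.mem_range, mem_iUnion]
      refine ⟨i+1, by omega, y, ?_, itH_apply _ _ _⟩
      exact Metric.cthickening_subset_thickening' (hr0 _) (hrs i) _ hy2

lemma attr_contra_N (f : Ann ≃ₜ Ann) (F : Plane ≃ₜ Plane) (hint : IntersectionProperty f)
    (hlift : IsLift f F) (hFT : ∀ k x, F (Tr k x) = Tr k (F x))
    (hup : ∀ C : ℝ, ∃ C' : ℝ, ∀ x : Plane, x.2 < C → (F x).2 < C')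
    (q : ℕ) (hq : 0 < q) (p : ℤ) (N : ℕ) (hN : 0 < N)
    (Z : Set Plane) (hZo : IsOpen Z) (hZT : ∀ k : ℤ, ∀ x, x ∈ Z → Tr (k * N) x ∈ Z) (c c' : ℝ)
    (hc : ∀ x : Plane, x.2 < c → x ∈ Z) (hc' : ∀ x ∈ Z, x.2 ≤ c')
    (hZ : ∀ x ∈ closure Z, Tr p (F^[q] x) ∈ Z) : False := by
  have hN' : (0:ℤ) < N := by exact_mod_cast hN
  set W : Set Plane := ⋃ i ∈ Finset.range N, (trH i) ⁻¹' Z with hW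
  have hWm : ∀ x, x ∈ W ↔ ∃ k : ℤ, Tr k x ∈ Z := by
    intro x
    simp only [hW, Finset.mem_range, mem_iUnion]
    constructor
    · rintro ⟨i, -, h⟩; exact ⟨i, h⟩
    · rintro ⟨k, h⟩
      have a1 := Int.emod_nonneg k hN'.ne'
      have a2 := Int.emod_lt_of_pos k hN'
      refine ⟨(k % N).toNat, by omega, ?_⟩
      have := hZT (-(k / N)) _ h
      rw [Tr_Tr] at this
      have e : -(k / N) * (N:ℤ) + k = ((k % N).toNat : ℤ) := by
        rw [Int.toNat_of_nonneg a1]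
        have := Int.mul_ediv_add_emod k N
        linarith
      rw [e] at this
      exact this
  refine attr_contra_q f F hint hlift hFT hup q hq p W
    (isOpen_biUnion fun i _ => hZo.preimage (trH i).continuous) ?_ c c' ?_ ?_ ?_
  · intro k x hx
    rw [hWm] at hx ⊢
    obtain ⟨j, hj⟩ := hx
    exact ⟨j - k, by rwa [Tr_Tr, sub_add_cancel]⟩
  · intro x hx; rw [hWm]; exact ⟨0, by rw [Tr_zero]; exact hc x hx⟩
  · intro x hx
    rw [hWm] at hx
    obtain ⟨j, hj⟩ := hx
    have := hc' _ hj
    exact this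
  · intro x hx
    rw [hW, Finset.closure_biUnion] at hx
    simp only [Finset.mem_range, mem_iUnion] at hx
    obtain ⟨i, hi, hx⟩ := hx
    rw [← (trH i).preimage_closure] at hx
    have := hZ _ hx
    rw [hWm]
    refine ⟨i, ?_⟩
    rw [trH_apply, iter_Tr hFT, Tr_Tr, add_comm, ← Tr_Tr] at this
    exact this


lemma Iso_Tr (k : ℤ) : Iso (Tr k) := by
  refine ⟨fun t x => (x.1 + t * k, x.2), by fun_prop, ?_, ?_, ?_⟩
  · intro t x y h
    simp only [Prod.mk.injEq, add_left_inj] at h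
    exact Prod.ext h.1 h.2
  · intro x; simp
  · intro x; simp [Tr]

lemma comm_all {F : Plane → Plane} (h : ∀ x, F (Tr 1 x) = Tr 1 (F x)) (k : ℤ) (x : Plane) :
    F (Tr k x) = Tr k (F x) := by
  induction k using Int.induction_on generalizing x with
  | zero => simp [Tr_zero]
  | succ k ih => rw [add_comm (k:ℤ) 1, ← Tr_Tr, h, ih, Tr_Tr]
  | pred k ih =>
    have h1 := h (Tr (-k - 1) x)
    rw [Tr_Tr, show (1:ℤ) + (-k - 1) = -k by ring, ih] at h1
    have h2 := congrArg (Tr (-1)) h1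
    rw [Tr_Tr, Tr_Tr, neg_add_cancel, Tr_zero] at h2
    rw [← h2]; congr 1; ring

lemma lift_iso (f : Ann ≃ₜ Ann) (F : Plane ≃ₜ Plane) (hiso : IsotopicToId f) (hlift : IsLift f F) :
    (∀ k x, F (Tr k x) = Tr k (F x)) ∧ Iso F := by
  obtain ⟨H, hHc, hHh, hH0, hH1⟩ := hiso
  have hc : Continuous (fun q : ℝ × Plane => H q.1 (prj q.2)) :=
    hHc.comp (continuous_fst.prodMk (prj_cont.comp continuous_snd))
  obtain ⟨L, hL, hL0, hLg⟩ := lift_circle (fun q : ℝ × Plane => (H q.1 (prj q.2)).1)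
    (continuous_fst.comp hc) (0, 0) 0 (by simp [hH0, prj])
  set Φ : ℝ → Plane → Plane := fun t x => (L (t, x), (H t (prj x)).2) with hΦ
  have hΦc : Continuous (fun q : ℝ × Plane => Φ q.1 q.2) := by
    simp only [hΦ]
    exact hL.prodMk (continuous_snd.comp hc)
  have hprj : ∀ t x, prj (Φ t x) = H t (prj x) := fun t x => by
    simp only [hΦ, prj]; exact Prod.ext (hLg (t, x)) rfl
  have hint0 : ∀ x : Plane, ∃ n : ℤ, L (0, x) - x.1 = n := by
    intro x
    have := hLg (0, x)
    simp only [hH0, prj] at this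
    rw [coe_eq_iff] at this
    obtain ⟨k, hk⟩ := this
    exact ⟨k, by linarith⟩
  have h0 : ∀ x : Plane, L (0, x) = x.1 := by
    intro x
    have := int_valued_const (φ := fun x : Plane => L (0, x) - x.1) (by fun_prop) hint0 x 0
    simp only [show ((0:ℝ), (0:Plane)) = (0:ℝ × Plane) from rfl, Prod.fst_zero] at this hL0
    linarith
  have hΦ0 : ∀ x, Φ 0 x = x := fun x => by simp [hΦ, h0, hH0, prj]
  have hΦT : ∀ t x, Φ t (Tr 1 x) = Tr 1 (Φ t x) := by
    intro t x
    have hi : ∀ q : ℝ × Plane, ∃ n : ℤ, L (q.1, Tr 1 q.2) - L q = n := by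
      intro q
      have a1 := hLg (q.1, Tr 1 q.2)
      have a2 := hLg q
      have : prj (Tr 1 q.2) = prj q.2 := by rw [prj_eq_iff]; exact ⟨1, rfl⟩
      simp only [this] at a1
      rw [← a2, coe_eq_iff] at a1
      obtain ⟨k, hk⟩ := a1
      exact ⟨k, by linarith⟩
    have := int_valued_const (φ := fun q : ℝ × Plane => L (q.1, Tr 1 q.2) - L q)
      (by have := Tr_cont 1; fun_prop) hi (t, x) (0, x)
    simp only [h0] at this
    have e : prj (Tr 1 x) = prj x := by rw [prj_eq_iff]; exact ⟨1, rfl⟩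
    have e2 : (Tr 1 x).1 = x.1 + 1 := by simp [Tr]
    rw [e2] at this
    apply Prod.ext
    · show L (t, Tr 1 x) = L (t, x) + ((1:ℤ):ℝ)
      push_cast; linarith
    · show (H t (prj (Tr 1 x))).2 = (H t (prj x)).2
      rw [e]
  have hΦi : ∀ t, Function.Injective (Φ t) := by
    intro t x y hxy
    obtain ⟨h, hh⟩ := hHh t
    have h1 : prj x = prj y := by
      apply h.injective
      rw [← hh, ← hh, ← hprj, ← hprj, hxy]
    rw [prj_eq_iff] at h1
    obtain ⟨k, rfl⟩ := h1
    rw [comm_all (hΦT t)] at hxy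
    have := congrArg Prod.fst hxy
    simp only [Tr, add_eq_left] at this
    have : k = 0 := by exact_mod_cast this
    rw [this, Tr_zero]
  have hF : ∃ j : ℤ, ∀ x, F x = Tr j (Φ 1 x) := by
    have h1 : ∀ x, ∃ k : ℤ, F x = Tr k (Φ 1 x) := fun x => by
      rw [← prj_eq_iff, hprj, hlift, hH1]
    have hi : ∀ x : Plane, ∃ n : ℤ, (F x).1 - (Φ 1 x).1 = n := fun x => by
      obtain ⟨k, hk⟩ := h1 x
      exact ⟨k, by rw [hk]; simp [Tr]⟩
    have hcc : Continuous (Φ 1) := hΦc.comp (continuous_const.prodMk continuous_id)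
    have hconst := int_valued_const (φ := fun x : Plane => (F x).1 - (Φ 1 x).1)
      ((continuous_fst.comp F.continuous).sub (continuous_fst.comp hcc)) hi
    obtain ⟨j, hj⟩ := h1 0
    refine ⟨j, fun x => ?_⟩
    obtain ⟨k, hk⟩ := h1 x
    have := hconst x 0
    simp only [hk, hj] at this
    simp only [Tr, add_sub_cancel_left] at this
    have : k = j := by exact_mod_cast this
    rw [hk, this]
  obtain ⟨j, hj⟩ := hF
  constructor
  · intro k x
    rw [hj, hj, comm_all (hΦT 1), Tr_Tr, Tr_Tr, add_comm]
  · have : Iso (Φ 1) := ⟨Φ, hΦc, hΦi, hΦ0, fun _ => rfl⟩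
    have h2 := (Iso_Tr j).comp this
    have e : (⇑F) = fun x => Tr j (Φ 1 x) := funext hj
    rw [e]; exact h2

lemma isotopic_symm (f : Ann ≃ₜ Ann) (hiso : IsotopicToId f) : IsotopicToId f.symm := by
  obtain ⟨H, hHc, hHh, hH0, hH1⟩ := hiso
  refine ⟨fun t z => H (1 - t) (f.symm z), ?_, ?_, ?_, ?_⟩
  · exact hHc.comp ((continuous_const.sub continuous_fst).prodMk (f.symm.continuous.comp continuous_snd))
  · intro t
    obtain ⟨h, hh⟩ := hHh (1 - t)
    exact ⟨f.symm.trans h, fun z => by simp [hh]⟩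
  · intro z; simp [hH1]
  · intro z; simp [hH0]

lemma conn_half (S : Set ℝ) (hS : IsConnected S) : IsPreconnected {z : Ann | z.2 ∈ S} := by
  have : {z : Ann | z.2 ∈ S} = (univ : Set (AddCircle (1:ℝ))) ×ˢ S := by ext z; simp
  rw [this]
  exact isPreconnected_univ.prod hS.isPreconnected

/-- one-sided statement; `U`,`V` are the two sides of the circle `y = C`, `W` an end -/
lemma ends_aux (H : ℝ → Ann → Ann) (hHc : Continuous (fun q : ℝ × Ann => H q.1 q.2))
    (hHh : ∀ t : ℝ, ∃ h : Ann ≃ₜ Ann, ∀ z, H t z = h z) (hH0 : ∀ z, H 0 z = z)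
    (U V W K : Set Ann) (hU : IsOpen U) (hV : IsOpen V) (hUV : Disjoint U V) (hW : IsOpen W)
    (hWc : IsPreconnected W) (hWU : W ⊆ U)
    (hcov : U ∪ V ∪ K = univ) (hK : ∀ t ∈ Icc (0:ℝ) 1, ∀ z ∈ K, H t z ∉ W) :
    ∀ z ∈ W, ∃ w ∈ U, H 1 w = z := by
  intro z hz
  have dich : ∀ t ∈ Icc (0:ℝ) 1, (∀ z ∈ W, ∃ w ∈ U, H t w = z) ∨ (∀ z ∈ W, ∃ w ∈ V, H t w = z) := by
    intro t ht
    obtain ⟨h, hh⟩ := hHh t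
    have hoU : IsOpen (h '' U) := h.isOpenMap _ hU
    have hoV : IsOpen (h '' V) := h.isOpenMap _ hV
    have hd : Disjoint (h '' U) (h '' V) := (disjoint_image_iff h.injective).mpr hUV
    have hsub : W ⊆ h '' U ∪ h '' V := by
      intro y hy
      obtain ⟨x, rfl⟩ := h.surjective y
      have : x ∈ U ∪ V ∪ K := by rw [hcov]; trivial
      rcases this with (hx | hx) | hx
      · exact Or.inl ⟨x, hx, rfl⟩
      · exact Or.inr ⟨x, hx, rfl⟩
      · exact absurd hy (by rw [← hh]; exact hK t ht x hx)
    rcases hWc.subset_or_subset hoU hoV hd hsub with h1 | h1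
    · left; intro y hy; obtain ⟨x, hx, e⟩ := h1 hy; exact ⟨x, hx, by rw [hh, e]⟩
    · right; intro y hy; obtain ⟨x, hx, e⟩ := h1 hy; exact ⟨x, hx, by rw [hh, e]⟩
  set P : Set ℝ := {t | ∃ w ∈ U, H t w ∈ W} with hP
  set P' : Set ℝ := {t | ∃ w ∈ V, H t w ∈ W} with hP'
  have hopen : ∀ U : Set Ann, IsOpen {t | ∃ w ∈ U, H t w ∈ W} := by
    intro U
    have : {t | ∃ w ∈ U, H t w ∈ W} = ⋃ w ∈ U, (fun t => H t w) ⁻¹' W := by ext; simp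
    rw [this]
    exact isOpen_biUnion fun w _ => hW.preimage (hHc.comp (continuous_id.prodMk continuous_const))
  by_contra hcon
  have h1 : (1:ℝ) ∈ P' := by
    rcases dich 1 (by simp) with h | h
    · exact absurd (h z hz) hcon
    · obtain ⟨w, hw, e⟩ := h z hz
      exact ⟨w, hw, by rw [e]; exact hz⟩
  have h0 : (0:ℝ) ∈ P := ⟨z, hWU hz, by rw [hH0]; exact hz⟩
  have hsub : Icc (0:ℝ) 1 ⊆ P ∪ P' := by
    intro t ht
    rcases dich t ht with h | h
    · obtain ⟨w, hw, e⟩ := h z hz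
      exact Or.inl ⟨w, hw, by rw [e]; exact hz⟩
    · obtain ⟨w, hw, e⟩ := h z hz
      exact Or.inr ⟨w, hw, by rw [e]; exact hz⟩
  obtain ⟨t, ht, ⟨a, ha, haW⟩, ⟨b, hb, hbW⟩⟩ := isPreconnected_Icc (a := (0:ℝ)) (b := 1) P P' (hopen U) (hopen V) hsub
    ⟨0, by simp, h0⟩ ⟨1, by simp, h1⟩
  obtain ⟨h, hh⟩ := hHh t
  rcases dich t ht with h' | h'
  · obtain ⟨w, hw, e⟩ := h' _ hbW
    rw [hh, hh] at e
    exact Set.disjoint_left.mp hUV hw (by rw [h.injective e]; exact hb)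
  · obtain ⟨w, hw, e⟩ := h' _ haW
    rw [hh, hh] at e
    exact Set.disjoint_left.mp hUV ha (by rw [← h.injective e]; exact hw)

lemma ends_f (f : Ann ≃ₜ Ann) (hiso : IsotopicToId f) (C : ℝ) : ∃ M : ℝ,
    (∀ z : Ann, M < z.2 → C < (f.symm z).2) ∧ (∀ z : Ann, z.2 < -M → (f.symm z).2 < C) := by
  obtain ⟨H, hHc, hHh, hH0, hH1⟩ := hiso
  set K : Set Ann := {z | z.2 = C} with hK
  have hKe : K = univ ×ˢ {C} := by ext z; simp [hK]
  have hKc : IsCompact K := by rw [hKe]; exact isCompact_univ.prod isCompact_singleton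
  have hc2 : IsCompact ((fun q : ℝ × Ann => (H q.1 q.2).2) '' (Icc (0:ℝ) 1 ×ˢ K)) :=
    (isCompact_Icc.prod hKc).image (continuous_snd.comp hHc)
  obtain ⟨M0, hM0⟩ := hc2.isBounded.exists_norm_le
  set M := max M0 |C| with hM
  have hKM : ∀ t ∈ Icc (0:ℝ) 1, ∀ z ∈ K, |(H t z).2| ≤ M := fun t ht z hz =>
    (hM0 _ ⟨(t, z), ⟨ht, hz⟩, rfl⟩).trans (le_max_left _ _)
  have hCM : |C| ≤ M := le_max_right _ _
  have hCM' := abs_le.mp hCM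
  have ho1 : IsOpen {z : Ann | C < z.2} := isOpen_lt continuous_const continuous_snd
  have ho2 : IsOpen {z : Ann | z.2 < C} := isOpen_lt continuous_snd continuous_const
  have hd : Disjoint {z : Ann | C < z.2} {z : Ann | z.2 < C} := by
    rw [Set.disjoint_left]; intro z (h1 : C < z.2) (h2 : z.2 < C); exact lt_asymm h1 h2
  refine ⟨M, fun z hz => ?_, fun z hz => ?_⟩
  · obtain ⟨w, hw, e⟩ := ends_aux H hHc hHh hH0 {z | C < z.2} {z | z.2 < C} {z | M < z.2} K ho1 ho2 hd
      (isOpen_lt continuous_const continuous_snd) (conn_half (Ioi M) isConnected_Ioi)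
      (fun z (hz : M < z.2) => show C < z.2 by linarith)
      (by ext z; simp only [mem_union, mem_univ, iff_true]
          rcases lt_trichotomy z.2 C with h | h | h
          · exact Or.inl (Or.inr h)
          · exact Or.inr h
          · exact Or.inl (Or.inl h))
      (fun t ht z hz (h : M < _) => by have := (abs_le.mp (hKM t ht z hz)).2; linarith) z hz
    rw [hH1] at e
    rw [← e, f.symm_apply_apply]
    exact hw
  · obtain ⟨w, hw, e⟩ := ends_aux H hHc hHh hH0 {z | z.2 < C} {z | C < z.2} {z | z.2 < -M} K ho2 ho1 hd.symm
      (isOpen_lt continuous_snd continuous_const) (conn_half (Iio (-M)) isConnected_Iio)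
      (fun z (hz : z.2 < -M) => show z.2 < C by linarith)
      (by ext z; simp only [mem_union, mem_univ, iff_true]
          rcases lt_trichotomy z.2 C with h | h | h
          · exact Or.inl (Or.inl h)
          · exact Or.inr h
          · exact Or.inl (Or.inr h))
      (fun t ht z hz (h : _ < -M) => by have := (abs_le.mp (hKM t ht z hz)).1; linarith) z hz
    rw [hH1] at e
    rw [← e, f.symm_apply_apply]
    exact hw

/-- ends preserved: both finer statements for a lift -/
def EndsOK (F : Plane → Plane) : Prop :=
  (∀ C : ℝ, ∃ C' : ℝ, ∀ x : Plane, x.2 < C → (F x).2 < C') ∧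
  (∀ C : ℝ, ∃ M : ℝ, ∀ x : Plane, x.2 < M → (F x).2 < C) ∧
  (∀ C : ℝ, ∃ M : ℝ, ∀ x : Plane, M < x.2 → C < (F x).2)

lemma ends_lift (f : Ann ≃ₜ Ann) (F : Plane ≃ₜ Plane) (hiso : IsotopicToId f) (hlift : IsLift f F) :
    EndsOK F := by
  have hsnd : ∀ x : Plane, (F x).2 = (f (prj x)).2 := fun x => by rw [← hlift]; rfl
  refine ⟨fun C => ?_, fun C => ?_, fun C => ?_⟩
  · obtain ⟨M, h1, h2⟩ := ends_f f hiso C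
    refine ⟨M + 1, fun x hx => ?_⟩
    rw [hsnd]
    by_contra h
    have := h1 (f (prj x)) (by linarith)
    rw [f.symm_apply_apply] at this
    have e : (prj x).2 = x.2 := rfl
    linarith
  · obtain ⟨M, h1, h2⟩ := ends_f f.symm (isotopic_symm f hiso) C
    exact ⟨-M, fun x hx => by rw [hsnd]; exact h2 (prj x) hx⟩
  · obtain ⟨M, h1, h2⟩ := ends_f f.symm (isotopic_symm f hiso) C
    exact ⟨M, fun x hx => by rw [hsnd]; exact h1 (prj x) hx⟩

lemma ends_iter {F : Plane → Plane} (h : EndsOK F) (n : ℕ) : EndsOK (F^[n]) := by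
  induction n with
  | zero => exact ⟨fun C => ⟨C, fun x hx => hx⟩, fun C => ⟨C, fun x hx => hx⟩, fun C => ⟨C, fun x hx => hx⟩⟩
  | succ n ih =>
    obtain ⟨a1, a2, a3⟩ := h
    obtain ⟨b1, b2, b3⟩ := ih
    refine ⟨fun C => ?_, fun C => ?_, fun C => ?_⟩
    · obtain ⟨C1, h1⟩ := b1 C
      obtain ⟨C2, h2⟩ := a1 C1
      exact ⟨C2, fun x hx => by rw [Function.iterate_succ_apply']; exact h2 _ (h1 _ hx)⟩
    · obtain ⟨C1, h1⟩ := a2 C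
      obtain ⟨C2, h2⟩ := b2 C1
      exact ⟨C2, fun x hx => by rw [Function.iterate_succ_apply']; exact h1 _ (h2 _ hx)⟩
    · obtain ⟨C1, h1⟩ := a3 C
      obtain ⟨C2, h2⟩ := b3 C1
      exact ⟨C2, fun x hx => by rw [Function.iterate_succ_apply']; exact h1 _ (h2 _ hx)⟩


lemma prj_open : IsOpenMap prj := by
  have h : prj = Prod.map (fun x : ℝ => (x : AddCircle (1:ℝ))) (id : ℝ → ℝ) := rfl
  rw [h]
  exact IsOpenMap.prodMap (QuotientAddGroup.isOpenMap_coe) IsOpenMap.id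

lemma lift_iter {f : Ann ≃ₜ Ann} {F : Plane ≃ₜ Plane} (hlift : IsLift f F) (n : ℕ) (x : Plane) :
    prj (F^[n] x) = f^[n] (prj x) := by
  induction n with
  | zero => rfl
  | succ n ih => rw [Function.iterate_succ_apply', hlift, ih, Function.iterate_succ_apply']

lemma ret_one {f : Ann ≃ₜ Ann} {F : Plane ≃ₜ Plane} (hlift : IsLift f F) (zt : Plane)
    (p : ℤ) (q : ℕ) (hq : 0 < q) (s : ℤ) (hs : s = 1 ∨ s = -1) (φ : ℕ → ℕ) (hφ0 : ∀ k, 0 < φ k)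
    (hφ : Tendsto (fun k => f^[φ k] (prj zt)) atTop (𝓝 (prj zt)))
    (hr : ∀ᶠ k in atTop, (s:ℝ) * (((F^[φ k] zt).1 - zt.1) - (p:ℝ) / q * φ k) < -2)
    (V : Set Plane) (hV : IsOpen V) (hz : zt ∈ V) :
    ∃ n : ℕ, 1 ≤ n ∧ ∃ a : ℤ, s * (q * a - p * n) < 0 ∧ Tr (-a) (F^[n] zt) ∈ V := by
  set V' := V ∩ Metric.ball zt 1 with hV'
  have hV'o : IsOpen V' := hV.inter Metric.isOpen_ball
  have hzV' : zt ∈ V' := ⟨hz, Metric.mem_ball_self one_pos⟩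
  have hnh : prj '' V' ∈ 𝓝 (prj zt) := (prj_open _ hV'o).mem_nhds ⟨zt, hzV', rfl⟩
  obtain ⟨k, hk1, hk2⟩ := ((hφ.eventually hnh).and hr).exists
  obtain ⟨v, hv, hve⟩ := hk1
  rw [← lift_iter hlift, prj_eq_iff] at hve
  obtain ⟨b, hb⟩ := hve
  refine ⟨φ k, hφ0 k, -b, ?_, by rw [neg_neg, ← hb]; exact hv.1⟩
  have h1 : |v.1 - zt.1| < 1 := by
    have := hv.2
    rw [Metric.mem_ball, Prod.dist_eq] at this
    rw [← Real.dist_eq]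
    exact lt_of_le_of_lt (le_max_left _ _) this
  rw [abs_lt] at h1
  have h2 : v.1 = (F^[φ k] zt).1 + b := by rw [hb]; rfl
  have hq' : (0:ℝ) < q := by exact_mod_cast hq
  have h3 : (s:ℝ) * (-b - (p:ℝ)/q * φ k) < 0 := by
    rcases hs with rfl | rfl
    · push_cast at hk2 ⊢; linarith
    · push_cast at hk2 ⊢; linarith
  have h4 : ((s * (q * (-b) - p * (φ k)) : ℤ) : ℝ) < 0 := by
    have : ((s * (q * (-b) - p * (φ k)) : ℤ) : ℝ) = q * ((s:ℝ) * (-b - (p:ℝ)/q * φ k)) := by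
      push_cast; field_simp
    rw [this]
    exact mul_neg_of_pos_of_neg hq' h3
  exact_mod_cast h4

lemma ret_seq {F : Plane → Plane} (hFc : Continuous F) (hFT : ∀ k x, F (Tr k x) = Tr k (F x)) (zt : Plane)
    (good : ℕ → ℤ → Prop) (hadd : ∀ n a n' a', good n a → good n' a' → good (n + n') (a + a'))
    (hret : ∀ V : Set Plane, IsOpen V → zt ∈ V → ∃ n a, good n a ∧ Tr (-a) (F^[n] zt) ∈ V) (k : ℕ) :
    ∀ V : Set Plane, IsOpen V → zt ∈ V → ∃ S : ℕ → ℕ × ℤ, S 0 = 0 ∧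
      ∀ i j, i < j → j ≤ k → ∃ n a, S j = S i + (n, a) ∧ good n a ∧ Tr (-a) (F^[n] zt) ∈ V := by
  induction k with
  | zero => exact fun V _ _ => ⟨fun _ => 0, rfl, fun i j h1 h2 => by omega⟩
  | succ k ih =>
    intro V hV hz
    obtain ⟨n, a, hg, hn⟩ := hret V hV hz
    set g : Plane → Plane := fun x => Tr (-a) (F^[n] x) with hgdef
    have hgc : Continuous g := (Tr_cont _).comp (hFc.iterate n)
    obtain ⟨S, hS0, hS⟩ := ih (V ∩ g ⁻¹' V) (hV.inter (hV.preimage hgc)) ⟨hz, hn⟩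
    refine ⟨fun j => if j = 0 then 0 else (n, a) + S (j - 1), by simp, ?_⟩
    intro i j hij hjk
    obtain ⟨j, rfl⟩ : ∃ j', j = j' + 1 := ⟨j - 1, by omega⟩
    by_cases hi : i = 0
    · subst hi
      by_cases hj : j = 0
      · subst hj
        exact ⟨n, a, by simp [hS0], hg, hn⟩
      · obtain ⟨n', a', e, hg', hv⟩ := hS 0 j (by omega) (by omega)
        rw [hS0, zero_add] at e
        refine ⟨n + n', a + a', by simp [e], hadd _ _ _ _ hg hg', ?_⟩
        have := hv.2
        simp only [hgdef, mem_preimage] at this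
        rw [iter_Tr hFT, Tr_Tr, ← Function.iterate_add_apply] at this
        rw [neg_add]; exact this
    · obtain ⟨i, rfl⟩ : ∃ i', i = i' + 1 := ⟨i - 1, by omega⟩
      obtain ⟨n', a', e, hg', hv⟩ := hS i j (by omega) (by omega)
      refine ⟨n', a', ?_, hg', hv.1⟩
      simp [e, add_assoc]

lemma G_iter {F : Plane → Plane} (hFT : ∀ k x, F (Tr k x) = Tr k (F x)) (p : ℤ) (q k : ℕ) (x : Plane) :
    (fun x => Tr (-p) (F^[q] x))^[k] x = Tr (-p * k) (F^[q * k] x) := by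
  induction k with
  | zero => simp [Tr_zero]
  | succ k ih =>
    rw [Function.iterate_succ_apply', ih]
    rw [iter_Tr hFT, Tr_Tr, ← Function.iterate_add_apply]
    congr 2
    · push_cast; ring
    · ring

lemma ret_G {F : Plane → Plane} (hFc : Continuous F) (hFT : ∀ k x, F (Tr k x) = Tr k (F x)) (zt : Plane)
    (p : ℤ) (q : ℕ) (hq : 0 < q) (s : ℤ) (hs : s = 1 ∨ s = -1)
    (hret : ∀ V : Set Plane, IsOpen V → zt ∈ V →
      ∃ n : ℕ, 1 ≤ n ∧ ∃ a : ℤ, s * (q * a - p * n) < 0 ∧ Tr (-a) (F^[n] zt) ∈ V)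
    (N : ℕ) (hN : 0 < N) (V : Set Plane) (hV : IsOpen V) (hz : zt ∈ V) :
    ∃ n : ℕ, 1 ≤ n ∧ ∃ M : ℕ, 1 ≤ M ∧ Tr (s * M * N) ((fun x => Tr (-p) (F^[q] x))^[n] zt) ∈ V := by
  have : NeZero N := ⟨hN.ne'⟩
  have : NeZero (q * N) := ⟨(Nat.mul_pos hq hN).ne'⟩
  obtain ⟨S, hS0, hS⟩ := ret_seq hFc hFT zt (fun n a => 1 ≤ n ∧ s * (q * a - p * n) < 0)
    (fun n a n' a' h h' => ⟨by omega, by have h2 := h.2; have h3 := h'.2; push_cast; linarith⟩)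
    (fun V hV hz => by obtain ⟨n, h1, a, h2, h3⟩ := hret V hV hz; exact ⟨n, a, ⟨h1, h2⟩, h3⟩)
    (Fintype.card (ZMod (q * N) × ZMod N)) V hV hz
  set k := Fintype.card (ZMod (q * N) × ZMod N) with hk
  obtain ⟨i, j, hij, he⟩ := Fintype.exists_ne_map_eq_of_card_lt
    (fun i : Fin (k+1) => (((S i).1 : ZMod (q * N)), ((S i).2 : ZMod N))) (by simp [hk])
  wlog hlt : i < j generalizing i j
  · exact this j i hij.symm he.symm (lt_of_le_of_ne (not_lt.mp hlt) hij.symm)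
  obtain ⟨n, a, e, ⟨hn, hg⟩, hv⟩ := hS i j hlt (by omega)
  simp only [e, Prod.mk.injEq, Prod.fst_add, Prod.snd_add, Nat.cast_add, Int.cast_add, left_eq_add] at he
  obtain ⟨e1, e2⟩ := he
  rw [ZMod.natCast_eq_zero_iff] at e1
  rw [ZMod.intCast_zmod_eq_zero_iff_dvd] at e2
  obtain ⟨n', rfl⟩ := e1
  obtain ⟨a', rfl⟩ := e2
  have hn' : 1 ≤ n' := by
    rcases Nat.eq_zero_or_pos n' with h | h
    · simp [h] at hn
    · exact h
  have hpos : 0 < s * (p * n' - a') := by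
    push_cast at hg
    have hqN : (0:ℤ) < q * N := by exact_mod_cast Nat.mul_pos hq hN
    have : (q * N : ℤ) * (s * (p * n' - a')) > 0 := by nlinarith
    exact (pos_iff_pos_of_mul_pos this).mp hqN
  refine ⟨N * n', Nat.mul_pos hN hn', (s * (p * n' - a')).toNat, by omega, ?_⟩
  rw [G_iter hFT, Tr_Tr]
  rw [Int.toNat_of_nonneg hpos.le]
  have hs2 : s * s = 1 := by rcases hs with rfl | rfl <;> norm_num
  have : s * (s * (p * n' - a')) * (N:ℤ) + -p * ((N * n' : ℕ) : ℤ) = - (N * a') := by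
    rw [← mul_assoc, hs2]; push_cast; ring
  rw [this, ← mul_assoc]
  exact hv

lemma ret_left {f : Ann ≃ₜ Ann} {F : Plane ≃ₜ Plane} (hlift : IsLift f F) (zt : Plane)
    (p : ℤ) (q : ℕ) (hq : 0 < q)
    (h : sInf (ESet f F (prj zt) zt) < (((p : ℝ) / (q : ℝ) : ℝ) : EReal))
    (V : Set Plane) (hV : IsOpen V) (hz : zt ∈ V) :
    ∃ n : ℕ, 1 ≤ n ∧ ∃ a : ℤ, 1 * (q * a - p * n) < 0 ∧ Tr (-a) (F^[n] zt) ∈ V := by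
  rw [sInf_lt_iff] at h
  obtain ⟨ρ, ⟨φ, hφm, hφ0, hφ, hρ⟩, hlt⟩ := h
  obtain ⟨r, hr1, hr2⟩ := EReal.lt_iff_exists_real_btwn.mp hlt
  refine ret_one hlift zt p q hq 1 (Or.inl rfl) φ hφ0 hφ ?_ V hV hz
  have hr2' : r < (p:ℝ)/q := by exact_mod_cast hr2
  have e1 := hρ.eventually (Iio_mem_nhds hr1)
  have e2 : ∀ᶠ k in atTop, 2 / ((p:ℝ)/q - r) < φ k :=
    (tendsto_natCast_atTop_atTop.comp hφm.tendsto_atTop).eventually_gt_atTop _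
  filter_upwards [e1, e2] with k h1 h2
  have h1' : ((F^[φ k] zt).1 - zt.1) / (φ k : ℝ) < r := by
    have : (((((F^[φ k] zt).1 - zt.1) / (φ k : ℝ) : ℝ)) : EReal) < r := h1
    exact_mod_cast this
  have hk : (0:ℝ) < φ k := by exact_mod_cast hφ0 k
  rw [div_lt_iff₀ hk] at h1'
  rw [div_lt_iff₀ (by linarith)] at h2
  push_cast
  nlinarith

lemma ret_right {f : Ann ≃ₜ Ann} {F : Plane ≃ₜ Plane} (hlift : IsLift f F) (zt : Plane)
    (p : ℤ) (q : ℕ) (hq : 0 < q)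
    (h : (((p : ℝ) / (q : ℝ) : ℝ) : EReal) < sSup (ESet f F (prj zt) zt))
    (V : Set Plane) (hV : IsOpen V) (hz : zt ∈ V) :
    ∃ n : ℕ, 1 ≤ n ∧ ∃ a : ℤ, (-1) * (q * a - p * n) < 0 ∧ Tr (-a) (F^[n] zt) ∈ V := by
  rw [lt_sSup_iff] at h
  obtain ⟨ρ, ⟨φ, hφm, hφ0, hφ, hρ⟩, hlt⟩ := h
  obtain ⟨r, hr1, hr2⟩ := EReal.lt_iff_exists_real_btwn.mp hlt
  refine ret_one hlift zt p q hq (-1) (Or.inr rfl) φ hφ0 hφ ?_ V hV hz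
  have hr1' : (p:ℝ)/q < r := by exact_mod_cast hr1
  have e1 := hρ.eventually (Ioi_mem_nhds hr2)
  have e2 : ∀ᶠ k in atTop, 2 / (r - (p:ℝ)/q) < φ k :=
    (tendsto_natCast_atTop_atTop.comp hφm.tendsto_atTop).eventually_gt_atTop _
  filter_upwards [e1, e2] with k h1 h2
  have h1' : r < ((F^[φ k] zt).1 - zt.1) / (φ k : ℝ) := by
    have : (r : EReal) < (((((F^[φ k] zt).1 - zt.1) / (φ k : ℝ) : ℝ)) : EReal) := h1
    exact_mod_cast this
  have hk : (0:ℝ) < φ k := by exact_mod_cast hφ0 k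
  rw [lt_div_iff₀ hk] at h1'
  rw [div_lt_iff₀ (by linarith)] at h2
  push_cast
  nlinarith


lemma comp_attr {U : Set Plane} {H : Plane → Plane} (hH : Continuous H) (hU : ∀ x ∈ closure U, H x ∈ U)
    {x0 y : Plane} (hy : y ∈ connectedComponentIn U x0) (hy' : H y ∈ connectedComponentIn U x0) :
    ∀ x ∈ closure (connectedComponentIn U x0), H x ∈ connectedComponentIn U x0 := by
  have h1 : IsPreconnected (H '' closure (connectedComponentIn U x0)) :=
    (isPreconnected_connectedComponentIn.closure).image _ hH.continuousOn
  have h2 : H '' closure (connectedComponentIn U x0) ⊆ U := by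
    rintro _ ⟨x, hx, rfl⟩
    exact hU x (closure_mono (connectedComponentIn_subset U x0) hx)
  have h3 := h1.subset_connectedComponentIn (mem_image_of_mem H (subset_closure hy)) h2
  rw [← connectedComponentIn_eq hy'] at h3
  intro x hx
  exact h3 (mem_image_of_mem H hx)

lemma comp_inv {U : Set Plane} (k : ℤ) (hU : ∀ x ∈ U, Tr k x ∈ U)
    {x0 : Plane} (hx0 : x0 ∈ U) (hy' : Tr k x0 ∈ connectedComponentIn U x0) :
    ∀ x ∈ connectedComponentIn U x0, Tr k x ∈ connectedComponentIn U x0 := by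
  have h1 : IsPreconnected (Tr k '' (connectedComponentIn U x0)) :=
    (isPreconnected_connectedComponentIn).image _ (Tr_cont k).continuousOn
  have h2 : Tr k '' (connectedComponentIn U x0) ⊆ U := by
    rintro _ ⟨x, hx, rfl⟩
    exact hU x (connectedComponentIn_subset U x0 hx)
  have h3 := h1.subset_connectedComponentIn (mem_image_of_mem _ (mem_connectedComponentIn hx0)) h2
  rw [← connectedComponentIn_eq hy'] at h3
  intro x hx
  exact h3 (mem_image_of_mem _ hx)

lemma attr_compl (G : Plane ≃ₜ Plane) {Q : Set Plane} (hQ : IsOpen Q)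
    (h : ∀ x ∈ closure Q, G.symm x ∈ Q) : ∀ x ∈ closure (closure Q)ᶜ, G x ∈ (closure Q)ᶜ := by
  intro x hx hx'
  have h1 := h _ hx'
  rw [G.symm_apply_apply] at h1
  obtain ⟨y, hy1, hy2⟩ := mem_closure_iff.mp hx Q hQ h1
  exact hy2 (subset_closure hy1)

lemma tr_closure {Q : Set Plane} {k : ℤ} (h : ∀ x ∈ Q, Tr k x ∈ Q) : ∀ x ∈ closure Q, Tr k x ∈ closure Q := by
  intro x hx
  exact map_mem_closure (Tr_cont k) hx h

lemma tr_compl {Q : Set Plane} {m : ℤ} (h : ∀ k : ℤ, ∀ x ∈ Q, Tr (k * m) x ∈ Q) (k : ℤ) :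
    ∀ x ∈ Qᶜ, Tr (k * m) x ∈ Qᶜ := by
  intro x hx hx'
  have := h (-k) _ hx'
  rw [Tr_Tr, show -k * m + k * m = 0 by ring, Tr_zero] at this
  exact hx this

lemma periodic_bdd (β : ℝ → Plane) (hβc : Continuous β) (m : ℝ)
    (hβ : ∀ s, β (s + 1) = β s + (m, 0)) : ∃ a b : ℝ, ∀ s, a < (β s).2 ∧ (β s).2 < b := by
  have hper : Function.Periodic (fun s => (β s).2) 1 := by intro s; simp [hβ]
  have hc : Continuous (fun s => (β s).2) := by fun_prop
  have hcp := (isCompact_Icc (a := (0:ℝ)) (b := 1)).image hc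
  obtain ⟨b, hb⟩ := hcp.bddAbove
  obtain ⟨a, ha⟩ := hcp.bddBelow
  refine ⟨a - 1, b + 1, fun s => ?_⟩
  have h1 : (β s).2 = (β (Int.fract s)).2 := by
    have := hper.sub_int_mul_eq ⌊s⌋ (x := s)
    simp only [mul_one] at this
    rw [← this]; rfl
  have h2 : (β s).2 ∈ (fun s => (β s).2) '' Icc 0 1 := by
    rw [h1]
    exact ⟨_, ⟨Int.fract_nonneg s, (Int.fract_lt_one s).le⟩, rfl⟩
  have := ha h2
  have := hb h2
  constructor <;> linarith

/-- no open connected set above and below a periodic curve which it misses -/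
lemma no_cross {β : ℝ → Plane} (hβc : Continuous β) {m : ℝ} (hm : m ≠ 0)
    (hβ : ∀ s, β (s + 1) = β s + (m, 0)) {U : Set Plane} (hU : IsOpen U) {x0 : Plane}
    (hd : ∀ s, β s ∉ U) {a b : Plane} (ha : a ∈ connectedComponentIn U x0)
    (hb : b ∈ connectedComponentIn U x0) (h0 : ∀ s, a.2 < (β s).2) (h1 : ∀ s, (β s).2 < b.2) : False := by
  have hc : IsPathConnected (connectedComponentIn U x0) :=
    (hU.connectedComponentIn).isConnected_iff_isPathConnected.mp
      ⟨⟨a, ha⟩, isPreconnected_connectedComponentIn⟩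
  obtain ⟨s, hs⟩ := crossing β hβc m hm hβ (hc.joinedIn a ha b hb) h0 h1
  exact hd s (connectedComponentIn_subset _ _ hs)

lemma half_conn_low (c : ℝ) : IsPreconnected {x : Plane | x.2 < c} := by
  have : {x : Plane | x.2 < c} = univ ×ˢ (Iio c) := by ext; simp
  rw [this]; exact isPreconnected_univ.prod isPreconnected_Iio
lemma half_conn_up (c : ℝ) : IsPreconnected {x : Plane | c < x.2} := by
  have : {x : Plane | c < x.2} = univ ×ˢ (Ioi c) := by ext; simp
  rw [this]; exact isPreconnected_univ.prod isPreconnected_Ioi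

theorem stage3b (G : Plane ≃ₜ Plane) (hE : EndsOK G) (A : Set Plane) (hAc : IsClosed A)
    (hA : ∀ x ∈ A, G x ∈ interior A) (m' : ℕ) (hm' : 0 < m') (hAT : ∀ k : ℤ, ∀ x ∈ A, Tr (k * m') x ∈ A)
    (β : ℝ → Plane) (hβc : Continuous β) (m : ℝ) (hm : m ≠ 0) (hβ : ∀ s, β (s + 1) = β s + (m, 0))
    (hβA : ∀ s, β s ∈ A)
    (γ : ℝ → Plane) (hγc : Continuous γ) (hγ : ∀ s, γ (s + 1) = γ s + ((m':ℝ), 0))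
    (hγA : ∀ s, γ s ∉ A) (y : Plane) (hy : y ∈ connectedComponentIn Aᶜ (γ 0))
    (hy' : G.symm y ∈ connectedComponentIn Aᶜ (γ 0)) :
    ∃ Z : Set Plane, IsOpen Z ∧ (∀ k : ℤ, ∀ x ∈ Z, Tr (k * m') x ∈ Z) ∧
      (∃ c, ∀ x : Plane, x.2 < c → x ∈ Z) ∧ (∃ c', ∀ x ∈ Z, x.2 ≤ c') ∧
      ((∀ x ∈ closure Z, G x ∈ Z) ∨ (∀ x ∈ closure Z, G.symm x ∈ Z)) := by
  have hm0 : (m':ℝ) ≠ 0 := by exact_mod_cast hm'.ne'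
  set Q := connectedComponentIn Aᶜ (γ 0) with hQ
  have hQo : IsOpen Q := hAc.isOpen_compl.connectedComponentIn
  have hQA : Q ⊆ Aᶜ := connectedComponentIn_subset _ _
  have hγQ : ∀ s, γ s ∈ Q := fun s =>
    ((isPreconnected_range hγc).subset_connectedComponentIn (mem_range_self 0)
      (by rintro _ ⟨s, rfl⟩; exact hγA s)) (mem_range_self s)
  have hGQ : ∀ x ∈ closure Q, G.symm x ∈ Q := by
    refine comp_attr G.symm.continuous ?_ hy hy'
    intro x hx hx'
    rw [closure_compl] at hx
    have := hA _ hx'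
    rw [G.apply_symm_apply] at this
    exact hx this
  have hγk : ∀ k : ℤ, Tr (k * m') (γ 0) ∈ Q := by
    intro k
    have h : ∀ k : ℕ, Tr (k * m') (γ 0) = γ k ∧ Tr ((-k) * m') (γ 0) = γ (-k) := by
      intro k
      obtain ⟨a, b⟩ := shift_iter γ m' hγ k
      rw [a, b]
      unfold Tr
      constructor <;> ext <;> simp [sub_eq_add_neg]
    rcases Int.eq_nat_or_neg k with ⟨n, rfl | rfl⟩
    · rw [(h n).1]; exact hγQ _
    · rw [(h n).2]; exact hγQ _
  have hQT : ∀ k : ℤ, ∀ x ∈ Q, Tr (k * m') x ∈ Q := fun k =>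
    comp_inv _ (tr_compl hAT k) (hγA 0) (hγk k)
  set U := (closure Q)ᶜ with hUd
  have hUo : IsOpen U := isClosed_closure.isOpen_compl
  have hGU : ∀ x ∈ closure U, G x ∈ U := attr_compl G hQo hGQ
  have hUT : ∀ k : ℤ, ∀ x ∈ U, Tr (k * m') x ∈ U := tr_compl (fun k => tr_closure (hQT k))
  have hγU : ∀ s, γ s ∉ U := fun s hs => hs (subset_closure (hγQ s))
  obtain ⟨a1, b1, hab1⟩ := periodic_bdd β hβc m hβ
  obtain ⟨a2, b2, hab2⟩ := periodic_bdd γ hγc m' hγ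
  obtain ⟨-, hE2, hE3⟩ := hE
  have hdich : (∀ x ∈ Q, a1 ≤ x.2) ∨ (∀ x ∈ Q, x.2 ≤ b1) := by
    by_contra hcon
    push Not at hcon
    obtain ⟨⟨x, hx, hx'⟩, ⟨w, hw, hw'⟩⟩ := hcon
    exact no_cross hβc hm hβ hAc.isOpen_compl (fun s h => h (hβA s)) hx hw
      (fun s => hx'.trans (hab1 s).1) (fun s => (hab1 s).2.trans hw')
  rcases hdich with hlow | hup
  · have hbot : {x : Plane | x.2 < a1} ⊆ U := by
      intro x hx hx'
      have : closure Q ⊆ {x : Plane | a1 ≤ x.2} :=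
        closure_minimal hlow (isClosed_le continuous_const continuous_snd)
      have h2 : a1 ≤ x.2 := this hx'
      have h3 : x.2 < a1 := hx
      linarith
    set b0 : Plane := (0, a1 - 1) with hb0
    have hb0' : b0 ∈ {x : Plane | x.2 < a1} := by simp [hb0]
    have hZ := (half_conn_low a1).subset_connectedComponentIn hb0' hbot
    obtain ⟨M, hM⟩ := hE2 a1
    set w : Plane := (0, min (M - 1) (min (a1 - 1) (a2 - 1))) with hw
    have hw1 : w.2 < M := by simp [hw]
    have hw2 : w.2 < a1 := by simp [hw]
    have hw3 : w.2 < a2 := by simp [hw]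
    refine ⟨connectedComponentIn U b0, hUo.connectedComponentIn, fun k => ?_, ⟨a1, fun x hx => hZ hx⟩,
      ⟨b2, fun x hx => ?_⟩, Or.inl ?_⟩
    · refine comp_inv _ (hUT k) (hbot hb0') (hZ ?_)
      simp [hb0, Tr]
    · by_contra hcon
      push Not at hcon
      exact no_cross hγc hm0 hγ hUo hγU (hZ hw2) hx (fun s => hw3.trans (hab2 s).1)
        (fun s => (hab2 s).2.trans hcon)
    · exact comp_attr G.continuous hGU (hZ hw2) (hZ (hM _ hw1))
  · have hbot : {x : Plane | b1 < x.2} ⊆ U := by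
      intro x hx hx'
      have : closure Q ⊆ {x : Plane | x.2 ≤ b1} :=
        closure_minimal hup (isClosed_le continuous_snd continuous_const)
      have h2 : x.2 ≤ b1 := this hx'
      have h3 : b1 < x.2 := hx
      linarith
    set b0 : Plane := (0, b1 + 1) with hb0
    have hb0' : b0 ∈ {x : Plane | b1 < x.2} := by simp [hb0]
    have hZ := (half_conn_up b1).subset_connectedComponentIn hb0' hbot
    obtain ⟨M, hM⟩ := hE3 b1
    set w : Plane := (0, max (M + 1) (max (b1 + 1) (b2 + 1))) with hw
    have hw1 : M < w.2 := by simp [hw]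
    have hw2 : b1 < w.2 := by simp [hw]
    have hw3 : b2 < w.2 := by simp [hw]
    set Z := connectedComponentIn U b0 with hZd
    have hZo : IsOpen Z := hUo.connectedComponentIn
    have hZT : ∀ k : ℤ, ∀ x ∈ Z, Tr (k * m') x ∈ Z := by
      intro k
      refine comp_inv _ (hUT k) (hbot hb0') (hZ ?_)
      simp [hb0, Tr]
    have hZl : ∀ x ∈ Z, a2 ≤ x.2 := by
      intro x hx
      by_contra hcon
      push Not at hcon
      exact no_cross hγc hm0 hγ hUo hγU hx (hZ hw2) (fun s => hcon.trans (hab2 s).1)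
        (fun s => (hab2 s).2.trans hw3)
    have hGZ : ∀ x ∈ closure Z, G x ∈ Z := comp_attr G.continuous hGU (hZ hw2) (hZ (hM _ hw1))
    refine ⟨(closure Z)ᶜ, isClosed_closure.isOpen_compl, tr_compl (fun k => tr_closure (hZT k)),
      ⟨a2, fun x hx hx' => ?_⟩, ⟨b1, fun x hx => ?_⟩, Or.inr ?_⟩
    · have : closure Z ⊆ {x : Plane | a2 ≤ x.2} :=
        closure_minimal hZl (isClosed_le continuous_const continuous_snd)
      have h2 : a2 ≤ x.2 := this hx'
      linarith
    · by_contra hcon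
      push Not at hcon
      exact hx (subset_closure (hZ hcon))
    · exact attr_compl G.symm hZo (by simpa using hGZ)


def GH (F : Plane ≃ₜ Plane) (p : ℤ) (q : ℕ) : Plane ≃ₜ Plane := (itH F q).trans (trH (-p))

lemma GH_apply (F : Plane ≃ₜ Plane) (p : ℤ) (q : ℕ) (x : Plane) : GH F p q x = Tr (-p) (F^[q] x) := by
  unfold GH
  rw [Homeomorph.trans_apply, trH_apply, itH_apply]

lemma symm_Tr {F : Plane ≃ₜ Plane} (hFT : ∀ k x, F (Tr k x) = Tr k (F x)) (k : ℤ) (x : Plane) :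
    F.symm (Tr k x) = Tr k (F.symm x) := by
  apply F.injective
  rw [hFT, F.apply_symm_apply, F.apply_symm_apply]

lemma GH_Tr {F : Plane ≃ₜ Plane} (hFT : ∀ k x, F (Tr k x) = Tr k (F x)) (p : ℤ) (q : ℕ) (k : ℤ) (x : Plane) :
    GH F p q (Tr k x) = Tr k (GH F p q x) := by
  rw [GH_apply, GH_apply, iter_Tr hFT, Tr_Tr, Tr_Tr, add_comm]

lemma iter_symm (F : Plane ≃ₜ Plane) (q : ℕ) (x : Plane) : F^[q] (F.symm^[q] x) = x := by
  have : Function.LeftInverse F F.symm := F.apply_symm_apply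
  exact this.iterate q x

lemma GH_symm {F : Plane ≃ₜ Plane} (hFT : ∀ k x, F (Tr k x) = Tr k (F x)) (p : ℤ) (q : ℕ) (x : Plane) :
    (GH F p q).symm x = Tr p (F.symm^[q] x) := by
  apply (GH F p q).injective
  rw [Homeomorph.apply_symm_apply, GH_Tr hFT, GH_apply, iter_symm, Tr_Tr, add_neg_cancel, Tr_zero]

lemma GH_iso {F : Plane ≃ₜ Plane} (hI : Iso F) (p : ℤ) (q : ℕ) : Iso (GH F p q) := by
  have h := (Iso_Tr (-p)).comp (hI.iterate q)
  have : (GH F p q : Plane → Plane) = fun x => Tr (-p) (F^[q] x) := funext (GH_apply F p q)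
  rw [this]; exact h

lemma GH_ends {F : Plane ≃ₜ Plane} (hE : EndsOK F) (p : ℤ) (q : ℕ) : EndsOK (GH F p q) := by
  have h : ∀ x, (GH F p q x).2 = (F^[q] x).2 := fun x => by rw [GH_apply]; rfl
  have := ends_iter hE q
  unfold EndsOK at *
  simpa only [h] using this

lemma inter_symm {f : Ann ≃ₜ Ann} (h : IntersectionProperty f) : IntersectionProperty f.symm := by
  intro c hc
  obtain ⟨_, hz, w, hw, rfl⟩ := h c hc
  exact ⟨w, hw, _, hz, f.symm_apply_apply w⟩

lemma lift_symm {f : Ann ≃ₜ Ann} {F : Plane ≃ₜ Plane} (h : IsLift f F) : IsLift f.symm F.symm := by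
  intro x
  apply f.injective
  rw [← h, F.apply_symm_apply, f.apply_symm_apply]

theorem no_AR (f : Ann ≃ₜ Ann) (F : Plane ≃ₜ Plane) (hiso : IsotopicToId f)
    (hint : IntersectionProperty f) (hlift : IsLift f F) (p : ℤ) (q : ℕ) (hq : 0 < q)
    (A : Set Plane) (hAc : IsClosed A)
    (hA : ∀ x ∈ A, GH F p q x ∈ interior A) (m' : ℕ) (hm' : 0 < m') (hAT : ∀ k : ℤ, ∀ x ∈ A, Tr (k * m') x ∈ A)
    (β : ℝ → Plane) (hβc : Continuous β) (m : ℝ) (hm : m ≠ 0) (hβ : ∀ s, β (s + 1) = β s + (m, 0))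
    (hβA : ∀ s, β s ∈ A)
    (γ : ℝ → Plane) (hγc : Continuous γ) (hγ : ∀ s, γ (s + 1) = γ s + ((m':ℝ), 0))
    (hγA : ∀ s, γ s ∉ A) (y : Plane) (hy : y ∈ connectedComponentIn Aᶜ (γ 0))
    (hy' : (GH F p q).symm y ∈ connectedComponentIn Aᶜ (γ 0)) : False := by
  obtain ⟨hFT, hI⟩ := lift_iso f F hiso hlift
  have hE := ends_lift f F hiso hlift
  obtain ⟨Z, h1, h2, ⟨c, h3⟩, ⟨c', h4⟩, h5 | h5⟩ := stage3b (GH F p q) (GH_ends hE p q) A hAc hA m' hm' hAT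
    β hβc m hm hβ hβA γ hγc hγ hγA y hy hy'
  · exact attr_contra_N f F hint hlift hFT hE.1 q hq (-p) m' hm' Z h1 h2 c c' h3 h4
      (by simpa only [GH_apply] using h5)
  · exact attr_contra_N f.symm F.symm (inter_symm hint) (lift_symm hlift) (symm_Tr hFT)
      (ends_lift f.symm F.symm (isotopic_symm f hiso) (lift_symm hlift)).1 q hq p m' hm' Z h1 h2 c c' h3 h4
      (by simpa only [GH_symm hFT] using h5)


lemma per_path {x : Plane} (m : ℤ) {U : Set Plane} (hU : ∀ k : ℤ, ∀ x ∈ U, Tr (k * m) x ∈ U)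
    (hj : JoinedIn U x (Tr m x)) :
    ∃ β : ℝ → Plane, Continuous β ∧ (∀ s, β (s + 1) = β s + ((m:ℝ), 0)) ∧ β 0 = x ∧ ∀ s, β s ∈ U := by
  obtain ⟨γ, hγ⟩ := hj
  let σ : ℤ → ℝ → Plane := fun k s => Tr (k * m) (γ.extend s)
  refine ⟨fun s => σ ⌊s⌋ (Int.fract s), ?_, ?_, ?_, ?_⟩
  · apply glue_cont
    · intro k
      exact (Tr_cont _).comp γ.continuous_extend
    · intro k
      simp only [σ, Path.extend_one, Path.extend_zero, Tr_Tr]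
      congr 1; ring
  · intro s
    simp only [σ, Int.floor_add_one, Int.fract_add_one]
    unfold Tr
    ext
    · simp; ring
    · simp
  · simp [σ, Tr_zero]
  · intro s
    refine hU _ _ ?_
    have := Int.fract_nonneg s
    have h2 := (Int.fract_lt_one s).le
    rw [Path.extend_apply _ ⟨this, h2⟩]
    exact hγ _

lemma attr_path (G : Plane ≃ₜ Plane) (hGT : ∀ k x, G (Tr k x) = Tr k (G x)) (A : Set Plane)
    (hA : ∀ x ∈ A, G x ∈ interior A) (m : ℤ)
    (hAT : ∀ k : ℤ, ∀ x ∈ A, Tr (k * m) x ∈ A) (Y : Set Plane) (hY : IsPreconnected Y) (hYA : Y ⊆ A)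
    (y : Plane) (hy : y ∈ Y) (hy' : G y ∈ Y) (z : Plane) (hz : z ∈ Y) (n : ℕ) (hzn : G^[n] z ∈ Tr m '' Y) :
    ∃ β : ℝ → Plane, Continuous β ∧ (∀ s, β (s + 1) = β s + ((m.natAbs:ℝ), 0)) ∧
      (∀ s, β s ∈ interior A) ∧ ∃ w ∈ connectedComponentIn (interior A) (β 0),
        G w ∈ connectedComponentIn (interior A) (β 0) := by
  have hGc : ∀ j : ℕ, Continuous (G^[j]) := fun j => G.continuous.iterate j
  set X : Set Plane := ⋃ j : ℕ, G^[j] '' Y with hX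
  have hXc : IsPreconnected X := by
    apply IsPreconnected.iUnion_of_chain
    · intro j; exact hY.image _ (hGc j).continuousOn
    · intro j
      refine ⟨G^[j] (G y), ⟨_, hy', rfl⟩, ⟨y, hy, ?_⟩⟩
      exact Function.iterate_succ_apply _ _ _
  have hAi : ∀ j : ℕ, ∀ x ∈ A, G^[j] x ∈ A := by
    intro j
    induction j with
    | zero => intro x hx; exact hx
    | succ j ih =>
      intro x hx
      rw [Function.iterate_succ_apply']
      exact interior_subset (hA _ (ih x hx))
  have hXA : X ⊆ A := by
    intro x hx
    obtain ⟨j, x, hxY, rfl⟩ := mem_iUnion.mp hx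
    exact hAi j x (hYA hxY)
  have hYX : Y ⊆ X := fun x hx => mem_iUnion.mpr ⟨0, x, hx, rfl⟩
  have hGX : ∀ x ∈ X, G x ∈ X := by
    intro x hx
    obtain ⟨j, x, hxY, rfl⟩ := mem_iUnion.mp hx
    exact mem_iUnion.mpr ⟨j + 1, x, hxY, Function.iterate_succ_apply' _ _ _⟩
  have hznX : G^[n] z ∈ X := mem_iUnion.mpr ⟨n, z, hz, rfl⟩
  have hX2 : IsPreconnected (X ∪ Tr m '' X) :=
    IsPreconnected.union _ hznX (image_mono hYX hzn) hXc (hXc.image _ (Tr_cont m).continuousOn)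
  have hX3 : IsPreconnected (G '' (X ∪ Tr m '' X)) := hX2.image _ G.continuous.continuousOn
  have hsub : G '' (X ∪ Tr m '' X) ⊆ interior A := by
    rintro _ ⟨x, hx, rfl⟩
    apply hA
    rcases hx with hx | ⟨x, hx, rfl⟩
    · exact hXA hx
    · have := hAT 1 x (hXA hx)
      rwa [one_mul] at this
  have hzX := hYX hz
  have h1 : G z ∈ G '' (X ∪ Tr m '' X) := ⟨z, Or.inl hzX, rfl⟩
  have h2 : Tr m (G z) ∈ G '' (X ∪ Tr m '' X) := ⟨Tr m z, Or.inr ⟨z, hzX, rfl⟩, hGT _ _⟩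
  have h3 : G (G z) ∈ G '' (X ∪ Tr m '' X) := ⟨G z, Or.inl (hGX _ hzX), rfl⟩
  have hcc := hX3.subset_connectedComponentIn h1 hsub
  have hpc : IsPathConnected (connectedComponentIn (interior A) (G z)) :=
    (isOpen_interior.connectedComponentIn).isConnected_iff_isPathConnected.mp
      ⟨⟨_, hcc h1⟩, isPreconnected_connectedComponentIn⟩
  have hj : JoinedIn (interior A) (G z) (Tr m (G z)) :=
    (hpc.joinedIn _ (hcc h1) _ (hcc h2)).mono (connectedComponentIn_subset _ _)
  have hiT : ∀ k : ℤ, ∀ x ∈ interior A, Tr (k * m) x ∈ interior A := by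
    intro k x hx
    have e : (trH (k*m)) '' A ⊆ A := by
      rintro _ ⟨x, hx, rfl⟩; exact hAT k x hx
    have := interior_mono e
    rw [← (trH (k*m)).image_interior] at this
    exact this ⟨x, hx, rfl⟩
  obtain ⟨β, b1, b2, b3, b4⟩ := per_path m hiT hj
  have hw : ∃ w ∈ connectedComponentIn (interior A) (β 0),
        G w ∈ connectedComponentIn (interior A) (β 0) := by
    rw [b3]; exact ⟨G z, hcc h1, hcc h3⟩
  rcases Int.natAbs_eq m with h | h
  · refine ⟨β, b1, fun s => ?_, b4, hw⟩
    rw [b2]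
    have : (m:ℝ) = (m.natAbs:ℝ) := by
      have : ((m:ℤ):ℝ) = ((m.natAbs:ℤ):ℝ) := by rw [← h]
      simpa using this
    rw [← this]
  · refine ⟨fun s => β (-s), b1.comp continuous_neg, fun s => ?_, fun s => b4 _, by simpa using hw⟩
    have h4 := b2 (-(s+1))
    rw [show -(s+1)+1 = -s by ring] at h4
    have : (m:ℝ) = -(m.natAbs:ℝ) := by
      have : ((m:ℤ):ℝ) = ((-(m.natAbs:ℤ) : ℤ):ℝ) := by rw [← h]
      simpa using this
    beta_reduce
    rw [h4, this]
    ext <;> simp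

lemma closed_fam {ι : Type*} (B : ι → Set Plane) (hBc : ∀ i, IsCompact (B i)) (hlf : LocallyFinite B)
    (S : Set ι) : IsClosed (⋃ i ∈ S, B i) := by
  rw [biUnion_eq_iUnion]
  exact (hlf.comp_injective Subtype.val_injective).isClosed_iUnion (fun i => (hBc i).isClosed)

lemma int_fam {ι : Type*} (B : ι → Set Plane) (hBc : ∀ i, IsCompact (B i)) (hlf : LocallyFinite B)
    (hcov : ∀ x, ∃ i, x ∈ B i) (S : Set ι) (x : Plane) (hx : ∀ i, x ∈ B i → i ∈ S) :
    x ∈ interior (⋃ i ∈ S, B i) := by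
  have h := closed_fam B hBc hlf Sᶜ
  rw [mem_interior]
  refine ⟨(⋃ i ∈ Sᶜ, B i)ᶜ, ?_, h.isOpen_compl, ?_⟩
  · intro y hy
    obtain ⟨i, hi⟩ := hcov y
    by_cases hS : i ∈ S
    · exact mem_biUnion hS hi
    · exact absurd (mem_biUnion (show i ∈ Sᶜ from hS) hi) hy
  · intro hy
    simp only [mem_iUnion] at hy
    obtain ⟨i, hi, hxi⟩ := hy
    exact hi (hx i hxi)


structure BrickSys (G : Plane ≃ₜ Plane) (N : ℕ) (ι : Type) where
  B : ι → Set Plane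
  comp : ∀ i, IsCompact (B i)
  conn : ∀ i, IsPreconnected (interior (B i))
  bo : ∀ i, B i ⊆ closure (interior (B i))
  dis : ∀ i j, i ≠ j → Disjoint (interior (B i)) (B j)
  free : ∀ i, Free G (B i)
  cov : ∀ x, ∃ i, x ∈ B i
  lf : LocallyFinite B
  sh : ℤ → ι → ι
  hsh : ∀ k i x, x ∈ B i → Tr (k * N) x ∈ B (sh k i)
  bm : Bool → ℤ → ι
  hbm : ∀ e k l, sh k (bm e l) = bm e (l + k)
  cw : Bool → ι
  cv : Bool → ι
  h1 : ∀ e, (B (bm e 0) ∩ B (cw e)).Nonempty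
  h2 : ∀ e, ∃ x ∈ B (bm e 0), G x ∈ B (cw e)
  h3 : ∀ e, (B (bm e 0) ∩ B (cv e)).Nonempty
  h4 : ∀ e, ∃ x ∈ B (cv e), G x ∈ B (bm e 0)

namespace BrickSys
variable {G : Plane ≃ₜ Plane} {N : ℕ} {ι : Type} (S : BrickSys G N ι)

def R (i j : ι) : Prop := ∃ x ∈ S.B i, G x ∈ S.B j

lemma R_sh (hGT : ∀ k x, G (Tr k x) = Tr k (G x)) (k : ℤ) (i j : ι) (h : S.R i j) : S.R (S.sh k i) (S.sh k j) := by
  obtain ⟨x, hx, hx'⟩ := h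
  exact ⟨_, S.hsh k i x hx, by rw [hGT]; exact S.hsh k j _ hx'⟩

lemma Bconn (i : ι) : IsPreconnected (S.B i) :=
  (S.conn i).subset_closure interior_subset (S.bo i)

lemma trans_orbit (x : Plane) (n : ℕ) (i j : ι) (hi : x ∈ S.B i) (hj : G^[n+1] x ∈ S.B j) :
    Relation.TransGen S.R i j := by
  induction n generalizing x i with
  | zero => exact Relation.TransGen.single ⟨x, hi, hj⟩
  | succ n ih =>
    obtain ⟨k, hk⟩ := S.cov (G x)
    exact Relation.TransGen.head ⟨x, hi, hk⟩ (ih (G x) k hk (by rwa [← Function.iterate_succ_apply]))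

lemma RTG_sh (hGT : ∀ k x, G (Tr k x) = Tr k (G x)) (k : ℤ) (i j : ι)
    (h : Relation.ReflTransGen S.R i j) : Relation.ReflTransGen S.R (S.sh k i) (S.sh k j) :=
  h.lift _ (S.R_sh hGT k)

lemma TG_sh (hGT : ∀ k x, G (Tr k x) = Tr k (G x)) (k : ℤ) (i j : ι)
    (h : Relation.TransGen S.R i j) : Relation.TransGen S.R (S.sh k i) (S.sh k j) :=
  h.lift _ (S.R_sh hGT k)

/-- union of an attracting family, its image is in the interior -/
lemma attr_int (𝒜 : Set ι) (h : ∀ i j, i ∈ 𝒜 → S.R i j → j ∈ 𝒜) :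
    ∀ x ∈ ⋃ i ∈ 𝒜, S.B i, G x ∈ interior (⋃ i ∈ 𝒜, S.B i) := by
  intro x hx
  simp only [mem_iUnion] at hx
  obtain ⟨i, hi, hx⟩ := hx
  exact int_fam S.B S.comp S.lf S.cov 𝒜 _ (fun j hj => h i j hi ⟨x, hx, hj⟩)

lemma rep_int (𝒜 : Set ι) (h : ∀ i j, j ∈ 𝒜 → S.R i j → i ∈ 𝒜) :
    ∀ x ∈ ⋃ i ∈ 𝒜, S.B i, G.symm x ∈ interior (⋃ i ∈ 𝒜, S.B i) := by
  intro x hx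
  simp only [mem_iUnion] at hx
  obtain ⟨i, hi, hx⟩ := hx
  exact int_fam S.B S.comp S.lf S.cov 𝒜 _ (fun j hj => h j i hi ⟨_, hj, by rwa [G.apply_symm_apply]⟩)

lemma fam_T (𝒜 : Set ι) (h : ∀ k i, i ∈ 𝒜 → S.sh k i ∈ 𝒜) (M : ℤ) :
    ∀ k : ℤ, ∀ x ∈ ⋃ i ∈ 𝒜, S.B i, Tr (k * (M * N)) x ∈ ⋃ i ∈ 𝒜, S.B i := by
  intro k x hx
  simp only [mem_iUnion] at hx
  obtain ⟨i, hi, hx⟩ := hx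
  rw [← mul_assoc]
  exact mem_biUnion (h (k*M) i hi) (S.hsh (k*M) i x hx)

end BrickSys

lemma no_AR_bricks (f : Ann ≃ₜ Ann) (F : Plane ≃ₜ Plane) (hiso : IsotopicToId f)
    (hint : IntersectionProperty f) (hlift : IsLift f F) (p : ℤ) (q : ℕ) (hq : 0 < q)
    {ι : Type} {N : ℕ} (hN : 0 < N) (S : BrickSys (GH F p q) N ι) (e e' : Bool)
    (z z' : Plane) (n n' : ℕ) (M M' : ℤ) (hM : M ≠ 0) (hM' : M' ≠ 0)
    (hz : z ∈ S.B (S.bm e 0)) (hz' : z' ∈ S.B (S.bm e' 0))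
    (hzn : (GH F p q)^[n] z ∈ S.B (S.bm e M)) (hzn' : (GH F p q)^[n'] z' ∈ S.B (S.bm e' M')) :
    ∃ k l, Relation.ReflTransGen S.R (S.bm e k) (S.bm e' l) := by
  by_contra hcon
  push Not at hcon
  obtain ⟨hFT, hI⟩ := lift_iso f F hiso hlift
  have hGT := GH_Tr hFT p q
  set 𝒜 : Set ι := {i | ∃ k, Relation.ReflTransGen S.R (S.bm e k) i} with h𝒜
  set 𝓡 : Set ι := {i | ∃ k, Relation.ReflTransGen S.R i (S.bm e' k)} with h𝓡
  have hN0 : (N:ℤ) ≠ 0 := by exact_mod_cast hN.ne'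
  have hdisj : ∀ i, i ∈ 𝒜 → i ∉ 𝓡 := by
    rintro i ⟨k, hk⟩ ⟨l, hl⟩
    exact hcon k l (hk.trans hl)
  have hA1 : ∀ i j, i ∈ 𝒜 → S.R i j → j ∈ 𝒜 := by
    rintro i j ⟨k, hk⟩ h
    exact ⟨k, hk.tail h⟩
  have hR1 : ∀ i j, j ∈ 𝓡 → S.R i j → i ∈ 𝓡 := by
    rintro i j ⟨k, hk⟩ h
    exact ⟨k, hk.head h⟩
  have hA2 : ∀ k i, i ∈ 𝒜 → S.sh k i ∈ 𝒜 := by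
    rintro k i ⟨l, hl⟩
    have := S.RTG_sh hGT k _ _ hl
    rw [S.hbm] at this
    exact ⟨_, this⟩
  have hR2 : ∀ k i, i ∈ 𝓡 → S.sh k i ∈ 𝓡 := by
    rintro k i ⟨l, hl⟩
    have := S.RTG_sh hGT k _ _ hl
    rw [S.hbm] at this
    exact ⟨_, this⟩
  set A := ⋃ i ∈ 𝒜, S.B i with hAd
  set Rp := ⋃ i ∈ 𝓡, S.B i with hRd
  have bA : S.bm e 0 ∈ 𝒜 := ⟨0, Relation.ReflTransGen.refl⟩
  have bR : S.bm e' 0 ∈ 𝓡 := ⟨0, Relation.ReflTransGen.refl⟩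
  have cA : S.cw e ∈ 𝒜 := hA1 _ _ bA (S.h2 e)
  have cR : S.cv e' ∈ 𝓡 := hR1 _ _ bR (S.h4 e')
  have shb : ∀ e k x, x ∈ S.B (S.bm e k) → Tr (-k * N) x ∈ S.B (S.bm e 0) := by
    intro e k x hx
    have := S.hsh (-k) _ x hx
    rwa [S.hbm, add_neg_cancel] at this
  have hsubA : ∀ i ∈ 𝒜, S.B i ⊆ A := fun i hi => subset_biUnion_of_mem (u := S.B) hi
  have hsubR : ∀ i ∈ 𝓡, S.B i ⊆ Rp := fun i hi => subset_biUnion_of_mem (u := S.B) hi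
  obtain ⟨y, hy, hy'⟩ := S.h1 e
  obtain ⟨x, hx, hx'⟩ := S.h2 e
  obtain ⟨β, β1, β2, β3, -⟩ := attr_path (GH F p q) hGT A (S.attr_int 𝒜 hA1) (M * N) (S.fam_T 𝒜 hA2 M)
    (S.B (S.bm e 0) ∪ S.B (S.cw e)) (IsPreconnected.union y hy hy' (S.Bconn _) (S.Bconn _))
    (union_subset (hsubA _ bA) (hsubA _ cA)) x (Or.inl hx) (Or.inr hx') z (Or.inl hz) n
    ⟨_, Or.inl (shb _ _ _ hzn), by rw [Tr_Tr, neg_mul, add_neg_cancel, Tr_zero]⟩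
  obtain ⟨y1, hy1, hy1'⟩ := S.h3 e'
  obtain ⟨x1, hx1, hx1'⟩ := S.h4 e'
  have hback : (GH F p q).symm^[n'] (Tr (-M' * N) ((GH F p q)^[n'] z')) = Tr (-M' * N) z' := by
    rw [iter_Tr (symm_Tr hGT)]
    congr 1
    exact iter_symm (GH F p q).symm n' z'
  obtain ⟨γ, γ1, γ2, γ3, w, hw, hw'⟩ := attr_path (GH F p q).symm (symm_Tr hGT) Rp (S.rep_int 𝓡 hR1) (-M' * N)
    (S.fam_T 𝓡 hR2 (-M'))
    (S.B (S.bm e' 0) ∪ S.B (S.cv e')) (IsPreconnected.union y1 hy1 hy1' (S.Bconn _) (S.Bconn _))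
    (union_subset (hsubR _ bR) (hsubR _ cR)) ((GH F p q) x1) (Or.inl hx1') (by rw [(GH F p q).symm_apply_apply]; exact Or.inr hx1)
    (Tr (-M' * N) ((GH F p q)^[n'] z')) (Or.inl (shb _ _ _ hzn')) n' (by rw [hback]; exact ⟨z', Or.inl hz', rfl⟩)
  have hint_disj : interior Rp ⊆ Aᶜ := by
    intro x hx hxA
    simp only [hAd, mem_iUnion] at hxA
    obtain ⟨i, hi, hxi⟩ := hxA
    obtain ⟨u, hu, hu'⟩ := mem_closure_iff.mp (S.bo i hxi) _ isOpen_interior hx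
    have hu2 := interior_subset hu
    simp only [hRd, mem_iUnion] at hu2
    obtain ⟨j, hj, huj⟩ := hu2
    have hij : i ≠ j := by rintro rfl; exact hdisj i hi hj
    exact disjoint_left.mp (S.dis i j hij) hu' huj
  have hcc := connectedComponentIn_mono (γ 0) hint_disj
  refine no_AR f F hiso hint hlift p q hq A (closed_fam S.B S.comp S.lf 𝒜) (S.attr_int 𝒜 hA1)
    (-M' * N).natAbs ?_ ?_ β β1 ((M * N).natAbs : ℝ) ?_ β2 (fun s => interior_subset (β3 s))
    γ γ1 γ2 (fun s => hint_disj (γ3 s)) w (hcc hw) (hcc hw')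
  · rw [Int.natAbs_pos]; exact mul_ne_zero (neg_ne_zero.mpr hM') hN0
  · intro k x hx
    rcases Int.natAbs_eq (-M' * N) with h | h
    · rw [← h]; exact S.fam_T 𝒜 hA2 _ k x hx
    · have := S.fam_T 𝒜 hA2 (-M') (-k) x hx
      rw [h] at this
      rwa [neg_mul_neg] at this
  · have : (M * N).natAbs ≠ 0 := Int.natAbs_ne_zero.mpr (mul_ne_zero hM hN0)
    exact_mod_cast this

theorem bricks_contra (f : Ann ≃ₜ Ann) (F : Plane ≃ₜ Plane) (hiso : IsotopicToId f)
    (hint : IntersectionProperty f) (hlift : IsLift f F) (p : ℤ) (q : ℕ) (hq : 0 < q)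
    (hfp : ∀ x, GH F p q x ≠ x)
    {ι : Type} {N : ℕ} (hN : 0 < N) (S : BrickSys (GH F p q) N ι)
    (z z' : Plane) (n n' : ℕ) (M M' : ℤ) (hM : 1 ≤ M) (hM' : 1 ≤ M') (hn : 1 ≤ n) (hn' : 1 ≤ n')
    (hz : z ∈ S.B (S.bm true 0)) (hz' : z' ∈ S.B (S.bm false 0))
    (hzn : (GH F p q)^[n] z ∈ S.B (S.bm true (-M))) (hzn' : (GH F p q)^[n'] z' ∈ S.B (S.bm false M')) :
    False := by
  obtain ⟨hFT, hI⟩ := lift_iso f F hiso hlift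
  have hGT := GH_Tr hFT p q
  obtain ⟨k, l, h12⟩ := no_AR_bricks f F hiso hint hlift p q hq hN S true false z z' n n' (-M) M'
    (by omega) (by omega) hz hz' hzn hzn'
  obtain ⟨k', l', h21⟩ := no_AR_bricks f F hiso hint hlift p q hq hN S false true z' z n' n M' (-M)
    (by omega) (by omega) hz' hz hzn' hzn
  obtain ⟨n, rfl⟩ : ∃ a, n = a + 1 := ⟨n - 1, by omega⟩
  obtain ⟨n', rfl⟩ : ∃ a, n' = a + 1 := ⟨n' - 1, by omega⟩
  have h11 := S.trans_orbit z n _ _ hz hzn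
  have h22 := S.trans_orbit z' n' _ _ hz' hzn'
  have shift : ∀ e e' a b c, Relation.TransGen S.R (S.bm e a) (S.bm e' b) →
      Relation.TransGen S.R (S.bm e (a + c)) (S.bm e' (b + c)) := by
    intro e e' a b c h
    have := S.TG_sh hGT c _ _ h
    rwa [S.hbm, S.hbm] at this
  have h12' := S.RTG_sh hGT (-k) _ _ h12
  have h21' := S.RTG_sh hGT (-k') _ _ h21
  rw [S.hbm, S.hbm, add_neg_cancel] at h12' h21'
  have comp : ∀ e e' e'' a b, Relation.TransGen S.R (S.bm e 0) (S.bm e' a) →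
      Relation.TransGen S.R (S.bm e' 0) (S.bm e'' b) → Relation.TransGen S.R (S.bm e 0) (S.bm e'' (a + b)) := by
    intro e e' e'' a b h h'
    have := shift _ _ _ _ a h'
    rw [zero_add, add_comm] at this
    exact h.trans this
  have mult : ∀ e a, Relation.TransGen S.R (S.bm e 0) (S.bm e a) → ∀ w : ℕ,
      Relation.TransGen S.R (S.bm e 0) (S.bm e ((w + 1 : ℕ) * a)) := by
    intro e a h w
    induction w with
    | zero => simpa using h
    | succ w ih =>
      have := comp _ _ _ _ _ ih h
      rwa [show ((w + 1 : ℕ) : ℤ) * a + a = ((w + 1 + 1 : ℕ) : ℤ) * a by push_cast; ring] at this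
  have g12 : ∃ a, Relation.TransGen S.R (S.bm true 0) (S.bm false a) := by
    have := shift _ _ _ _ M h11
    rw [zero_add, neg_add_cancel] at this
    have h3 := this.trans_left h12'
    have := shift _ _ _ _ (-M) h3
    rw [add_neg_cancel] at this
    exact ⟨_, this⟩
  have g21 : ∃ a, Relation.TransGen S.R (S.bm false 0) (S.bm true a) := by
    have := shift _ _ _ _ (-M') h22
    rw [zero_add, add_neg_cancel] at this
    have h3 := this.trans_left h21'
    have := shift _ _ _ _ (M') h3
    rw [neg_add_cancel] at this
    exact ⟨_, this⟩
  obtain ⟨a, g12⟩ := g12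
  obtain ⟨c, g21⟩ := g21
  have hs := comp _ _ _ _ _ (comp _ _ _ _ _ g12 (mult _ _ h22 (a + c).natAbs)) g21
  set s := a + ((a + c).natAbs + 1 : ℕ) * M' + c with hsd
  have hpos : 0 < s := by
    rw [hsd]; push_cast
    have : -|a + c| ≤ a + c := neg_abs_le _
    have h0 := abs_nonneg (a + c)
    nlinarith
  obtain ⟨s', hs'⟩ : ∃ s' : ℕ, s = (s' + 1 : ℕ) := ⟨(s - 1).toNat, by push_cast; omega⟩
  obtain ⟨M1, hM1⟩ : ∃ s' : ℕ, M = (s' + 1 : ℕ) := ⟨(M - 1).toNat, by push_cast; omega⟩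
  have hfin := comp _ _ _ _ _ (mult _ _ hs M1) (mult _ _ h11 s')
  rw [← hs', ← hM1, show M * s + s * (-M) = 0 by ring] at hfin
  exact brick_franks (GH F p q) (GH_iso hI p q) hfp S.B (fun i => interior (S.B i)) S.comp
    (fun _ => isOpen_interior) S.conn (fun _ => interior_subset) S.bo S.dis S.free _ hfin


structure CellSys (G : Plane ≃ₜ Plane) (μ : ℝ) (κ : Type) where
  Q : κ → Set Plane
  comp : ∀ c, IsCompact (Q c)
  conv : ∀ c, Convex ℝ (Q c)
  qi : ∀ c, Q c ⊆ closure (interior (Q c))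
  cov : ∀ x, ∃ c, x ∈ Q c
  lf : LocallyFinite Q
  dis : ∀ c d, c ≠ d → Disjoint (interior (Q c)) (Q d)
  sh : ℤ → κ → κ
  hsh : ∀ k c x, x ∈ Q c → Tr k x ∈ Q (sh k c)
  sh_add : ∀ k l c, sh k (sh l c) = sh (k + l) c
  sh_zero : ∀ c, sh 0 c = c
  mesh : ∀ c x y, x ∈ Q c → y ∈ Q c → dist x y < μ
  free : ∀ c, Free G (Q c)

def rect (n : ℕ) (j a b : ℤ) : Set Plane :=
  Icc ((a:ℝ) / n) ((a + 1 : ℝ) / n) ×ˢ Icc ((j:ℝ) + b / n) ((j:ℝ) + (b + 1) / n)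

def cellQ (n : ℤ → ℕ) (c : ℤ × ℤ × ℤ) : Set Plane :=
  {x | (0 ≤ c.2.2 ∧ c.2.2 < n c.1) ∧ x ∈ rect (n c.1) c.1 c.2.1 c.2.2}

lemma rect_lt {n : ℕ} (hn : 0 < n) (a : ℤ) : (a:ℝ) / n < (a + 1 : ℝ) / n := by
  have : (0:ℝ) < n := by exact_mod_cast hn
  apply div_lt_div_of_pos_right _ this; linarith

lemma mem_rect {n : ℕ} (hn : 0 < n) {j a b : ℤ} {x : Plane} : x ∈ rect n j a b ↔
    (a ≤ n * x.1 ∧ n * x.1 ≤ a + 1) ∧ (b ≤ n * (x.2 - j) ∧ n * (x.2 - j) ≤ b + 1) := by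
  have h : (0:ℝ) < n := by exact_mod_cast hn
  unfold rect
  rw [mem_prod, mem_Icc, mem_Icc, div_le_iff₀ h, le_div_iff₀ h, ← le_sub_iff_add_le', ← sub_le_iff_le_add' (b := (j:ℝ)),
    div_le_iff₀ h, le_div_iff₀ h]
  simp only [mul_comm]

lemma mem_int_rect {n : ℕ} (hn : 0 < n) {j a b : ℤ} {x : Plane} : x ∈ interior (rect n j a b) ↔
    (a < n * x.1 ∧ n * x.1 < a + 1) ∧ (b < n * (x.2 - j) ∧ n * (x.2 - j) < b + 1) := by
  have h : (0:ℝ) < n := by exact_mod_cast hn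
  unfold rect
  rw [interior_prod_eq, interior_Icc, interior_Icc, mem_prod, mem_Ioo, mem_Ioo, div_lt_iff₀ h, lt_div_iff₀ h,
    ← lt_sub_iff_add_lt', ← sub_lt_iff_lt_add' (b := (j:ℝ)),
    div_lt_iff₀ h, lt_div_iff₀ h]
  simp only [mul_comm]

lemma rect_qi {n : ℕ} (hn : 0 < n) (j a b : ℤ) : rect n j a b ⊆ closure (interior (rect n j a b)) := by
  unfold rect
  rw [interior_prod_eq, interior_Icc, interior_Icc, closure_prod_eq, closure_Ioo, closure_Ioo]
  · have := rect_lt hn b; linarith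
  · exact (rect_lt hn a).ne

lemma cellQ_cases (n : ℤ → ℕ) (c : ℤ × ℤ × ℤ) : cellQ n c = ∅ ∨
    (cellQ n c = rect (n c.1) c.1 c.2.1 c.2.2 ∧ 0 < n c.1 ∧ 0 ≤ c.2.2 ∧ c.2.2 < n c.1) := by
  by_cases h : 0 ≤ c.2.2 ∧ c.2.2 < n c.1
  · right
    refine ⟨?_, by omega, h⟩
    ext x; simp [cellQ, h]
  · left
    ext x; simp only [cellQ, mem_ofPred_eq, h, false_and, mem_empty_iff_false]

lemma row_n (G : Plane ≃ₜ Plane) (hGT : ∀ k x, G (Tr k x) = Tr k (G x)) (hfp : ∀ x, G x ≠ x) (μ : ℝ) (hμ : 0 < μ)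
    (j : ℤ) : ∃ n : ℕ, 0 < n ∧ (1:ℝ) / n < μ ∧ ∀ x : Plane, (j:ℝ) ≤ x.2 → x.2 ≤ j + 1 → (1:ℝ) / n < dist x (G x) := by
  have hK : IsCompact (Icc (0:ℝ) 1 ×ˢ Icc (j:ℝ) (j+1)) := isCompact_Icc.prod isCompact_Icc
  obtain ⟨x0, hx0, hmin⟩ := hK.exists_isMinOn ⟨((0:ℝ), (j:ℝ)), by simp⟩
    (f := fun x : Plane => dist x (G x)) (by have := G.continuous; fun_prop)
  have hd : 0 < dist x0 (G x0) := dist_pos.mpr (hfp x0).symm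
  obtain ⟨n, hn⟩ := exists_nat_one_div_lt (lt_min hμ hd)
  refine ⟨n + 1, Nat.succ_pos n, ?_, ?_⟩
  · push_cast; exact hn.trans_le (min_le_left _ _)
  · intro x h1 h2
    have h3 : Tr (-⌊x.1⌋) x ∈ Icc (0:ℝ) 1 ×ˢ Icc (j:ℝ) (j+1) := by
      refine ⟨⟨?_, ?_⟩, h1, h2⟩
      · have := Int.floor_le x.1
        simp only [Tr]; push_cast; linarith
      · have := Int.lt_floor_add_one x.1
        simp only [Tr]; push_cast; linarith
    have h4 : dist x0 (G x0) ≤ dist (Tr (-⌊x.1⌋) x) (G (Tr (-⌊x.1⌋) x)) := hmin h3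
    rw [hGT, dist_Tr] at h4
    push_cast
    exact (hn.trans_le (min_le_right _ _)).trans_le h4

lemma rect_dist {n : ℕ} (hn : 0 < n) {j a b : ℤ} {x y : Plane} (hx : x ∈ rect n j a b)
    (hy : y ∈ rect n j a b) : dist x y ≤ 1 / n := by
  rw [mem_rect hn] at hx hy
  have h : (0:ℝ) < n := by exact_mod_cast hn
  obtain ⟨⟨x1, x2⟩, x3, x4⟩ := hx
  obtain ⟨⟨y1, y2⟩, y3, y4⟩ := hy
  rw [Prod.dist_eq, Real.dist_eq, Real.dist_eq]
  apply max_le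
  · rw [le_div_iff₀ h, ← abs_of_pos h, ← abs_mul, abs_le]
    constructor <;> nlinarith
  · rw [le_div_iff₀ h, ← abs_of_pos h, ← abs_mul, abs_le]
    constructor <;> nlinarith

theorem cells_exist (G : Plane ≃ₜ Plane) (hGT : ∀ k x, G (Tr k x) = Tr k (G x)) (hfp : ∀ x, G x ≠ x)
    (μ : ℝ) (hμ : 0 < μ) : Nonempty (CellSys G μ (ℤ × ℤ × ℤ)) := by
  choose n hn0 hn1 hn2 using row_n G hGT hfp μ hμ
  have hpos : ∀ j, (0:ℝ) < n j := fun j => by exact_mod_cast hn0 j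
  have rowb : ∀ c x, x ∈ cellQ n c → (c.1:ℝ) ≤ x.2 ∧ x.2 ≤ c.1 + 1 := by
    rintro ⟨j, a, b⟩ x ⟨⟨h1, h2⟩, hx⟩
    rw [mem_rect (hn0 _)] at hx
    obtain ⟨-, h3, h4⟩ := hx
    simp only at *
    have h1' : (0:ℝ) ≤ b := by exact_mod_cast h1
    have h2' : (b:ℝ) + 1 ≤ n j := by exact_mod_cast h2
    have := hpos j
    constructor <;> nlinarith
  refine ⟨{ Q := cellQ n, comp := ?_, conv := ?_, qi := ?_, cov := ?_, lf := ?_, dis := ?_,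
            sh := fun k c => (c.1, c.2.1 + k * n c.1, c.2.2), hsh := ?_, sh_add := ?_, sh_zero := ?_,
            mesh := ?_, free := ?_ }⟩
  · intro c
    rcases cellQ_cases n c with h | ⟨h, -⟩ <;> rw [h]
    · exact isCompact_empty
    · exact isCompact_Icc.prod isCompact_Icc
  · intro c
    rcases cellQ_cases n c with h | ⟨h, -⟩ <;> rw [h]
    · exact convex_empty
    · exact (convex_Icc _ _).prod (convex_Icc _ _)
  · intro c
    rcases cellQ_cases n c with h | ⟨h, h0, -⟩ <;> rw [h]
    · exact empty_subset _
    · exact rect_qi h0 _ _ _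
  · intro x
    set j := ⌊x.2⌋ with hj
    by_cases hb : ⌊(n j:ℝ) * (x.2 - j)⌋ < n j
    · refine ⟨(j, ⌊(n j:ℝ) * x.1⌋, ⌊(n j:ℝ) * (x.2 - j)⌋), ⟨⟨?_, hb⟩, ?_⟩⟩
      · apply Int.floor_nonneg.mpr
        have := Int.floor_le x.2
        exact mul_nonneg (hpos j).le (by rw [hj]; linarith)
      · rw [mem_rect (hn0 _)]
        exact ⟨⟨Int.floor_le _, (Int.lt_floor_add_one _).le⟩, Int.floor_le _, (Int.lt_floor_add_one _).le⟩
    · exfalso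
      apply hb
      rw [Int.floor_lt]
      have := Int.lt_floor_add_one x.2
      have h2 := hpos j
      rw [← hj] at this
      push_cast
      nlinarith
  · intro x0
    refine ⟨Metric.ball x0 1, Metric.ball_mem_nhds _ one_pos, ?_⟩
    have hfin : (⋃ j ∈ Icc ⌊x0.2 - 3⌋ ⌈x0.2 + 3⌉, (fun ab : ℤ × ℤ => ((j, ab) : ℤ × ℤ × ℤ)) ''
        (Icc ⌊n j * (x0.1 - 1) - 2⌋ ⌈n j * (x0.1 + 1) + 2⌉ ×ˢ Icc 0 (n j : ℤ))).Finite :=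
      (finite_Icc _ _).biUnion fun j _ => ((finite_Icc _ _).prod (finite_Icc _ _)).image _
    refine hfin.subset ?_
    rintro ⟨j, a, b⟩ ⟨x, hx, hxb⟩
    have hr := rowb _ _ hx
    obtain ⟨⟨h1, h2⟩, hx⟩ := hx
    rw [mem_rect (hn0 _)] at hx
    simp only at *
    rw [Metric.mem_ball, Prod.dist_eq, max_lt_iff, Real.dist_eq, Real.dist_eq, abs_lt, abs_lt] at hxb
    have hp := hpos j
    simp only [mem_iUnion, mem_image, mem_prod, mem_Icc]
    refine ⟨j, ⟨?_, ?_⟩, (a, b), ⟨⟨?_, ?_⟩, h1, h2.le⟩, rfl⟩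
    · have : (⌊x0.2 - 3⌋ : ℝ) ≤ j := (Int.floor_le _).trans (by linarith)
      exact_mod_cast this
    · have : (j:ℝ) ≤ ⌈x0.2 + 3⌉ := le_trans (by linarith) (Int.le_ceil _)
      exact_mod_cast this
    · have : (⌊n j * (x0.1 - 1) - 2⌋ : ℝ) ≤ a := (Int.floor_le _).trans (by nlinarith)
      exact_mod_cast this
    · have : (a:ℝ) ≤ ⌈n j * (x0.1 + 1) + 2⌉ := le_trans (by nlinarith) (Int.le_ceil _)
      exact_mod_cast this
  · rintro ⟨j, a, b⟩ ⟨j', a', b'⟩ hne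
    rw [disjoint_left]
    intro x hx hx'
    apply hne
    have hr' := rowb _ _ hx'
    rcases cellQ_cases n (j, a, b) with h | ⟨h, h0, hb1, hb2⟩ <;> rw [h] at hx
    · simp at hx
    · rw [mem_int_rect h0] at hx
      obtain ⟨_, hx'⟩ := hx'
      rw [mem_rect (hn0 _)] at hx'
      simp only at *
      obtain ⟨⟨p1, p2⟩, p3, p4⟩ := hx
      obtain ⟨⟨q1, q2⟩, q3, q4⟩ := hx'
      have hp := hpos j
      have hb1' : (0:ℝ) ≤ b := by exact_mod_cast hb1
      have hb2' : (b:ℝ) + 1 ≤ n j := by exact_mod_cast hb2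
      have r1 : (j:ℝ) < x.2 := by nlinarith
      have r2 : x.2 < j + 1 := by nlinarith
      have e1 : j < j' + 1 := by
        have : (j:ℝ) < j' + 1 := by linarith
        exact_mod_cast this
      have e2 : j' < j + 1 := by
        have : (j':ℝ) < j + 1 := by linarith
        exact_mod_cast this
      have e3 : j = j' := by omega
      subst e3
      have f1 : a < a' + 1 := by
        have : (a:ℝ) < a' + 1 := by linarith
        exact_mod_cast this
      have f2 : a' < a + 1 := by
        have : (a':ℝ) < a + 1 := by linarith
        exact_mod_cast this
      have g1 : b < b' + 1 := by
        have : (b:ℝ) < b' + 1 := by linarith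
        exact_mod_cast this
      have g2 : b' < b + 1 := by
        have : (b':ℝ) < b + 1 := by linarith
        exact_mod_cast this
      have e4 : a = a' := by omega
      have e5 : b = b' := by omega
      rw [e4, e5]
  · rintro k ⟨j, a, b⟩ x ⟨h, hx⟩
    refine ⟨h, ?_⟩
    rw [mem_rect (hn0 _)] at hx ⊢
    simp only [Tr] at *
    push_cast
    obtain ⟨⟨q1, q2⟩, q3⟩ := hx
    refine ⟨⟨?_, ?_⟩, q3⟩ <;> linarith
  · rintro k l ⟨j, a, b⟩
    ext
    · rfl
    · simp only; ring
    · rfl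
  · rintro ⟨j, a, b⟩
    simp
  · rintro c x y ⟨_, hx⟩ ⟨_, hy⟩
    exact (rect_dist (hn0 _) hx hy).trans_lt (hn1 _)
  · intro c x hx hx'
    have hr := rowb _ _ hx
    have h1 := hn2 c.1 x hr.1 hr.2
    have h2 := rect_dist (hn0 _) hx.2 hx'.2
    linarith


namespace CellSys
variable {G : Plane ≃ₜ Plane} {μ : ℝ} {κ : Type} (S : CellSys G μ κ)

def BF (F : Set κ) : Set Plane := ⋃ c ∈ F, S.Q c
def cells (X : Set Plane) : Set κ := {c | (S.Q c ∩ X).Nonempty}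

lemma mem_BF {F : Set κ} {x : Plane} : x ∈ S.BF F ↔ ∃ c ∈ F, x ∈ S.Q c := by
  simp [BF]

lemma BF_closed (F : Set κ) : IsClosed (S.BF F) := closed_fam S.Q S.comp S.lf F

lemma BF_int {F : Set κ} {x : Plane} (h : ∀ c, x ∈ S.Q c → c ∈ F) : x ∈ interior (S.BF F) :=
  int_fam S.Q S.comp S.lf S.cov F x h

lemma sub_cells {X : Set Plane} {x : Plane} (hx : x ∈ X) : x ∈ interior (S.BF (S.cells X)) :=
  S.BF_int fun _ hc => ⟨x, hc, hx⟩

lemma Q_sub {F : Set κ} {c : κ} (hc : c ∈ F) : S.Q c ⊆ S.BF F := subset_biUnion_of_mem (u := S.Q) hc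

lemma BF_bo (F : Set κ) : S.BF F ⊆ closure (interior (S.BF F)) := by
  intro x hx
  obtain ⟨c, hc, hx⟩ := S.mem_BF.mp hx
  exact closure_mono (interior_mono (S.Q_sub hc)) (S.qi c hx)

lemma BF_dis {F F' : Set κ} (h : Disjoint F F') : Disjoint (interior (S.BF F)) (S.BF F') := by
  rw [disjoint_left]
  intro x hx hx'
  obtain ⟨d, hd, hxd⟩ := S.mem_BF.mp hx'
  obtain ⟨u, hu, hu'⟩ := mem_closure_iff.mp (S.qi d hxd) _ isOpen_interior hx
  obtain ⟨c, hc, huc⟩ := S.mem_BF.mp (interior_subset hu)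
  have hne : d ≠ c := by rintro rfl; exact disjoint_left.mp h hc hd
  exact disjoint_left.mp (S.dis d c hne) hu' huc

lemma cells_fin {X K : Set Plane} (hK : IsCompact K) (hX : X ⊆ K) : (S.cells X).Finite :=
  (S.lf.finite_nonempty_inter_compact hK).subset fun _ hc => hc.mono (inter_subset_inter_right _ hX)

lemma BF_compact {F : Set κ} (hF : F.Finite) : IsCompact (S.BF F) :=
  hF.isCompact_biUnion fun c _ => S.comp c

lemma cells_conn {X : Set Plane} (hX : IsPreconnected X) : IsPreconnected (interior (S.BF (S.cells X))) := by
  rcases X.eq_empty_or_nonempty with rfl | ⟨s0, hs0⟩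
  · have : S.BF (S.cells ∅) = ∅ := by
      ext x; simp [mem_BF, cells]
    rw [this]; simp [isPreconnected_empty]
  choose! xc hxc using fun (c : κ) (hc : c ∈ S.cells X) => hc
  have hpc : ∀ c, IsPreconnected (interior (S.Q c)) := fun c => (S.conv c).interior.isPreconnected
  set W : Set Plane := X ∪ ⋃ c ∈ S.cells X, (X ∪ insert (xc c) (interior (S.Q c))) with hW
  have hWc : IsPreconnected W := by
    have e : W = ⋃₀ (insert X ((fun c => X ∪ insert (xc c) (interior (S.Q c))) '' S.cells X)) := by
      rw [sUnion_insert, sUnion_image]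
    rw [e]
    apply isPreconnected_sUnion s0
    · rintro _ (rfl | ⟨c, hc, rfl⟩)
      · exact hs0
      · exact Or.inl hs0
    · rintro _ (rfl | ⟨c, hc, rfl⟩)
      · exact hX
      · refine IsPreconnected.union (xc c) (hxc c hc).2 (mem_insert _ _) hX ?_
        refine (hpc c).subset_closure (subset_insert _ _) ?_
        exact insert_subset (S.qi c (hxc c hc).1) subset_closure
  refine hWc.subset_closure ?_ ?_
  · apply union_subset (fun x hx => S.sub_cells hx)
    apply iUnion₂_subset
    intro c hc
    apply union_subset (fun x hx => S.sub_cells hx)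
    exact insert_subset (S.sub_cells (hxc c hc).2) (interior_mono (S.Q_sub hc))
  · intro x hx
    obtain ⟨c, hc, hxq⟩ := S.mem_BF.mp (interior_subset hx)
    refine closure_mono ?_ (S.qi c hxq)
    intro y hy
    exact Or.inr (mem_biUnion hc (Or.inr (mem_insert_of_mem _ hy)))

lemma cells_thick {X : Set Plane} {x : Plane} (hx : x ∈ S.BF (S.cells X)) : x ∈ Metric.thickening μ X := by
  obtain ⟨c, ⟨y, hy, hyX⟩, hxc⟩ := S.mem_BF.mp hx
  exact Metric.mem_thickening_iff.mpr ⟨y, hyX, S.mesh c x y hxc hy⟩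

lemma arm (F : Set κ) (σ : ℝ → Plane) (hσ : Continuous σ) (a b : ℝ) (hab : a ≤ b)
    (ha : σ a ∈ S.BF F) (hb : σ b ∉ S.BF F) :
    ∃ X : Set Plane, IsPreconnected X ∧ X ⊆ σ '' Icc a b ∧ σ b ∈ X ∧ (∀ x ∈ X, x ∉ S.BF F) ∧
      (S.BF F ∩ S.BF (S.cells X)).Nonempty := by
  set K : Set ℝ := Icc a b ∩ σ ⁻¹' (S.BF F) with hK
  have hKc : IsCompact K := isCompact_Icc.inter_right ((S.BF_closed F).preimage hσ)
  obtain ⟨t, ht, htm⟩ := hKc.exists_isGreatest ⟨a, ⟨le_refl a, hab⟩, ha⟩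
  have htb : t < b := lt_of_le_of_ne ht.1.2 (by rintro rfl; exact hb ht.2)
  refine ⟨σ '' Ioc t b, isPreconnected_Ioc.image _ hσ.continuousOn, ?_, ⟨b, ⟨htb, le_refl b⟩, rfl⟩, ?_, ?_⟩
  · exact image_mono fun u hu => ⟨ht.1.1.trans hu.1.le, hu.2⟩
  · rintro _ ⟨u, hu, rfl⟩ hx
    have : u ≤ t := htm ⟨⟨ht.1.1.trans hu.1.le, hu.2⟩, hx⟩
    exact absurd hu.1 (not_lt.mpr this)
  · refine ⟨σ t, ht.2, ?_⟩
    have h1 : σ t ∈ closure (σ '' Ioc t b) := by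
      have : t ∈ closure (Ioc t b) := by rw [closure_Ioc htb.ne]; exact ⟨le_refl t, htb.le⟩
      exact image_closure_subset_closure_image hσ (mem_image_of_mem σ this)
    exact closure_minimal (fun x hx => interior_subset (S.sub_cells hx)) (S.BF_closed _) h1

end CellSys

/-- the data of three families at a site -/
structure SiteFam {G : Plane ≃ₜ Plane} {μ : ℝ} {κ : Type} (S : CellSys G μ κ) (z : Plane) (ρ : ℝ) where
  F : Fin 3 → Set κ
  ne : ∀ i, ∀ c ∈ F i, (S.Q c).Nonempty
  fin : ∀ i, (F i).Finite
  conn : ∀ i, IsPreconnected (interior (S.BF (F i)))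
  free : ∀ i, Free G (S.BF (F i))
  dis : ∀ i j, i ≠ j → Disjoint (F i) (F j)
  near : ∀ i, ∀ x ∈ S.BF (F i), dist x z < ρ
  hz : z ∈ interior (S.BF (F 0))
  h1 : (S.BF (F 0) ∩ S.BF (F 1)).Nonempty
  h2 : ∃ x ∈ S.BF (F 0), G x ∈ S.BF (F 1)
  h3 : (S.BF (F 0) ∩ S.BF (F 2)).Nonempty
  h4 : ∃ x ∈ S.BF (F 2), G x ∈ S.BF (F 0)

lemma free_ball (G : Plane ≃ₜ Plane) (hf : ∀ x, G x ≠ x) (v : Plane) : ∃ δ > 0, Free G (Metric.ball v δ) := by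
  obtain ⟨δ, hδ, h⟩ := thick_free (K := {v}) (L := {v}) G.continuous isCompact_singleton isCompact_singleton
    (by intro x hx; rw [mem_singleton_iff] at hx; subst hx; exact hf x)
  refine ⟨δ, hδ, ?_⟩
  simpa [Free, Metric.thickening_singleton] using h

/-- small parameters for one arm -/
lemma arm_eta (G : Plane ≃ₜ Plane) (z v w : Plane) (hw : G v = w) (δ : ℝ) (hδ : 0 < δ) :
    ∃ σ : ℝ → Plane, Continuous σ ∧ (∀ t ≤ 0, σ t = w - t • (z - w)) ∧
      (∀ t ≥ 0, σ t = G (v + t • (z - v))) ∧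
      ∃ η0 > 0, ∀ t ∈ Icc (-η0) η0, dist (σ t) w < δ := by
  let σ : ℝ → Plane := fun t => if t ≤ 0 then w - t • (z - w) else G (v + t • (z - v))
  have hσ : Continuous σ := by
    apply Continuous.if_le
    · fun_prop
    · exact G.continuous.comp (by fun_prop)
    · exact continuous_id
    · exact continuous_const
    · intro t ht
      subst ht
      simp [hw]
  have h0 : σ 0 = w := by simp [σ]
  refine ⟨σ, hσ, fun t ht => by simp [σ, ht], fun t ht => ?_, ?_⟩
  · rcases ht.eq_or_lt with h | h
    · subst h; simp [σ, hw]
    · simp [σ, not_le.mpr h]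
  · obtain ⟨ε, hε, h⟩ := Metric.continuous_iff.mp hσ 0 δ hδ
    refine ⟨ε / 2, by linarith, fun t ht => ?_⟩
    rw [h0] at h
    apply h
    rw [Real.dist_eq, sub_zero, abs_lt]
    constructor <;> linarith [ht.1, ht.2]


lemma seg_pt_ball {z w : Plane} {r : ℝ} (hr : 0 < r) (hw : w ∈ Metric.sphere z r) {η : ℝ} (hη : 0 < η)
    {t : ℝ} (ht : t ∈ Icc η 1) : w + t • (z - w) ∈ Metric.ball z r := by
  rw [mem_sphere_iff_norm] at hw
  rw [mem_ball_iff_norm, show w + t • (z - w) - z = (1 - t) • (w - z) by module, norm_smul, hw,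
    Real.norm_eq_abs, abs_of_nonneg (by linarith [ht.2])]
  nlinarith [ht.1]

theorem site (G : Plane ≃ₜ Plane) (hf : ∀ x, G x ≠ x) (z : Plane) :
    ∃ μ0 > 0, ∃ ρ > 0, ∀ μ, μ ≤ μ0 → ∀ (κ : Type) (S : CellSys G μ κ), Nonempty (SiteFam S z ρ) := by
  obtain ⟨r, hr, hball, v, hv, hw⟩ := critical_ball G z (hf z)
  obtain ⟨w, hwd⟩ : ∃ w, G v = w := ⟨_, rfl⟩
  rw [hwd] at hw
  have hvw : v ≠ w := by rw [← hwd]; exact (hf v).symm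
  have hsy : G.symm w = v := by rw [← hwd, G.symm_apply_apply]
  obtain ⟨δv, hδv, hfv⟩ := free_ball G hf v
  obtain ⟨δw, hδw, hfw⟩ := free_ball G hf w
  have hdvw : 0 < dist v w := dist_pos.mpr hvw
  obtain ⟨δ, hδ, d1, d2, d3, d4⟩ : ∃ δ > 0, δ ≤ δv ∧ δ ≤ δw ∧ δ ≤ 1 ∧ δ ≤ dist v w / 2 :=
    ⟨min (min δv δw) (min 1 (dist v w / 2)), by positivity, (min_le_left _ _).trans (min_le_left _ _),
      (min_le_left _ _).trans (min_le_right _ _), (min_le_right _ _).trans (min_le_left _ _),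
      (min_le_right _ _).trans (min_le_right _ _)⟩
  obtain ⟨σ, hσ, hσn, hσp, η1, hη1, hσd⟩ := arm_eta G z v w hwd (δ / 2) (by linarith)
  obtain ⟨σ', hσ', hσn', hσp', η2, hη2, hσd'⟩ := arm_eta G.symm z w v hsy (δ / 2) (by linarith)
  obtain ⟨η, hη, e1, e2, e3⟩ : ∃ η > 0, η ≤ η1 ∧ η ≤ η2 ∧ η ≤ 1 :=
    ⟨min η1 (min η2 1), by positivity, min_le_left _ _, (min_le_right _ _).trans (min_le_left _ _),
      (min_le_right _ _).trans (min_le_right _ _)⟩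
  set Sb : Set Plane := (fun t : ℝ => w + t • (z - w)) '' Icc η 1 ∪ (fun t : ℝ => v + t • (z - v)) '' Icc η 1 with hSb
  have hSbc : IsCompact Sb := (isCompact_Icc.image (by fun_prop)).union (isCompact_Icc.image (by fun_prop))
  have hSbb : Sb ⊆ Metric.ball z r := by
    rintro _ (⟨t, ht, rfl⟩ | ⟨t, ht, rfl⟩)
    · exact seg_pt_ball hr hw hη ht
    · exact seg_pt_ball hr hv hη ht
  have m1 : (1:ℝ) ∈ Icc η 1 := ⟨e3, le_refl _⟩
  have mη : η ∈ Icc η 1 := ⟨le_refl _, e3⟩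
  have hz1 : z ∈ (fun t : ℝ => w + t • (z - w)) '' Icc η 1 := ⟨1, m1, by module⟩
  have hz2 : z ∈ (fun t : ℝ => v + t • (z - v)) '' Icc η 1 := ⟨1, m1, by module⟩
  have hSbp : IsPreconnected Sb :=
    IsPreconnected.union z hz1 hz2 (isPreconnected_Icc.image _ (by fun_prop)) (isPreconnected_Icc.image _ (by fun_prop))
  obtain ⟨δ2, hδ2, hth⟩ := thick_free G.continuous hSbc hSbc (fun x hx hx' => hball x (hSbb hx) (hSbb hx'))
  refine ⟨min (δ / 2) δ2, by positivity, r + 1, by linarith, fun μ hμ κ S => ?_⟩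
  have hμ1 : μ ≤ δ / 2 := hμ.trans (min_le_left _ _)
  have hμ2 : μ ≤ δ2 := hμ.trans (min_le_right _ _)
  have inB : ∀ {X : Set Plane} {x}, x ∈ X → x ∈ S.BF (S.cells X) := fun hx => interior_subset (S.sub_cells hx)
  have hfree0 : Free G (S.BF (S.cells Sb)) := by
    intro x hx hx'
    exact hth x (Metric.thickening_mono hμ2 _ (S.cells_thick hx)) (Metric.thickening_mono hμ2 _ (S.cells_thick hx'))
  have hwη : w + η • (z - w) ∈ Sb := Or.inl ⟨η, mη, rfl⟩
  have hvη : v + η • (z - v) ∈ Sb := Or.inr ⟨η, mη, rfl⟩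
  have a1 : σ (-η) = w + η • (z - w) := by rw [hσn _ (by linarith)]; module
  have a2 : σ η = G (v + η • (z - v)) := hσp _ hη.le
  have a3 : σ' (-η) = v + η • (z - v) := by rw [hσn' _ (by linarith)]; module
  have a4 : σ' η = G.symm (w + η • (z - w)) := hσp' _ hη.le
  obtain ⟨X1, x11, x12, x13, x14, x15⟩ := S.arm (S.cells Sb) σ hσ (-η) η (by linarith)
    (by rw [a1]; exact inB hwη) (by rw [a2]; exact hfree0 _ (inB hvη))
  obtain ⟨X2, x21, x22, x23, x24, x25⟩ := S.arm (S.cells Sb) σ' hσ' (-η) η (by linarith)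
    (by rw [a3]; exact inB hvη) (by
      rw [a4]; intro h
      have := hfree0 _ h
      rw [G.apply_symm_apply] at this
      exact this (inB hwη))
  have n1 : ∀ x ∈ S.BF (S.cells X1), dist x w < δ := by
    intro x hx
    obtain ⟨y, hy, hxy⟩ := Metric.mem_thickening_iff.mp (S.cells_thick hx)
    obtain ⟨t, ht, rfl⟩ := x12 hy
    have := hσd t ⟨by linarith [ht.1], by linarith [ht.2]⟩
    have := dist_triangle x (σ t) w
    linarith
  have n2 : ∀ x ∈ S.BF (S.cells X2), dist x v < δ := by
    intro x hx
    obtain ⟨y, hy, hxy⟩ := Metric.mem_thickening_iff.mp (S.cells_thick hx)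
    obtain ⟨t, ht, rfl⟩ := x22 hy
    have := hσd' t ⟨by linarith [ht.1], by linarith [ht.2]⟩
    have := dist_triangle x (σ' t) v
    linarith
  have hdw : dist w z = r := hw
  have hdv : dist v z = r := hv
  have D1 : Disjoint (S.cells Sb) (S.cells X1) := by
    rw [disjoint_left]
    rintro c hc ⟨x, hx, hx'⟩
    exact x14 x hx' (S.Q_sub hc hx)
  have D2 : Disjoint (S.cells Sb) (S.cells X2) := by
    rw [disjoint_left]
    rintro c hc ⟨x, hx, hx'⟩
    exact x24 x hx' (S.Q_sub hc hx)
  have D3 : Disjoint (S.cells X1) (S.cells X2) := by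
    rw [disjoint_left]
    rintro c hc hc'
    have hc0 := hc
    obtain ⟨x, hx, hx'⟩ := hc
    have q1 := n1 x (S.Q_sub hc0 hx)
    have q2 := n2 x (S.Q_sub hc' hx)
    have := dist_triangle v x w
    rw [dist_comm v x] at this
    linarith
  let Xs : Fin 3 → Set Plane := ![Sb, X1, X2]
  have hXs : ∀ P : Set Plane → Prop, P Sb → P X1 → P X2 → ∀ i, P (Xs i) := by
    intro P p0 p1 p2 i
    fin_cases i
    · exact p0
    · exact p1
    · exact p2
  refine ⟨{ F := fun i => S.cells (Xs i), ne := ?_, fin := ?_, conn := ?_, free := ?_, dis := ?_, near := ?_,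
            hz := S.sub_cells (Or.inl hz1), h1 := x15, h2 := ⟨_, inB hvη, by rw [← a2]; exact inB x13⟩, h3 := x25,
            h4 := ⟨σ' η, inB x23, by rw [a4, G.apply_symm_apply]; exact inB hwη⟩ }⟩
  · intro i c hc
    exact hc.mono inter_subset_left
  · refine hXs (fun X => (S.cells X).Finite) ?_ ?_ ?_
    · exact S.cells_fin hSbc (le_refl _)
    · exact S.cells_fin (isCompact_Icc.image hσ) x12
    · exact S.cells_fin (isCompact_Icc.image hσ') x22
  · exact hXs (fun X => IsPreconnected (interior (S.BF (S.cells X)))) (S.cells_conn hSbp) (S.cells_conn x11)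
      (S.cells_conn x21)
  · refine hXs (fun X => Free G (S.BF (S.cells X))) hfree0 ?_ ?_
    · intro x hx hx'
      exact hfw x (lt_of_lt_of_le (n1 x hx) d2) (lt_of_lt_of_le (n1 _ hx') d2)
    · intro x hx hx'
      exact hfv x (lt_of_lt_of_le (n2 x hx) d1) (lt_of_lt_of_le (n2 _ hx') d1)
  · intro i j hij
    fin_cases i <;> fin_cases j
    · exact absurd rfl hij
    · exact D1
    · exact D2
    · exact D1.symm
    · exact absurd rfl hij
    · exact D3
    · exact D2.symm
    · exact D3.symm
    · exact absurd rfl hij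
  · refine hXs (fun X => ∀ x ∈ S.BF (S.cells X), dist x z < r + 1) ?_ ?_ ?_
    · intro x hx
      obtain ⟨y, hy, hxy⟩ := Metric.mem_thickening_iff.mp (S.cells_thick hx)
      have h1 : dist y z < r := hSbb hy
      have := dist_triangle x y z
      linarith
    · intro x hx
      have := n1 x hx
      have := dist_triangle x w z
      linarith
    · intro x hx
      have := n2 x hx
      have := dist_triangle x v z
      linarith


namespace CellSys
variable {G : Plane ≃ₜ Plane} {μ : ℝ} {κ : Type} (S : CellSys G μ κ)

lemma mem_BF_shift (m : ℤ) (A : Set κ) (x : Plane) :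
    x ∈ S.BF {c | S.sh (-m) c ∈ A} ↔ Tr (-m) x ∈ S.BF A := by
  rw [S.mem_BF, S.mem_BF]
  constructor
  · rintro ⟨c, hc, hx⟩
    exact ⟨_, hc, S.hsh _ _ _ hx⟩
  · rintro ⟨c, hc, hx⟩
    refine ⟨S.sh m c, ?_, ?_⟩
    · change S.sh (-m) (S.sh m c) ∈ A
      rwa [S.sh_add, neg_add_cancel, S.sh_zero]
    · have := S.hsh m _ _ hx
      rwa [Tr_Tr, add_neg_cancel, Tr_zero] at this

lemma BF_shift (m : ℤ) (A : Set κ) : S.BF {c | S.sh (-m) c ∈ A} = trH m '' S.BF A := by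
  ext x
  rw [S.mem_BF_shift]
  constructor
  · intro h
    exact ⟨_, h, by rw [trH_apply, Tr_Tr, add_neg_cancel, Tr_zero]⟩
  · rintro ⟨y, hy, rfl⟩
    rwa [trH_apply, Tr_Tr, neg_add_cancel, Tr_zero]

end CellSys

section asm
variable {G : Plane ≃ₜ Plane} {μ : ℝ} {κ : Type}

/-- families of cells making up the bricks -/
def fam0 (S : CellSys G μ κ) (A : Bool → Fin 3 → Set κ) (off : Bool → ℤ) (N : ℕ)
    (i : Bool × ℤ × Fin 3) : Set κ :=
  {c | S.sh (-(i.2.1 * N + off i.1)) c ∈ A i.1 i.2.2}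

def fam1 (S : CellSys G μ κ) (A : Bool → Fin 3 → Set κ) (off : Bool → ℤ) (N : ℕ) :
    ((Bool × ℤ × Fin 3) ⊕ κ) → Set κ
  | Sum.inl i => fam0 S A off N i
  | Sum.inr c => {d | d = c ∧ ∀ i, c ∉ fam0 S A off N i}

def shI (S : CellSys G μ κ) (N : ℕ) (k : ℤ) :
    ((Bool × ℤ × Fin 3) ⊕ κ) → ((Bool × ℤ × Fin 3) ⊕ κ)
  | Sum.inl i => Sum.inl (i.1, i.2.1 + k, i.2.2)
  | Sum.inr c => Sum.inr (S.sh (k * N) c)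

lemma fam0_sh (S : CellSys G μ κ) (A : Bool → Fin 3 → Set κ) (off : Bool → ℤ) (N : ℕ) (k : ℤ)
    (i : Bool × ℤ × Fin 3) (c : κ) :
    S.sh (k * N) c ∈ fam0 S A off N (i.1, i.2.1 + k, i.2.2) ↔ c ∈ fam0 S A off N i := by
  unfold fam0
  simp only [mem_ofPred_eq]
  rw [S.sh_add]
  have : -((i.2.1 + k) * (N:ℤ) + off i.1) + k * N = -(i.2.1 * N + off i.1) := by ring
  rw [this]

theorem asm_bricks (hGT : ∀ k x, G (Tr k x) = Tr k (G x)) (S : CellSys G μ κ) (z : Bool → Plane)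
    (ρ : Bool → ℝ) (R : ℝ) (hρ : ∀ e, ρ e ≤ R) (W : ∀ e, SiteFam S (z e) (ρ e)) (off : Bool → ℤ) (N : ℕ)
    (sep : ∀ (e e' : Bool) (k k' : ℤ), (e, k) ≠ (e', k') →
      2 * R ≤ |((z e).1 + (k * N + off e)) - ((z e').1 + (k' * N + off e'))|) :
    ∃ T : BrickSys G N ((Bool × ℤ × Fin 3) ⊕ κ), ∀ e k x, x ∈ T.B (T.bm e k) ↔
      Tr (-(k * N + off e)) x ∈ S.BF ((W e).F 0) := by
  set A : Bool → Fin 3 → Set κ := fun e => (W e).F with hA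
  have nr : ∀ i c x, c ∈ fam0 S A off N i → x ∈ S.Q c →
      |x.1 - ((z i.1).1 + (i.2.1 * N + off i.1))| < R := by
    intro i c x hc hx
    have h1 := (W i.1).near i.2.2 _ (S.mem_BF.mpr ⟨_, hc, S.hsh _ _ _ hx⟩)
    have h2 : |(Tr (-(i.2.1 * N + off i.1)) x).1 - (z i.1).1| < R := by
      rw [← Real.dist_eq]
      exact lt_of_le_of_lt (le_max_left _ _) (lt_of_lt_of_le h1 (hρ _))
    have h3 : (Tr (-(i.2.1 * N + off i.1)) x).1 - (z i.1).1 = x.1 - ((z i.1).1 + (i.2.1 * N + off i.1)) := by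
      unfold Tr; push_cast; ring
    rwa [h3] at h2
  have ne : ∀ i c, c ∈ fam0 S A off N i → (S.Q c).Nonempty := by
    intro i c hc
    obtain ⟨x, hx⟩ := (W i.1).ne _ _ hc
    have := S.hsh (i.2.1 * N + off i.1) _ _ hx
    rw [S.sh_add, add_neg_cancel, S.sh_zero] at this
    exact ⟨_, this⟩
  have d0 : ∀ i j c, c ∈ fam0 S A off N i → c ∈ fam0 S A off N j → i = j := by
    rintro ⟨e, k, a⟩ ⟨e', k', a'⟩ c hi hj
    by_cases h : (e, k) = (e', k')
    · obtain ⟨rfl, rfl⟩ := Prod.mk.inj h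
      by_cases ha : a = a'
      · rw [ha]
      · exact absurd hj (disjoint_left.mp ((W e).dis a a' ha) hi)
    · exfalso
      obtain ⟨x, hx⟩ := ne _ _ hi
      have h1 := nr _ _ _ hi hx
      have h2 := nr _ _ _ hj hx
      have h3 := sep _ _ _ _ h
      simp only at h1 h2
      rw [abs_lt] at h1 h2
      rcases le_abs.mp h3 with h3 | h3 <;> linarith [h1.1, h1.2, h2.1, h2.2]
  have d1 : ∀ i j c, c ∈ fam1 S A off N i → c ∈ fam1 S A off N j → i = j := by
    rintro (i | c) (j | d) b hi hj
    · rw [d0 i j b hi hj]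
    · obtain ⟨rfl, h⟩ := hj
      exact absurd hi (h i)
    · obtain ⟨rfl, h⟩ := hi
      exact absurd hj (h j)
    · rw [← hi.1, ← hj.1]
  have sub : ∀ c, fam1 S A off N (Sum.inr c) ⊆ {c} := fun c d hd => hd.1
  have inr_cases : ∀ c, S.BF (fam1 S A off N (Sum.inr c)) = S.Q c ∨ S.BF (fam1 S A off N (Sum.inr c)) = ∅ := by
    intro c
    rcases subset_singleton_iff_eq.mp (sub c) with h | h
    · right; rw [h]; simp [CellSys.BF]
    · left; rw [h]; simp [CellSys.BF]
  have cov1 : ∀ c, ∃ i, c ∈ fam1 S A off N i := by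
    intro c
    by_cases h : ∃ i, c ∈ fam0 S A off N i
    · obtain ⟨i, hi⟩ := h
      exact ⟨Sum.inl i, hi⟩
    · push Not at h
      exact ⟨Sum.inr c, rfl, h⟩
  have inlB : ∀ i, S.BF (fam1 S A off N (Sum.inl i)) = trH (i.2.1 * N + off i.1) '' S.BF ((W i.1).F i.2.2) :=
    fun i => S.BF_shift _ _
  have mB : ∀ i x, Tr (i.2.1 * N + off i.1) x ∈ S.BF (fam1 S A off N (Sum.inl i)) ↔ x ∈ S.BF ((W i.1).F i.2.2) := by
    intro i x
    rw [inlB, ← trH_apply, (trH _).injective.mem_set_image]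
  refine ⟨{ B := fun i => S.BF (fam1 S A off N i), comp := ?_, conn := ?_, bo := fun i => S.BF_bo _,
            dis := ?_, free := ?_, cov := ?_, lf := ?_, sh := shI S N, hsh := ?_,
            bm := fun e k => Sum.inl (e, k, 0), hbm := fun e k l => rfl,
            cw := fun e => Sum.inl (e, 0, 1), cv := fun e => Sum.inl (e, 0, 2),
            h1 := ?_, h2 := ?_, h3 := ?_, h4 := ?_ }, ?_⟩
  · rintro (i | c)
    · rw [inlB]
      exact (S.BF_compact ((W _).fin _)).image (trH _).continuous
    · rcases inr_cases c with h | h <;> rw [h]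
      · exact S.comp c
      · exact isCompact_empty
  · rintro (i | c)
    · rw [inlB, ← (trH _).image_interior]
      exact ((W _).conn _).image _ (trH _).continuous.continuousOn
    · rcases inr_cases c with h | h <;> rw [h]
      · exact (S.conv c).interior.isPreconnected
      · rw [interior_empty]; exact isPreconnected_empty
  · intro i j hij
    apply S.BF_dis
    rw [disjoint_left]
    exact fun c hc hc' => hij (d1 i j c hc hc')
  · rintro (i | c)
    · rw [inlB]
      rintro _ ⟨x, hx, rfl⟩
      rw [trH_apply, hGT, ← trH_apply, (trH _).injective.mem_set_image]
      exact (W _).free _ x hx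
    · rcases inr_cases c with h | h <;> rw [h]
      · exact S.free c
      · exact fun x hx => hx.elim
  · intro x
    obtain ⟨c, hc⟩ := S.cov x
    obtain ⟨i, hi⟩ := cov1 c
    exact ⟨i, S.Q_sub hi hc⟩
  · intro x
    obtain ⟨U, hU, hfin⟩ := S.lf x
    refine ⟨U, hU, ?_⟩
    refine (hfin.biUnion (t := fun c => {i | c ∈ fam1 S A off N i}) fun c _ => ?_).subset ?_
    · exact Set.Subsingleton.finite fun i hi j hj => d1 i j c hi hj
    · rintro i ⟨y, hy, hyU⟩
      obtain ⟨c, hc, hyc⟩ := S.mem_BF.mp hy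
      exact mem_biUnion (x := c) ⟨y, hyc, hyU⟩ hc
  · rintro k (i | c) x hx
    · obtain ⟨c, hc, hxc⟩ := S.mem_BF.mp hx
      exact S.mem_BF.mpr ⟨_, (fam0_sh S A off N k i c).mpr hc, S.hsh _ _ _ hxc⟩
    · obtain ⟨d, ⟨rfl, hd⟩, hxc⟩ := S.mem_BF.mp hx
      refine S.mem_BF.mpr ⟨S.sh (k * N) d, ⟨rfl, ?_⟩, S.hsh _ _ _ hxc⟩
      intro i hi
      refine hd (i.1, i.2.1 - k, i.2.2) ?_
      rw [← fam0_sh S A off N k]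
      simpa using hi
  · intro e
    obtain ⟨x, h, h'⟩ := (W e).h1
    exact ⟨_, (mB (e, 0, 0) x).mpr h, (mB (e, 0, 1) x).mpr h'⟩
  · intro e
    obtain ⟨x, h, h'⟩ := (W e).h2
    refine ⟨_, (mB (e, 0, 0) x).mpr h, ?_⟩
    rw [hGT]
    exact (mB (e, 0, 1) _).mpr h'
  · intro e
    obtain ⟨x, h, h'⟩ := (W e).h3
    exact ⟨_, (mB (e, 0, 0) x).mpr h, (mB (e, 0, 2) x).mpr h'⟩
  · intro e
    obtain ⟨x, h, h'⟩ := (W e).h4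
    refine ⟨_, (mB (e, 0, 2) x).mpr h, ?_⟩
    rw [hGT]
    exact (mB (e, 0, 0) _).mpr h'
  · intro e k x
    exact S.mem_BF_shift _ _ _

end asm

lemma sep_exists (a b R : ℝ) (hR : 0 < R) : ∃ (k0 : ℤ) (N : ℕ), 0 < N ∧
    ∀ (e e' : Bool) (k k' : ℤ), (e, k) ≠ (e', k') →
      2 * R ≤ |((bif e then a else b) + (k * N + ((bif e then 0 else k0 : ℤ) : ℝ))) -
        ((bif e' then a else b) + (k' * N + ((bif e' then 0 else k0 : ℤ) : ℝ)))| := by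
  obtain ⟨k0, hk0⟩ := exists_int_gt (a - b + 2 * R)
  obtain ⟨N, hN⟩ := exists_nat_gt (2 * R + |a - b - k0|)
  have hN0 : 0 < (N:ℝ) := lt_of_le_of_lt (by positivity) hN
  have hd : 2 * R ≤ |a - b - k0| := le_abs.mpr (Or.inr (by linarith))
  have key : ∀ d : ℝ, (d = 0 ∨ |d| = |a - b - k0|) → ∀ j : ℤ, (d = 0 → j ≠ 0) → 2 * R ≤ |d + j * N| := by
    intro d hd' j hj
    by_cases h0 : j = 0
    · rcases hd' with h | h
      · exact absurd h0 (hj h)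
      · subst h0; simpa [h] using hd
    · have h1 : (1:ℝ) ≤ |(j:ℝ)| := by exact_mod_cast Int.one_le_abs h0
      have h2 : (N:ℝ) ≤ |(j:ℝ) * N| := by
        rw [abs_mul, abs_of_pos hN0]; nlinarith
      have h3 : |d| ≤ |a - b - k0| := by
        rcases hd' with h | h
        · rw [h, abs_zero]; positivity
        · exact h.le
      have h4 : |(j:ℝ) * N| ≤ |d + j * N| + |d| := by
        have := abs_sub (d + j * N) d
        rwa [add_sub_cancel_left] at this
      linarith
  refine ⟨k0, N, by exact_mod_cast hN0, ?_⟩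
  have hne : a - b - k0 ≠ 0 := fun h => by rw [h, abs_zero] at hd; linarith
  rintro (_ | _) (_ | _) k k' hkk
  · have := key 0 (Or.inl rfl) (k - k') (fun _ h => hkk (by rw [sub_eq_zero.mp h]))
    convert this using 2
    simp; ring
  · have := key (-(a - b - k0)) (Or.inr (abs_neg _)) (k - k') (fun h => absurd (neg_eq_zero.mp h) hne)
    convert this using 2
    simp; ring
  · have := key (a - b - k0) (Or.inr rfl) (k - k') (fun h => absurd h hne)
    convert this using 2
    simp; ring
  · have := key 0 (Or.inl rfl) (k - k') (fun _ h => hkk (by rw [sub_eq_zero.mp h]))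
    convert this using 2
    simp; ring

theorem main_fp (f : Ann ≃ₜ Ann) (F : Plane ≃ₜ Plane)
    (hiso : IsotopicToId f) (hint : IntersectionProperty f) (hlift : IsLift f F)
    (zt₁ zt₂ : Plane) (p : ℤ) (q : ℕ) (hq : 0 < q)
    (hleft : sInf (ESet ⇑f ⇑F (prj zt₁) zt₁) < (((p : ℝ) / (q : ℝ) : ℝ) : EReal))
    (hright : (((p : ℝ) / (q : ℝ) : ℝ) : EReal) < sSup (ESet ⇑f ⇑F (prj zt₂) zt₂)) :
    ∃ x, GH F p q x = x := by
  by_contra hfp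
  push Not at hfp
  obtain ⟨hFT, hI⟩ := lift_iso f F hiso hlift
  have hGT := GH_Tr hFT p q
  obtain ⟨μ1, hμ1, ρ1, hρ1, hs1⟩ := site (GH F p q) hfp zt₁
  obtain ⟨μ2, hμ2, ρ2, hρ2, hs2⟩ := site (GH F p q) hfp zt₂
  obtain ⟨S⟩ := cells_exist (GH F p q) hGT hfp (min μ1 μ2) (lt_min hμ1 hμ2)
  obtain ⟨W1⟩ := hs1 _ (min_le_left _ _) _ S
  obtain ⟨W2⟩ := hs2 _ (min_le_right _ _) _ S
  obtain ⟨k0, N, hN, sep⟩ := sep_exists zt₁.1 zt₂.1 (max ρ1 ρ2) (lt_max_of_lt_left hρ1)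
  obtain ⟨T, hT⟩ := asm_bricks hGT S (fun e => bif e then zt₁ else zt₂) (fun e => bif e then ρ1 else ρ2)
    (max ρ1 ρ2) (by rintro (_ | _); exacts [le_max_right _ _, le_max_left _ _])
    (fun e => match e with
      | true => W1
      | false => W2) (fun e => bif e then 0 else k0) N (by
        intro e e' k k' h
        have := sep e e' k k' h
        cases e <;> cases e' <;> exact this)
  have hG : (GH F p q : Plane → Plane) = fun x => Tr (-p) (F^[q] x) := funext (GH_apply F p q)
  obtain ⟨n, hn, M, hM, hr⟩ := ret_G F.continuous hFT zt₁ p q hq 1 (Or.inl rfl)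
    (ret_left hlift zt₁ p q hq hleft) N hN _ isOpen_interior W1.hz
  obtain ⟨n', hn', M', hM', hr'⟩ := ret_G F.continuous hFT zt₂ p q hq (-1) (Or.inr rfl)
    (ret_right hlift zt₂ p q hq hright) N hN _ isOpen_interior W2.hz
  rw [← hG] at hr hr'
  refine bricks_contra f F hiso hint hlift p q hq hfp hN T zt₁ (Tr k0 zt₂) n n' M M'
    (by exact_mod_cast hM) (by exact_mod_cast hM') hn hn' ?_ ?_ ?_ ?_
  · rw [hT]
    simpa [Tr_zero] using interior_subset W1.hz
  · rw [hT]
    simpa [Tr_Tr, Tr_zero] using interior_subset W2.hz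
  · rw [hT]
    have := interior_subset hr
    simpa using this
  · rw [hT, iter_Tr hGT, Tr_Tr]
    have := interior_subset hr'
    simpa using this

theorem main_thm
    (f : Ann ≃ₜ Ann) (F : Plane ≃ₜ Plane)
    (hiso : IsotopicToId f) (hint : IntersectionProperty f) (hlift : IsLift f F)
    (zt₁ zt₂ : Plane) (p : ℤ) (q : ℕ) (hq : 0 < q)
    (hleft : sInf (ESet ⇑f ⇑F (prj zt₁) zt₁) < (((p : ℝ) / (q : ℝ) : ℝ) : EReal))
    (hright : (((p : ℝ) / (q : ℝ) : ℝ) : EReal) < sSup (ESet ⇑f ⇑F (prj zt₂) zt₂)) :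
    ∃ z : Ann, (⇑f)^[q] z = z ∧ ∀ zt : Plane, prj zt = z → (⇑F)^[q] zt = Tr p zt := by
  obtain ⟨x, hx⟩ := main_fp f F hiso hint hlift zt₁ zt₂ p q hq hleft hright
  obtain ⟨hFT, hI⟩ := lift_iso f F hiso hlift
  have h1 : F^[q] x = Tr p x := by
    rw [GH_apply] at hx
    have := congrArg (Tr p) hx
    rwa [Tr_Tr, add_neg_cancel, Tr_zero] at this
  refine ⟨prj x, ?_, ?_⟩
  · rw [← lift_iter hlift, h1, prj_eq_iff]
    exact ⟨p, rfl⟩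
  · intro zt hzt
    obtain ⟨k, rfl⟩ := (prj_eq_iff _ _).mp hzt
    rw [iter_Tr hFT, h1, Tr_Tr, Tr_Tr, add_comm]

/-- Proposition 4.2: if `z₁, z₂` are positively recurrent points with
`ρ⁻(F;z₁) < ρ⁺(F;z₂)`, then for every irreducible rational `p/q` strictly in between,
there exists a periodic point of period `q` with rotation number `p/q`. -/
theorem rational_in_rotation_gap_periodic_point
    (f : Ann ≃ₜ Ann) (F : Plane ≃ₜ Plane)
    (hiso : IsotopicToId f) (hint : IntersectionProperty f) (hlift : IsLift f F)
    (z₁ z₂ : Ann) (zt₁ zt₂ : Plane) (hzt₁ : prj zt₁ = z₁) (hzt₂ : prj zt₂ = z₂)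
    (hrec₁ : PosRec ⇑f z₁) (hrec₂ : PosRec ⇑f z₂)
    (hgap : sInf (ESet ⇑f ⇑F z₁ zt₁) < sSup (ESet ⇑f ⇑F z₂ zt₂))
    (p : ℤ) (q : ℕ) (hq : 0 < q) (hcop : Nat.Coprime p.natAbs q)
    (hleft : sInf (ESet ⇑f ⇑F z₁ zt₁) < (((p : ℝ) / (q : ℝ) : ℝ) : EReal))
    (hright : (((p : ℝ) / (q : ℝ) : ℝ) : EReal) < sSup (ESet ⇑f ⇑F z₂ zt₂)) :
    ∃ z : Ann, (⇑f)^[q] z = z ∧ ∀ zt : Plane, prj zt = z → (⇑F)^[q] zt = Tr p zt := by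
  subst hzt₁ hzt₂
  exact main_thm f F hiso hint hlift zt₁ zt₂ p q hq hleft hright
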